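/- arXiv:1711.10808 — 3 statements merged into one kernel-verified Lean document; each statement's English description precedes it below -/
import Mathlib

section
/- Let M₁, M₂ be positive integers and ℓ₁, ℓ₂ integers with 1 ≤ ℓ₁ ≤ M₁, 1 ≤ ℓ₂ ≤ M₂. For T ≥ 10 set y = T^{3/4} and H = T⁸, and let R(x) = R₀(x;y) + R*₁₂(x;y,H) + R*₂₁(x;y,H) and G(x) = G₁₂(x;H) + G₂₁(x;H). Then for every ε > 0, ∫_{T/2}^T |R(x)|³ |G(x)| dx ≪ T^{2−1/8+ε}, where the implied constant depends at most on M₁, M₂ and ε. -/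
open Real MeasureTheory Finset
open scoped Classical

noncomputable section

/-- The phase `h ℓ₂/M₂ + r ℓ₁/M₁ + 1/8` attached to a factorization pair `p = (h, r)`. -/
def phase (M₁ M₂ ℓ₁ ℓ₂ : ℕ) (p : ℕ × ℕ) : ℝ :=
  ((p.1 : ℝ) * ℓ₂) / M₂ + ((p.2 : ℝ) * ℓ₁) / M₁ + 1/8

/-- `τ(n,x) = Σ_{hr=n} cos(4π√(nx) − 2π(hℓ₂/M₂ + rℓ₁/M₁ + 1/8))`. -/
def tau (M₁ M₂ ℓ₁ ℓ₂ n : ℕ) (x : ℝ) : ℝ :=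
  ∑ p ∈ Nat.divisorsAntidiagonal n,
    Real.cos (4 * π * Real.sqrt (n * x) - 2 * π * phase M₁ M₂ ℓ₁ ℓ₂ p)

/-- `R₀(x;y) = (x^{1/4}/(√2 π)) Σ_{n ≤ y} τ(n,x) n^{−3/4}`. -/
def R0 (M₁ M₂ ℓ₁ ℓ₂ : ℕ) (y x : ℝ) : ℝ :=
  x ^ ((1:ℝ)/4) / (Real.sqrt 2 * π) *
    ∑ n ∈ Finset.Icc 1 ⌊y⌋₊, tau M₁ M₂ ℓ₁ ℓ₂ n x * (n : ℝ) ^ (-(3:ℝ)/4)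

/-- `J = ⌊(log T − 2 log log T)/log 2⌋`. -/
def Jof (T : ℝ) : ℤ := ⌊(Real.log T - 2 * Real.log (Real.log T)) / Real.log 2⌋

/-- The `Σ′` weight: a point strictly inside `(α,β)` counts with weight `1`, and each
endpoint counts with weight `1/2`. -/
def wprime (α β t : ℝ) : ℝ :=
  (if α < t ∧ t < β then 1 else 0) + (if t = α then 1/2 else 0) + (if t = β then 1/2 else 0)

/-- `τ₁₂(n,x;H)`: the `Σ′`-sum over factorizations `n = hr` with `1 ≤ h ≤ H` and
`hM₁/M₂ ≤ r ≤ 2^{J+1} h M₁/M₂` of `cos(4π√(nx) − 2π(hℓ₂/M₂ + rℓ₁/M₁ + 1/8))`. -/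
def tau12H (M₁ M₂ ℓ₁ ℓ₂ : ℕ) (T H : ℝ) (n : ℕ) (x : ℝ) : ℝ :=
  ∑ p ∈ Nat.divisorsAntidiagonal n,
    if (p.1 : ℝ) ≤ H then
      wprime ((p.1 : ℝ) * M₁ / M₂) ((2:ℝ) ^ (Jof T + 1) * p.1 * M₁ / M₂) (p.2 : ℝ) *
        Real.cos (4 * π * Real.sqrt (n * x) - 2 * π * phase M₁ M₂ ℓ₁ ℓ₂ p)
    else 0

/-- `R*₁₂(x;y,H) = (x^{1/4}/(√2π)) Σ_{y < n ≤ 2^{J+1}H²M₁/M₂} τ₁₂(n,x;H) n^{−3/4}`. -/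
def Rstar12 (M₁ M₂ ℓ₁ ℓ₂ : ℕ) (T y H x : ℝ) : ℝ :=
  x ^ ((1:ℝ)/4) / (Real.sqrt 2 * π) *
    ∑ n ∈ (Finset.Icc 1 ⌊(2:ℝ) ^ (Jof T + 1) * H ^ 2 * M₁ / M₂⌋₊).filter
        (fun n : ℕ => y < (n : ℝ)),
      tau12H M₁ M₂ ℓ₁ ℓ₂ T H n x * (n : ℝ) ^ (-(3:ℝ)/4)

/-- `R(x) = R₀(x;y) + R*₁₂(x;y,H) + R*₂₁(x;y,H)` with `y = T^{3/4}` and `H = T⁸`. -/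
def Rfull (M₁ M₂ ℓ₁ ℓ₂ : ℕ) (T x : ℝ) : ℝ :=
  R0 M₁ M₂ ℓ₁ ℓ₂ (T ^ ((3:ℝ)/4)) x
    + Rstar12 M₁ M₂ ℓ₁ ℓ₂ T (T ^ ((3:ℝ)/4)) (T ^ 8) x
    + Rstar12 M₂ M₁ ℓ₂ ℓ₁ T (T ^ ((3:ℝ)/4)) (T ^ 8) x

/-- Distance to the nearest integer. -/
def nint (t : ℝ) : ℝ := |t - round t|

/-- `min(1, 1/(H‖t‖))`, with the convention that the value is `1` when `‖t‖ = 0`. -/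
def minOne (H t : ℝ) : ℝ := if nint t = 0 then 1 else min 1 (1 / (H * nint t))

/-- `G₁₂(x;H) = Σ_{n ≤ √(M₁M₂x), n ≡ ℓ₁ (mod M₁)} min(1, 1/(H‖M₁x/n − ℓ₂/M₂‖))`. -/
def G12 (M₁ M₂ ℓ₁ ℓ₂ : ℕ) (H x : ℝ) : ℝ :=
  ∑ n ∈ (Finset.Icc 1 ⌊Real.sqrt ((M₁ * M₂ : ℕ) * x)⌋₊).filter
      (fun n => n % M₁ = ℓ₁ % M₁),
    minOne H ((M₁ : ℝ) * x / n - (ℓ₂ : ℝ) / M₂)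

/-!
`H = T ^ 8` is so large that a pointwise bound for `R` and a mean value bound for `G` suffice.

For fixed `h`, the sum over `r` in `R*₁₂` has phase `2 √(h r x) - (θ r + φ)`. Van der Corput's
second derivative test, deduced from the Kusmin–Landau inequality, gives `O(T √h)` for its
unweighted partial sums. Partial summation against `(h r) ^ (-3/4)`, where `r ≥ h M₁ / M₂`, turns
this into `O(T / h)`, and the harmonic sum over `h ≤ H` yields `R ≪ T ^ (5/4) log T`. The sum `R₀`
is short enough to be bounded trivially.

A summand of `G` is a `1`-periodic function of a linear function of `x`, with mean `O(log H / H)`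
over a period, so `∫ G ≪ T ^ (3/2) log T / T ^ 8`. Hence `∫ |R|³ |G|` is at most a constant times
`T ^ (15/4 + 3/2 - 8) (log T) ^ 4 = T ^ (-11/4) (log T) ^ 4`.
-/

section ExponentialSums

open scoped FourierTransform

/-! ### Partial summation -/

lemma norm_sum_range_smul_le {R E : Type*} [SeminormedRing R] [SeminormedAddCommGroup E]
    [Module R E] [IsBoundedSMul R E] {f : ℕ → R} {g : ℕ → E} {n : ℕ} {K : ℝ}
    (hK : ∀ m ≤ n, ‖∑ i ∈ range m, g i‖ ≤ K) :
    ‖∑ i ∈ range n, f i • g i‖ ≤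
      (‖f (n - 1)‖ + ∑ i ∈ range (n - 1), ‖f (i + 1) - f i‖) * K := by
  rw [sum_range_by_parts, add_mul, sum_mul]
  refine (norm_sub_le _ _).trans (add_le_add ?_ ((norm_sum_le _ _).trans (sum_le_sum ?_)))
  · exact (norm_smul_le _ _).trans (by gcongr; exact hK n le_rfl)
  · intro i hi
    have hin : i + 1 ≤ n := by have := mem_range.1 hi; omega
    exact (norm_smul_le _ _).trans (by gcongr; exact hK _ hin)

lemma sum_range_abs_sub_of_antitoneOn {g : ℕ → ℝ} {n : ℕ} (hg : AntitoneOn g (Set.Iic n)) :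
    ∑ i ∈ range n, |g (i + 1) - g i| = g 0 - g n := by
  rw [← sum_range_sub' g n]
  refine sum_congr rfl fun i hi => ?_
  have hin := mem_range.1 hi
  rw [abs_sub_comm, abs_of_nonneg]
  exact sub_nonneg.2 (hg (Set.mem_Iic.2 hin.le) (Set.mem_Iic.2 hin) i.le_succ)

/-- Abel's inequality. -/
lemma norm_sum_Ico_smul_le_of_antitoneOn {E : Type*} [SeminormedAddCommGroup E]
    [NormedSpace ℝ E] {g : ℕ → ℝ} {z : ℕ → E} {A B : ℕ} {K : ℝ}
    (hg : AntitoneOn g (Set.Ico A B)) (hg0 : ∀ r ∈ Set.Ico A B, 0 ≤ g r)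
    (hAB : A < B) (hK : ∀ n ≤ B, ‖∑ r ∈ Ico A n, z r‖ ≤ K) :
    ‖∑ r ∈ Ico A B, g r • z r‖ ≤ g A * K := by
  have hanti : AntitoneOn (fun i => g (A + i)) (Set.Iic (B - A - 1)) := fun i hi j hj hij => by
    simp only [Set.mem_Iic] at hi hj
    exact hg ⟨by omega, by omega⟩ ⟨by omega, by omega⟩ (by omega)
  have hpartial : ∀ m ≤ B - A, ‖∑ i ∈ range m, z (A + i)‖ ≤ K := fun m hm => by
    simpa only [sum_Ico_eq_sum_range, Nat.add_sub_cancel_left] using hK (A + m) (by omega)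
  have hlast : 0 ≤ g (A + (B - A - 1)) := hg0 _ ⟨by omega, by omega⟩
  have := norm_sum_range_smul_le (f := fun i => g (A + i)) hpartial
  simp only [Real.norm_eq_abs, abs_of_nonneg hlast] at this
  rw [sum_range_abs_sub_of_antitoneOn hanti] at this
  simpa only [sum_Ico_eq_sum_range, add_zero, add_sub_cancel] using this

/-! ### The Kusmin–Landau inequality -/

lemma fourierChar_sub_one_eq (t : ℝ) (k : ℤ) :
    (𝐞 t : ℂ) - 1 = -((2 * Real.cos (π * (t - k - 1 / 2)) : ℝ) *
      Complex.exp ((π * (t - k - 1 / 2) : ℝ) * Complex.I)) := by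
  set v : ℝ := π * (t - k - 1 / 2) with hv
  have hexp : (𝐞 t : ℂ) = -(Complex.exp (v * Complex.I) * Complex.exp (v * Complex.I)) := by
    have hsplit : ((2 * π * t : ℝ) : ℂ) * Complex.I =
        v * Complex.I + v * Complex.I + π * Complex.I + k * (2 * π * Complex.I) := by
      rw [hv]; push_cast; ring
    rw [Real.fourierChar_apply, hsplit, Complex.exp_add, Complex.exp_int_mul_two_pi_mul_I,
      Complex.exp_add, Complex.exp_pi_mul_I, Complex.exp_add]
    ring
  have hcos : ((2 * Real.cos v : ℝ) : ℂ) =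
      Complex.exp (v * Complex.I) + Complex.exp (-(v * Complex.I)) := by
    rw [Complex.ofReal_mul, Complex.ofReal_ofNat, Complex.ofReal_cos, Complex.two_cos, neg_mul]
  rw [hcos, hexp, add_mul, ← Complex.exp_add (-_), neg_add_cancel, Complex.exp_zero]
  ring

lemma le_norm_fourierChar_sub_one {t η : ℝ} {k : ℤ} (ht : t ∈ Set.Icc (k + η) (k + 1 - η)) :
    4 * η ≤ ‖(𝐞 t : ℂ) - 1‖ := by
  set u : ℝ := t - k - 1 / 2 with hu
  have hle : |u| ≤ 1 / 2 - η := abs_le.2 ⟨by linarith [ht.1], by linarith [ht.2]⟩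
  rw [fourierChar_sub_one_eq t k, norm_neg, norm_mul, Complex.norm_exp_ofReal_mul_I, mul_one,
    Complex.norm_real, Real.norm_eq_abs, abs_mul, abs_two]
  rcases le_or_gt η 0 with hη | hη
  · linarith [abs_nonneg (Real.cos (π * u))]
  have hcos : 1 - 2 / π * (π * |u|) ≤ Real.cos (π * |u|) :=
    Real.one_sub_mul_le_cos (by positivity) (by nlinarith [Real.pi_pos])
  rw [← mul_assoc, div_mul_cancel₀ _ Real.pi_ne_zero, ← Real.cos_abs (π * |u|), abs_mul, abs_abs,
    ← abs_mul, Real.cos_abs] at hcos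
  linarith [le_abs_self (Real.cos (π * u))]

lemma inv_fourierChar_sub_one {t : ℝ} {k : ℤ} (ht : t ∈ Set.Ioo (k : ℝ) (k + 1)) :
    ((𝐞 t : ℂ) - 1)⁻¹ = -1 / 2 + (Real.tan (π * (t - k - 1 / 2)) / 2 : ℝ) * Complex.I := by
  set v : ℝ := π * (t - k - 1 / 2) with hv
  have hcos : Complex.cos v ≠ 0 := by
    rw [← Complex.ofReal_cos]
    refine Complex.ofReal_ne_zero.2 (Real.cos_pos_of_mem_Ioo ⟨?_, ?_⟩).ne' <;>
      nlinarith [Real.pi_pos, ht.1, ht.2]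
  refine inv_eq_of_mul_eq_one_left ?_
  rw [fourierChar_sub_one_eq t k, ← hv, Complex.exp_mul_I, Real.tan_eq_sin_div_cos]
  push_cast
  field_simp
  linear_combination Complex.cos_sq_add_sin_sq v - Complex.sin v ^ 2 * Complex.I_sq

lemma norm_inv_fourierChar_sub_one_le {t η : ℝ} {k : ℤ} (hη : 0 < η)
    (ht : t ∈ Set.Icc (k + η) (k + 1 - η)) : ‖((𝐞 t : ℂ) - 1)⁻¹‖ ≤ 1 / (4 * η) := by
  rw [norm_inv, ← one_div]
  exact one_div_le_one_div_of_le (by positivity) (le_norm_fourierChar_sub_one ht)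

/-- On `(k, k + 1)` the function `t ↦ (𝐞 t - 1)⁻¹` moves monotonically along the line
`Re = -1/2`, so its variation is the distance between its extreme values. -/
lemma sum_norm_sub_inv_fourierChar_sub_one_le {d : ℕ → ℝ} {n : ℕ} {k : ℤ} {η : ℝ} (hη : 0 < η)
    (hanti : AntitoneOn d (Set.Iic n)) (hmem : ∀ r ≤ n, d r ∈ Set.Icc (k + η) (k + 1 - η)) :
    ∑ r ∈ range n, ‖((𝐞 (d (r + 1)) : ℂ) - 1)⁻¹ - ((𝐞 (d r) : ℂ) - 1)⁻¹‖ ≤ 1 / (2 * η) := by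
  set τ : ℕ → ℝ := fun r => Real.tan (π * (d r - k - 1 / 2)) / 2
  have hIoo : ∀ r ≤ n, d r ∈ Set.Ioo (k : ℝ) (k + 1) := fun r hr =>
    ⟨by linarith [(hmem r hr).1], by linarith [(hmem r hr).2]⟩
  have hdiff : ∀ i ≤ n, ∀ j ≤ n,
      ‖((𝐞 (d i) : ℂ) - 1)⁻¹ - ((𝐞 (d j) : ℂ) - 1)⁻¹‖ = |τ i - τ j| := fun i hi j hj => by
    rw [inv_fourierChar_sub_one (hIoo i hi), inv_fourierChar_sub_one (hIoo j hj),
      add_sub_add_left_eq_sub, ← sub_mul, norm_mul, Complex.norm_I, mul_one,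
      ← Complex.ofReal_sub, Complex.norm_real, Real.norm_eq_abs]
  have hτanti : AntitoneOn τ (Set.Iic n) := fun i hi j hj hij => by
    have hdij : d j ≤ d i := hanti hi hj hij
    refine div_le_div_of_nonneg_right (Real.strictMonoOn_tan.monotoneOn ?_ ?_ ?_) zero_le_two
    · constructor <;> nlinarith [Real.pi_pos, (hIoo j hj).1, (hIoo j hj).2]
    · constructor <;> nlinarith [Real.pi_pos, (hIoo i hi).1, (hIoo i hi).2]
    · gcongr
  calc _ = ∑ r ∈ range n, |τ (r + 1) - τ r| := sum_congr rfl fun r hr =>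
        hdiff _ (mem_range.1 hr) _ (mem_range.1 hr).le
    _ = τ 0 - τ n := sum_range_abs_sub_of_antitoneOn hτanti
    _ ≤ ‖((𝐞 (d 0) : ℂ) - 1)⁻¹ - ((𝐞 (d n) : ℂ) - 1)⁻¹‖ := by
        rw [hdiff 0 n.zero_le n le_rfl]
        exact le_abs_self _
    _ ≤ 1 / (4 * η) + 1 / (4 * η) := (norm_sub_le _ _).trans <| add_le_add
        (norm_inv_fourierChar_sub_one_le hη (hmem 0 n.zero_le))
        (norm_inv_fourierChar_sub_one_le hη (hmem n le_rfl))
    _ = 1 / (2 * η) := by ring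

/-- The Kusmin–Landau inequality. With `b r = 𝐞 (F r)` one has
`b r = (𝐞 (F (r + 1) - F r) - 1)⁻¹ * (b (r + 1) - b r)`, and partial summation applies. -/
lemma norm_sum_range_fourierChar_le {F : ℕ → ℝ} {n : ℕ} {k : ℤ} {η : ℝ} (hη : 0 < η)
    (hanti : AntitoneOn (fun r => F (r + 1) - F r) (Set.Iio n))
    (hmem : ∀ r < n, F (r + 1) - F r ∈ Set.Icc (k + η) (k + 1 - η)) :
    ‖∑ r ∈ range n, (𝐞 (F r) : ℂ)‖ ≤ 3 / (2 * η) := by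
  obtain _ | n := n
  · rw [range_zero, sum_empty, norm_zero]
    positivity
  set d : ℕ → ℝ := fun r => F (r + 1) - F r with hd
  set w : ℕ → ℂ := fun r => ((𝐞 (d r) : ℂ) - 1)⁻¹
  have hterm : ∀ r ∈ range (n + 1), (𝐞 (F r) : ℂ) = w r • ((𝐞 (F (r + 1)) : ℂ) - 𝐞 (F r)) := by
    intro r hr
    have hpos : 0 < ‖(𝐞 (d r) : ℂ) - 1‖ :=
      (by positivity : 0 < 4 * η).trans_le (le_norm_fourierChar_sub_one (hmem r (mem_range.1 hr)))
    have hne : (𝐞 (d r) : ℂ) - 1 ≠ 0 := norm_pos_iff.1 hpos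
    have hF : F (r + 1) = d r + F r := by rw [hd]; ring
    rw [hF, AddChar.map_add_eq_mul, Circle.coe_mul, ← sub_one_mul, smul_eq_mul,
      inv_mul_cancel_left₀ hne]
  have htel : ∀ m ≤ n + 1, ‖∑ r ∈ range m, ((𝐞 (F (r + 1)) : ℂ) - 𝐞 (F r))‖ ≤ 2 := fun m _ => by
    rw [sum_range_sub (fun r => (𝐞 (F r) : ℂ))]
    refine (norm_sub_le _ _).trans ?_
    rw [Circle.norm_coe, Circle.norm_coe, one_add_one_eq_two]
  calc ‖∑ r ∈ range (n + 1), (𝐞 (F r) : ℂ)‖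
      = ‖∑ r ∈ range (n + 1), w r • ((𝐞 (F (r + 1)) : ℂ) - 𝐞 (F r))‖ := by
        rw [sum_congr rfl hterm]
    _ ≤ (‖w n‖ + ∑ r ∈ range n, ‖w (r + 1) - w r‖) * 2 := norm_sum_range_smul_le htel
    _ ≤ (1 / (4 * η) + 1 / (2 * η)) * 2 := by
        gcongr
        · exact norm_inv_fourierChar_sub_one_le hη (hmem n n.lt_succ_self)
        · exact sum_norm_sub_inv_fourierChar_sub_one_le hη
            (hanti.mono fun r hr => Nat.lt_succ_of_le hr) fun r hr => hmem r (Nat.lt_succ_of_le hr)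
    _ = 3 / (2 * η) := by field_simp; norm_num

/-! ### The second derivative test -/

lemma exists_eq_Ico_of_ordConnected {S : Finset ℕ} (hS : (S : Set ℕ).OrdConnected) :
    ∃ A B, S = Ico A B := by
  rcases S.eq_empty_or_nonempty with rfl | hne
  · exact ⟨0, 0, (Ico_self 0).symm⟩
  refine ⟨S.min' hne, S.max' hne + 1, ext fun r => ⟨fun hr => ?_, fun hr => ?_⟩⟩
  · exact mem_Ico.2 ⟨S.min'_le r hr, Nat.lt_succ_of_le (S.le_max' r hr)⟩
  · obtain ⟨hmin, hmax⟩ := mem_Ico.1 hr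
    exact hS.out (S.min'_mem hne) (S.max'_mem hne) ⟨hmin, Nat.le_of_lt_succ hmax⟩

lemma ordConnected_inter_preimage_of_antitoneOn {α β : Type*} [Preorder α] [Preorder β]
    {s : Set α} {g : α → β} {I : Set β} (hs : s.OrdConnected) (hg : AntitoneOn g s)
    (hI : I.OrdConnected) : (s ∩ g ⁻¹' I).OrdConnected :=
  ⟨fun _ hi _ hj _ hr =>
    have hrs := hs.out hi.1 hj.1 hr
    ⟨hrs, hI.out hj.2 hi.2 ⟨hg hrs hj.1 hr.2, hg hi.1 hrs hr.1⟩⟩⟩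

lemma norm_sum_fourierChar_le_of_ordConnected {F : ℕ → ℝ} {S : Finset ℕ} {k : ℤ} {η : ℝ}
    (hη : 0 < η) (hS : (S : Set ℕ).OrdConnected)
    (hanti : AntitoneOn (fun r => F (r + 1) - F r) S)
    (hmem : ∀ r ∈ S, F (r + 1) - F r ∈ Set.Icc (k + η) (k + 1 - η)) :
    ‖∑ r ∈ S, (𝐞 (F r) : ℂ)‖ ≤ 3 / (2 * η) := by
  obtain ⟨A, B, rfl⟩ := exists_eq_Ico_of_ordConnected hS
  have hshift : ∀ i < B - A, A + i ∈ Ico A B := fun i hi => mem_Ico.2 ⟨by omega, by omega⟩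
  rw [sum_Ico_eq_sum_range]
  exact norm_sum_range_fourierChar_le (F := fun i => F (A + i)) hη
    (fun i hi j hj hij => hanti (hshift i hi) (hshift j hj) (Nat.add_le_add_left hij A))
    fun i hi => hmem _ (hshift i hi)

lemma card_le_div_add_one {d : ℕ → ℝ} {S : Finset ℕ} {lam a L : ℝ} (hlam : 0 < lam) (hL : 0 ≤ L)
    (hanti : AntitoneOn (fun r => d r + lam * r) S)
    (hmem : ∀ r ∈ S, d r ∈ Set.Icc a (a + L)) : (#S : ℝ) ≤ L / lam + 1 := by
  rcases S.eq_empty_or_nonempty with rfl | hne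
  · rw [card_empty, Nat.cast_zero]
    positivity
  set m := S.min' hne
  set M := S.max' hne
  have hm : m ∈ S := S.min'_mem hne
  have hM : M ∈ S := S.max'_mem hne
  have hmM : m ≤ M := S.min'_le M hM
  have hcard : #S ≤ M + 1 - m := by
    rw [← Nat.card_Icc]
    exact card_le_card fun r hr => mem_Icc.2 ⟨S.min'_le r hr, S.le_max' r hr⟩
  have hcard' : (#S : ℝ) ≤ M - m + 1 := by
    have : #S + m ≤ M + 1 := by omega
    have : (#S : ℝ) + m ≤ M + 1 := by exact_mod_cast this
    linarith
  have hgap : d M + lam * M ≤ d m + lam * m := hanti hm hM hmM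
  have : (M : ℝ) - m ≤ L / lam := by
    rw [le_div_iff₀ hlam]
    linarith [(hmem m hm).2, (hmem M hM).1]
  linarith

lemma antitoneOn_of_add_mul {d : ℕ → ℝ} {s : Set ℕ} {lam : ℝ} (hlam : 0 ≤ lam)
    (hanti : AntitoneOn (fun r => d r + lam * r) s) : AntitoneOn d s := fun i hi j hj hij => by
  have hgap : d j + lam * j ≤ d i + lam * i := hanti hi hj hij
  have : lam * i ≤ lam * j := by gcongr
  linarith

/-- Away from the two ends of `[k, k + 1]` the Kusmin–Landau inequality applies with distance
`√lam`; at most `1 / √lam + 1` terms lie near each end. -/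
lemma norm_sum_fourierChar_le_of_mem_Icc {F : ℕ → ℝ} {S : Finset ℕ} {lam : ℝ} {k : ℤ}
    (hlam : 0 < lam) (hS : (S : Set ℕ).OrdConnected)
    (hanti : AntitoneOn (fun r => F (r + 1) - F r + lam * r) S)
    (hmem : ∀ r ∈ S, F (r + 1) - F r ∈ Set.Icc (k : ℝ) (k + 1)) :
    ‖∑ r ∈ S, (𝐞 (F r) : ℂ)‖ ≤ 4 / √lam + 2 := by
  set d : ℕ → ℝ := fun r => F (r + 1) - F r
  set η := √lam
  have hη : 0 < η := Real.sqrt_pos.2 hlam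
  have hηlam : η / lam = 1 / η := by
    rw [div_eq_div_iff hlam.ne' hη.ne', one_mul, Real.mul_self_sqrt hlam.le]
  have hd : AntitoneOn d S := antitoneOn_of_add_mul hlam.le hanti
  have hcount : ∀ (P : Finset ℕ) (a : ℝ), P ⊆ S → (∀ r ∈ P, d r ∈ Set.Icc a (a + η)) →
      ‖∑ r ∈ P, (𝐞 (F r) : ℂ)‖ ≤ 1 / η + 1 := fun P a hPS hP => by
    refine (norm_sum_le _ _).trans ?_
    simp only [Circle.norm_coe, sum_const, nsmul_eq_mul, mul_one]
    rw [← hηlam]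
    exact card_le_div_add_one hlam hη.le (hanti.mono (coe_subset.2 hPS)) hP
  have hlow : ‖∑ r ∈ S with d r < k + η, (𝐞 (F r) : ℂ)‖ ≤ 1 / η + 1 :=
    hcount _ k (filter_subset _ _) fun r hr =>
      ⟨(hmem r (mem_filter.1 hr).1).1, (mem_filter.1 hr).2.le⟩
  have hhigh : ‖∑ r ∈ S with ¬ d r < k + η ∧ k + 1 - η < d r, (𝐞 (F r) : ℂ)‖ ≤ 1 / η + 1 :=
    hcount _ (k + 1 - η) (filter_subset _ _) fun r hr =>
      ⟨(mem_filter.1 hr).2.2.le, by linarith [(hmem r (mem_filter.1 hr).1).2]⟩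
  have hmid : ‖∑ r ∈ S with ¬ d r < k + η ∧ ¬ k + 1 - η < d r, (𝐞 (F r) : ℂ)‖ ≤
      3 / (2 * η) := by
    have hfilter : ∀ r, r ∈ S.filter (fun r => ¬ d r < k + η ∧ ¬ k + 1 - η < d r) ↔
        r ∈ (S : Set ℕ) ∩ d ⁻¹' Set.Icc (k + η) (k + 1 - η) := fun r => by
      simp only [mem_filter, not_lt, Set.mem_inter_iff, mem_coe, Set.mem_preimage, Set.mem_Icc]
    refine norm_sum_fourierChar_le_of_ordConnected hη ?_
      (hd.mono (coe_subset.2 (filter_subset _ _))) fun r hr => ((hfilter r).1 hr).2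
    rw [Set.ext hfilter]
    exact ordConnected_inter_preimage_of_antitoneOn hS hd Set.ordConnected_Icc
  rw [← sum_filter_add_sum_filter_not S (fun r => d r < k + η),
    ← sum_filter_add_sum_filter_not (S.filter fun r => ¬ d r < k + η)
      (fun r => k + 1 - η < d r), filter_filter, filter_filter]
  calc _ ≤ (1 / η + 1) + ((1 / η + 1) + 3 / (2 * η)) :=
        norm_add_le_of_le hlow (norm_add_le_of_le hhigh hmid)
    _ = 7 / 2 / η + 2 := by field_simp; ring
    _ ≤ 4 / η + 2 := by gcongr; norm_num

/-- Van der Corput's second derivative test: a lower bound for the second difference of the phase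
splits the sum into one piece for each integer near the range of its first difference. -/
lemma norm_sum_fourierChar_le_of_second_difference {F : ℕ → ℝ} {S : Finset ℕ} {lam a b : ℝ}
    (hlam : 0 < lam) (hab : a ≤ b) (hS : (S : Set ℕ).OrdConnected)
    (hanti : AntitoneOn (fun r => F (r + 1) - F r + lam * r) S)
    (hmem : ∀ r ∈ S, F (r + 1) - F r ∈ Set.Icc a b) :
    ‖∑ r ∈ S, (𝐞 (F r) : ℂ)‖ ≤ (b - a + 2) * (4 / √lam + 2) := by
  set d : ℕ → ℝ := fun r => F (r + 1) - F r
  have hmaps : ∀ r ∈ S, ⌊d r⌋ ∈ Icc ⌊a⌋ ⌊b⌋ := fun r hr =>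
    mem_Icc.2 ⟨Int.floor_le_floor (hmem r hr).1, Int.floor_le_floor (hmem r hr).2⟩
  have hfloor : AntitoneOn (fun r => ⌊d r⌋) S := fun i hi j hj hij =>
    Int.floor_le_floor (antitoneOn_of_add_mul hlam.le hanti hi hj hij)
  have hpiece : ∀ k ∈ Icc ⌊a⌋ ⌊b⌋, ‖∑ r ∈ S with ⌊d r⌋ = k, (𝐞 (F r) : ℂ)‖ ≤ 4 / √lam + 2 := by
    intro k _
    refine norm_sum_fourierChar_le_of_mem_Icc (k := k) hlam ?_
      (hanti.mono (coe_subset.2 (filter_subset _ _))) fun r hr => ?_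
    · rw [coe_filter]
      exact ordConnected_inter_preimage_of_antitoneOn hS hfloor Set.ordConnected_singleton
    · rw [← (mem_filter.1 hr).2]
      exact ⟨Int.floor_le _, (Int.lt_floor_add_one _).le⟩
  have hcard : (#(Icc ⌊a⌋ ⌊b⌋) : ℝ) ≤ b - a + 2 := by
    have hfab : ⌊a⌋ ≤ ⌊b⌋ := Int.floor_le_floor hab
    have : ((#(Icc ⌊a⌋ ⌊b⌋) : ℤ) : ℝ) = ⌊b⌋ + 1 - ⌊a⌋ := by
      rw [Int.card_Icc, Int.toNat_of_nonneg (by omega)]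
      push_cast
      ring
    rw [Int.cast_natCast] at this
    linarith [Int.floor_le b, Int.lt_floor_add_one a]
  rw [← sum_fiberwise_of_maps_to hmaps]
  refine (norm_sum_le_of_le _ hpiece).trans ?_
  rw [sum_const, nsmul_eq_mul]
  gcongr

/-! ### Exponential sums with a square root phase -/

lemma sqrt_second_difference_ge {r : ℝ} (hr : 0 ≤ r) :
    1 / (4 * √(r + 2) ^ 3) ≤ (√(r + 1) - √r) - (√(r + 2) - √(r + 1)) := by
  set a := √r
  set b := √(r + 1)
  set c := √(r + 2)
  have ha : a ^ 2 = r := Real.sq_sqrt hr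
  have hb : b ^ 2 = r + 1 := Real.sq_sqrt (by linarith)
  have hc : c ^ 2 = r + 2 := Real.sq_sqrt (by linarith)
  have hc0 : 0 < c := Real.sqrt_pos.2 (by linarith)
  have hac : a ≤ c := Real.sqrt_le_sqrt (by linarith)
  have hbc : b ≤ c := Real.sqrt_le_sqrt (by linarith)
  have heq : (b - a) - (c - b) = 2 / ((b + a) * (c + b) * (c + a)) := by
    have hba : b - a = 1 / (b + a) := by
      rw [eq_div_iff (by positivity)]; linear_combination hb - ha
    have hcb : c - b = 1 / (c + b) := by
      rw [eq_div_iff (by positivity)]; linear_combination hc - hb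
    have hca : (c - a) * (c + a) = 2 := by linear_combination hc - ha
    rw [hba, hcb, div_sub_div _ _ (by positivity) (by positivity),
      div_eq_div_iff (by positivity) (by positivity)]
    linear_combination (b + a) * (c + b) * hca
  have hle : (b + a) * (c + b) * (c + a) ≤ (2 * c) * (2 * c) * (2 * c) := by
    gcongr <;> linarith
  calc 1 / (4 * c ^ 3) = 2 / ((2 * c) * (2 * c) * (2 * c)) := by field_simp; norm_num
    _ ≤ 2 / ((b + a) * (c + b) * (c + a)) := by gcongr
    _ = _ := heq.symm

lemma two_mul_sqrt_add_one_sub_sqrt_le {r : ℝ} (hr : 0 < r) : 2 * (√(r + 1) - √r) ≤ 1 / √r := by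
  rw [le_div_iff₀ (Real.sqrt_pos.2 hr)]
  nlinarith [sq_nonneg (√(r + 1) - √r), Real.sq_sqrt hr.le,
    Real.sq_sqrt (by linarith : 0 ≤ r + 1)]

lemma norm_sum_fourierChar_sqrt_le {S : Finset ℕ} {s A R : ℝ} (θ φ : ℝ) (hs : 0 < s) (hA : 0 < A)
    (hR : 0 < R) (hS : (S : Set ℕ).OrdConnected) (hSA : ∀ r ∈ S, A ≤ r)
    (hSR : ∀ r ∈ S, (r : ℝ) + 1 ≤ R) :
    ‖∑ r ∈ S, (𝐞 (2 * s * √r - (θ * r + φ)) : ℂ)‖ ≤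
      (s / √A + 2) * (4 / √(s / (2 * √R ^ 3)) + 2) := by
  have hdiff : ∀ r : ℕ, 2 * s * √((r + 1 : ℕ) : ℝ) - (θ * (r + 1 : ℕ) + φ) -
      (2 * s * √r - (θ * r + φ)) = s * (2 * (√((r : ℝ) + 1) - √r)) - θ := fun r => by
    push_cast; ring
  have hanti : AntitoneOn (fun r : ℕ => 2 * s * √((r + 1 : ℕ) : ℝ) - (θ * (r + 1 : ℕ) + φ) -
      (2 * s * √r - (θ * r + φ)) + s / (2 * √R ^ 3) * r) S := by
    refine antitoneOn_of_add_one_le hS fun r _ _ hr => ?_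
    have hrR : (r : ℝ) + 2 ≤ R := by have := hSR _ hr; push_cast at this; linarith
    have hgap : s / (2 * √R ^ 3) ≤
        2 * s * ((√((r : ℝ) + 1) - √r) - (√((r : ℝ) + 2) - √((r : ℝ) + 1))) := calc
      s / (2 * √R ^ 3) = 2 * s * (1 / (4 * √R ^ 3)) := by field_simp; norm_num
      _ ≤ 2 * s * (1 / (4 * √((r : ℝ) + 2) ^ 3)) := by gcongr
      _ ≤ _ := by gcongr; exact sqrt_second_difference_ge r.cast_nonneg
    simp only [hdiff]
    push_cast
    rw [add_assoc (r : ℝ) 1 1, one_add_one_eq_two]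
    linarith
  have hmem : ∀ r ∈ S, 2 * s * √((r + 1 : ℕ) : ℝ) - (θ * (r + 1 : ℕ) + φ) -
      (2 * s * √r - (θ * r + φ)) ∈ Set.Icc (-θ) (s / √A - θ) := fun r hr => by
    have hAr : A ≤ r := hSA r hr
    rw [hdiff]
    refine ⟨?_, sub_le_sub_right ?_ _⟩
    · have : √(r : ℝ) ≤ √((r : ℝ) + 1) := Real.sqrt_le_sqrt (by linarith)
      nlinarith
    · calc s * (2 * (√((r : ℝ) + 1) - √r)) ≤ s * (1 / √r) := by
            gcongr
            exact two_mul_sqrt_add_one_sub_sqrt_le (hA.trans_le hAr)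
        _ ≤ s * (1 / √A) := by gcongr
        _ = s / √A := mul_one_div s _
  have hab : -θ ≤ s / √A - θ := by linarith [div_nonneg hs.le (Real.sqrt_nonneg A)]
  simpa only [sub_neg_eq_add, sub_add_cancel] using norm_sum_fourierChar_le_of_second_difference
    (F := fun r : ℕ => 2 * s * √(r : ℝ) - (θ * r + φ)) (by positivity) hab hS hanti hmem

/-- The summand of the factorization `n = h * r`, `p = (h, r)`, in `τ(n, x) n ^ (-3/4)` and,
up to the `Σ′` weight, in `τ₁₂(n, x; H) n ^ (-3/4)`. -/
def voronoiTerm (M₁ M₂ ℓ₁ ℓ₂ : ℕ) (x : ℝ) (p : ℕ × ℕ) : ℝ :=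
  Real.cos (4 * π * √((p.1 * p.2 : ℕ) * x) - 2 * π * phase M₁ M₂ ℓ₁ ℓ₂ p) *
    ((p.1 * p.2 : ℕ) : ℝ) ^ (-(3 : ℝ) / 4)

variable {M₁ M₂ h : ℕ} {T x : ℝ}

lemma voronoiTerm_eq_re (M₁ M₂ ℓ₁ ℓ₂ h r : ℕ) {x : ℝ} (hx : 0 ≤ x) :
    voronoiTerm M₁ M₂ ℓ₁ ℓ₂ x (h, r) = (((h * r : ℕ) : ℝ) ^ (-(3 : ℝ) / 4) •
      (𝐞 (2 * √(h * x) * √r - (ℓ₁ / M₁ * r + (h * ℓ₂ / M₂ + 1 / 8))) : ℂ)).re := by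
  have hsqrt : √((h * r : ℕ) * x) = √(h * x) * √r := by
    rw [← Real.sqrt_mul (by positivity)]
    push_cast
    ring_nf
  rw [Complex.smul_re, Real.fourierChar_apply, Complex.exp_ofReal_mul_I_re, smul_eq_mul, mul_comm]
  simp only [voronoiTerm, phase, hsqrt]
  ring_nf

lemma four_div_sqrt_curvature_le (hM₁ : 0 < M₁) (hh : 0 < h) (hT : 0 < T) (hx : T / 2 ≤ x) :
    4 / √(√(h * x) / (2 * √(3 * T * h * M₁) ^ 3)) ≤ 20 * M₁ * √(h * T) := by
  have hM₁' : (1 : ℝ) ≤ M₁ := by exact_mod_cast hM₁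
  have hx0 : 0 < x := by linarith
  set s := √(h * x)
  set R : ℝ := 3 * T * h * M₁ with hR
  have hsqrtR : √R ≤ 3 * M₁ * s := by
    rw [Real.sqrt_le_left (by positivity), mul_pow, Real.sq_sqrt (by positivity)]
    have : (M₁ : ℝ) * (h * (T / 2)) ≤ M₁ ^ 2 * (h * x) := by
      gcongr
      nlinarith
    nlinarith [(by positivity : 0 ≤ M₁ * (h * T))]
  have hcube : √R ^ 3 ≤ 9 * M₁ ^ 2 * (h * T) * s := calc
    √R ^ 3 = R * √R := by rw [pow_succ, Real.sq_sqrt (by positivity)]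
    _ ≤ R * (3 * M₁ * s) := by gcongr
    _ = _ := by rw [hR]; ring
  have hlower : 1 / (5 * M₁ * √(h * T)) ≤ √(s / (2 * √R ^ 3)) := by
    refine Real.le_sqrt_of_sq_le ?_
    rw [div_pow, one_pow, mul_pow, Real.sq_sqrt (by positivity),
      div_le_div_iff₀ (by positivity) (by positivity)]
    nlinarith [(by positivity : 0 ≤ M₁ ^ 2 * (h * T) * s)]
  calc 4 / √(s / (2 * √R ^ 3)) ≤ 4 / (1 / (5 * M₁ * √(h * T))) := by gcongr
    _ = 20 * M₁ * √(h * T) := by rw [div_div_eq_mul_div, div_one]; ring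

lemma norm_sum_fourierChar_sqrt_le_of_dyadic (θ φ : ℝ) (hM₁ : 0 < M₁) (hM₂ : 0 < M₂) (hh : 0 < h)
    (hT : 1 ≤ T) (hx : x ∈ Set.Icc (T / 2) T) {S : Finset ℕ} (hS : (S : Set ℕ).OrdConnected)
    (hlow : ∀ r ∈ S, (h : ℝ) * M₁ / M₂ ≤ r) (hhigh : ∀ r ∈ S, (r : ℝ) ≤ 2 * T * h * M₁) :
    ‖∑ r ∈ S, (𝐞 (2 * √(h * x) * √r - (θ * r + φ)) : ℂ)‖ ≤ 66 * M₁ * M₂ * T * √h := by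
  have hM₁' : (1 : ℝ) ≤ M₁ := by exact_mod_cast hM₁
  have hM₂' : (1 : ℝ) ≤ M₂ := by exact_mod_cast hM₂
  have hh' : (1 : ℝ) ≤ h := by exact_mod_cast hh
  have hx0 : 0 < x := by linarith [hx.1]
  have hT1 : 1 ≤ √T := Real.one_le_sqrt.2 hT
  have hhT1 : 1 ≤ √(h * T) := Real.one_le_sqrt.2 (one_le_mul_of_one_le_of_one_le hh' hT)
  set s := √(h * x)
  have hs : 0 < s := Real.sqrt_pos.2 (by positivity)
  set R : ℝ := 3 * T * h * M₁
  have hSR : ∀ r ∈ S, (r : ℝ) + 1 ≤ R := fun r hr => by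
    have : 1 ≤ T * h * M₁ :=
      one_le_mul_of_one_le_of_one_le (one_le_mul_of_one_le_of_one_le hT hh') hM₁'
    linarith [hhigh r hr]
  have hvar : s / √(h * M₁ / M₂) ≤ M₂ * √T := by
    rw [← Real.sqrt_div (by positivity), Real.sqrt_le_left (by positivity), mul_pow,
      Real.sq_sqrt (by positivity)]
    calc h * x / (h * M₁ / M₂) = x * M₂ / M₁ := by field_simp
      _ ≤ T * M₂ / 1 := by gcongr; exact hx.2
      _ ≤ M₂ ^ 2 * T := by nlinarith [mul_le_mul_of_nonneg_left hM₂' (by positivity : 0 ≤ T * M₂)]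
  calc _ ≤ (s / √(h * M₁ / M₂) + 2) * (4 / √(s / (2 * √R ^ 3)) + 2) :=
        norm_sum_fourierChar_sqrt_le θ φ hs (by positivity) (by positivity) hS hlow hSR
    _ ≤ (M₂ * √T + 2 * (M₂ * √T)) * (20 * M₁ * √(h * T) + 2 * (M₁ * √(h * T))) := by
        gcongr
        · linarith [one_le_mul_of_one_le_of_one_le hM₂' hT1]
        · exact four_div_sqrt_curvature_le hM₁ hh (by linarith) hx.1
        · linarith [one_le_mul_of_one_le_of_one_le hM₁' hhT1]
    _ = 66 * M₁ * M₂ * T * √h := by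
        rw [Real.sqrt_mul (Nat.cast_nonneg h)]
        linear_combination 66 * M₁ * M₂ * √h * Real.mul_self_sqrt (by linarith : 0 ≤ T)

lemma antitoneOn_mul_rpow (h : ℕ) :
    AntitoneOn (fun r : ℕ => ((h * r : ℕ) : ℝ) ^ (-(3 : ℝ) / 4)) (Set.Ioi 0) := by
  rcases h.eq_zero_or_pos with rfl | hh
  · simp only [zero_mul]
    exact antitoneOn_const
  intro i hi j _ hij
  have hi' : 0 < h * i := Nat.mul_pos hh hi
  refine Real.rpow_le_rpow_of_nonpos (by exact_mod_cast hi') ?_ (by norm_num)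
  exact_mod_cast Nat.mul_le_mul_left h hij

lemma rpow_mul_sqrt_le {M h A : ℕ} (hM : 0 < M) (hh : 0 < h) (hA : (h : ℝ) ≤ A * M) :
    ((h * A : ℕ) : ℝ) ^ (-(3 : ℝ) / 4) * √h ≤ M * (1 / h) := by
  have hM' : (1 : ℝ) ≤ M := by exact_mod_cast hM
  have hh' : (0 : ℝ) < h := by exact_mod_cast hh
  have hA' : 0 < A := by
    exact_mod_cast pos_of_mul_pos_left (hh'.trans_le hA) (Nat.cast_nonneg M)
  rw [mul_one_div, neg_div, Real.rpow_neg (by positivity), inv_mul_eq_div,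
    div_le_div_iff₀ (by positivity) hh']
  calc √h * h = ((h : ℝ) ^ 2) ^ ((3 : ℝ) / 4) := by
        rw [Real.sqrt_eq_rpow, ← Real.rpow_add_one hh'.ne', ← Real.rpow_natCast_mul hh'.le]
        norm_num
    _ ≤ (M * (h * A : ℕ)) ^ ((3 : ℝ) / 4) := by
        gcongr
        push_cast
        nlinarith
    _ = (M : ℝ) ^ ((3 : ℝ) / 4) * ((h * A : ℕ) : ℝ) ^ ((3 : ℝ) / 4) :=
        Real.mul_rpow (by positivity) (by positivity)
    _ ≤ M * ((h * A : ℕ) : ℝ) ^ ((3 : ℝ) / 4) := by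
        gcongr
        exact Real.rpow_le_self_of_one_le hM' (by norm_num)

lemma abs_sum_voronoiTerm_le (ℓ₁ ℓ₂ : ℕ) (hM₁ : 0 < M₁) (hM₂ : 0 < M₂) (hh : 0 < h)
    (hT : 1 ≤ T) (hx : x ∈ Set.Icc (T / 2) T) {S : Finset ℕ} (hS : (S : Set ℕ).OrdConnected)
    (hlow : ∀ r ∈ S, (h : ℝ) * M₁ / M₂ ≤ r) (hhigh : ∀ r ∈ S, (r : ℝ) ≤ 2 * T * h * M₁) :
    |∑ r ∈ S, voronoiTerm M₁ M₂ ℓ₁ ℓ₂ x (h, r)| ≤ 66 * M₁ * M₂ ^ 2 * T * (1 / h) := by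
  obtain ⟨A, B, rfl⟩ := exists_eq_Ico_of_ordConnected hS
  rcases le_or_gt B A with hBA | hAB
  · rw [Ico_eq_empty (not_lt.2 hBA), sum_empty, abs_zero]
    positivity
  have hlowA : (h : ℝ) * M₁ / M₂ ≤ A := hlow A (mem_Ico.2 ⟨le_rfl, hAB⟩)
  have hA : 0 < A := by exact_mod_cast (by positivity : (0 : ℝ) < h * M₁ / M₂).trans_le hlowA
  have hweight : ((h * A : ℕ) : ℝ) ^ (-(3 : ℝ) / 4) * √h ≤ M₂ * (1 / h) := by
    refine rpow_mul_sqrt_le hM₂ hh ?_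
    rw [div_le_iff₀ (by positivity)] at hlowA
    nlinarith [(by exact_mod_cast hM₁ : (1 : ℝ) ≤ M₁)]
  have hpartial : ∀ n ≤ B, ‖∑ r ∈ Ico A n,
      (𝐞 (2 * √(h * x) * √r - (ℓ₁ / M₁ * r + (h * ℓ₂ / M₂ + 1 / 8))) : ℂ)‖ ≤
        66 * M₁ * M₂ * T * √h := fun n hn => by
    have hsub := Ico_subset_Ico_right (a := A) hn
    refine norm_sum_fourierChar_sqrt_le_of_dyadic _ _ hM₁ hM₂ hh hT hx ?_
      (fun r hr => hlow r (hsub hr)) fun r hr => hhigh r (hsub hr)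
    rw [coe_Ico]
    exact Set.ordConnected_Ico
  have habel := norm_sum_Ico_smul_le_of_antitoneOn
    ((antitoneOn_mul_rpow h).mono fun r hr => hA.trans_le hr.1) (fun r _ => by positivity) hAB
    hpartial
  simp only [voronoiTerm_eq_re M₁ M₂ ℓ₁ ℓ₂ h _ (by linarith [hx.1] : 0 ≤ x)]
  rw [← Complex.re_sum]
  calc _ ≤ ((h * A : ℕ) : ℝ) ^ (-(3 : ℝ) / 4) * (66 * M₁ * M₂ * T * √h) :=
        (Complex.abs_re_le_norm _).trans habel
    _ = 66 * M₁ * M₂ * T * (((h * A : ℕ) : ℝ) ^ (-(3 : ℝ) / 4) * √h) := by ring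
    _ ≤ 66 * M₁ * M₂ * T * (M₂ * (1 / h)) := by gcongr
    _ = _ := by ring

end ExponentialSums

/-! ### The size of `R` -/

section SizeOfR

variable {M₁ M₂ : ℕ} {T x : ℝ}

lemma wprime_eq_half_add {α β : ℝ} (hαβ : α < β) (t : ℝ) :
    wprime α β t =
      ((if t ∈ Set.Ioo α β then 1 else 0) + (if t ∈ Set.Icc α β then 1 else 0)) / 2 := by
  simp only [wprime, Set.mem_Ioo, Set.mem_Icc]
  grind

lemma abs_sum_wprime_mul_le {S : Finset ℕ} (hS : (S : Set ℕ).OrdConnected) {α β K : ℝ}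
    (hαβ : α < β) {c : ℕ → ℝ}
    (hc : ∀ U : Finset ℕ, (U : Set ℕ).OrdConnected → U ⊆ S → (∀ r ∈ U, (r : ℝ) ∈ Set.Icc α β) →
      |∑ r ∈ U, c r| ≤ K) :
    |∑ r ∈ S, wprime α β r * c r| ≤ K := by
  have hsub : ∀ (I : Set ℝ) [DecidablePred (· ∈ I)], I.OrdConnected → I ⊆ Set.Icc α β →
      |∑ r ∈ S with ((r : ℕ) : ℝ) ∈ I, c r| ≤ K := fun I _ hI hIαβ => by
    refine hc _ ?_ (filter_subset _ _) fun r hr => hIαβ (mem_filter.1 hr).2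
    rw [coe_filter]
    exact hS.inter (hI.preimage_mono Nat.mono_cast)
  have hsplit : ∑ r ∈ S, wprime α β r * c r =
      (∑ r ∈ S with ((r : ℕ) : ℝ) ∈ Set.Ioo α β, c r +
        ∑ r ∈ S with ((r : ℕ) : ℝ) ∈ Set.Icc α β, c r) / 2 := by
    simp only [sum_filter, ← sum_add_distrib, sum_div, wprime_eq_half_add hαβ]
    exact sum_congr rfl fun r _ => by split_ifs <;> ring
  have hopen := hsub _ Set.ordConnected_Ioo Set.Ioo_subset_Icc_self
  have hclosed := hsub _ Set.ordConnected_Icc subset_rfl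
  rw [hsplit]
  rw [abs_le] at hopen hclosed ⊢
  constructor <;> linarith

lemma two_mul_log_log_le (hT : 1 < T) : 2 * log (log T) ≤ log T := by
  have hlog := log_pos hT
  have hhalf := log_le_sub_one_of_pos (half_pos hlog)
  rw [log_div hlog.ne' two_ne_zero] at hhalf
  linarith [log_two_lt_d9]

lemma two_le_two_zpow_Jof_add_one (hT : 1 < T) : (2 : ℝ) ≤ 2 ^ (Jof T + 1) := by
  have hJ : 0 ≤ Jof T := Int.floor_nonneg.2 <|
    div_nonneg (sub_nonneg.2 (two_mul_log_log_le hT)) (log_nonneg one_le_two)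
  simpa using zpow_le_zpow_right₀ (one_le_two (α := ℝ)) (by lia : 1 ≤ Jof T + 1)

lemma two_zpow_Jof_add_one_le (hT : exp 1 ≤ T) : (2 : ℝ) ^ (Jof T + 1) ≤ 2 * T := by
  have hT0 : 0 < T := (exp_pos 1).trans_le hT
  have hlog2 : 0 < log 2 := log_pos one_lt_two
  have hJ : (Jof T : ℝ) ≤ log T / log 2 := by
    refine (Int.floor_le _).trans ?_
    gcongr
    linarith [log_nonneg ((le_log_iff_exp_le hT0).2 hT)]
  rw [zpow_add₀ two_ne_zero, zpow_one, mul_comm, ← rpow_intCast]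
  gcongr
  calc (2 : ℝ) ^ (Jof T : ℝ) ≤ 2 ^ (log T / log 2) :=
        rpow_le_rpow_of_exponent_le one_le_two hJ
    _ = T := by
        rw [rpow_def_of_pos two_pos, mul_div_cancel₀ _ hlog2.ne', exp_log hT0]

lemma abs_sum_wprime_mul_voronoiTerm_le (ℓ₁ ℓ₂ : ℕ) (hM₁ : 0 < M₁) (hM₂ : 0 < M₂)
    (hT : exp 1 ≤ T) (hx : x ∈ Set.Icc (T / 2) T) {h : ℕ} (hh : 0 < h) {S : Finset ℕ}
    (hS : (S : Set ℕ).OrdConnected) :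
    |∑ r ∈ S, wprime (h * M₁ / M₂) (2 ^ (Jof T + 1) * h * M₁ / M₂) r *
      voronoiTerm M₁ M₂ ℓ₁ ℓ₂ x (h, r)| ≤ 66 * M₁ * M₂ ^ 2 * T * (1 / h) := by
  have hT1 : 1 < T := (one_lt_exp_iff.2 one_pos).trans_le hT
  have hα : (0 : ℝ) < h * M₁ / M₂ := by positivity
  have hαβ : (h * M₁ / M₂ : ℝ) < 2 ^ (Jof T + 1) * h * M₁ / M₂ := by
    rw [mul_assoc, mul_div_assoc (2 ^ (Jof T + 1))]
    exact lt_mul_of_one_lt_left hα (one_lt_two.trans_le (two_le_two_zpow_Jof_add_one hT1))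
  refine abs_sum_wprime_mul_le hS hαβ fun U hU _ hr =>
    abs_sum_voronoiTerm_le ℓ₁ ℓ₂ hM₁ hM₂ hh hT1.le hx hU (fun r hrU => (hr r hrU).1)
      fun r hrU => (hr r hrU).2.trans ?_
  calc (2 : ℝ) ^ (Jof T + 1) * h * M₁ / M₂ ≤ 2 ^ (Jof T + 1) * h * M₁ :=
        div_le_self (by positivity) (by exact_mod_cast hM₂)
    _ ≤ 2 * T * h * M₁ := by
        gcongr
        exact two_zpow_Jof_add_one_le hT

lemma sum_sum_divisorsAntidiagonal {R : Type*} [AddCommMonoid R] {N : ℕ} {F : Finset ℕ}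
    (hF : F ⊆ Icc 1 N) (f : ℕ × ℕ → R) :
    ∑ n ∈ F, ∑ p ∈ n.divisorsAntidiagonal, f p =
      ∑ h ∈ Icc 1 N, ∑ r ∈ Icc 1 N with h * r ∈ F, f (h, r) := by
  have hfiber : ∀ n ∈ F, n.divisorsAntidiagonal =
      {p ∈ {p ∈ Icc 1 N ×ˢ Icc 1 N | p.1 * p.2 ∈ F} | p.1 * p.2 = n} := fun n hn => by
    have hn' := mem_Icc.1 (hF hn)
    rw [Nat.divisorsAntidiagonal_eq_prod_filter_of_le (by lia) hn'.2, filter_filter]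
    refine filter_congr fun p _ => ⟨fun hp => ⟨hp ▸ hn, hp⟩, And.right⟩
  calc _ = ∑ p ∈ Icc 1 N ×ˢ Icc 1 N with p.1 * p.2 ∈ F, f p := by
        rw [← sum_fiberwise_of_maps_to fun p hp => (mem_filter.1 hp).2]
        exact sum_congr rfl fun n hn => by rw [hfiber n hn]
    _ = _ := by simp only [sum_filter, sum_product]

lemma tau12H_mul_rpow (M₁ M₂ ℓ₁ ℓ₂ : ℕ) (T H x : ℝ) (n : ℕ) :
    tau12H M₁ M₂ ℓ₁ ℓ₂ T H n x * (n : ℝ) ^ (-(3 : ℝ) / 4) =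
      ∑ p ∈ n.divisorsAntidiagonal, if (p.1 : ℝ) ≤ H then
        wprime (p.1 * M₁ / M₂) (2 ^ (Jof T + 1) * p.1 * M₁ / M₂) p.2 *
          voronoiTerm M₁ M₂ ℓ₁ ℓ₂ x p else 0 := by
  rw [tau12H, sum_mul]
  refine sum_congr rfl fun p hp => ?_
  rw [voronoiTerm, (Nat.mem_divisorsAntidiagonal.1 hp).1, ite_mul, zero_mul, mul_assoc]

lemma abs_sum_tau12H_mul_rpow_le (ℓ₁ ℓ₂ : ℕ) (hM₁ : 0 < M₁) (hM₂ : 0 < M₂) (hT : exp 1 ≤ T)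
    (hx : x ∈ Set.Icc (T / 2) T) {H : ℝ} (hH : 1 ≤ H) {N : ℕ} {F : Finset ℕ} (hF : F ⊆ Icc 1 N)
    (hFconn : (F : Set ℕ).OrdConnected) :
    |∑ n ∈ F, tau12H M₁ M₂ ℓ₁ ℓ₂ T H n x * (n : ℝ) ^ (-(3 : ℝ) / 4)| ≤
      66 * M₁ * M₂ ^ 2 * T * (1 + log H) := by
  have hT0 : 0 < T := (exp_pos 1).trans_le hT
  have hrow : ∀ h ∈ Icc 1 N, |∑ r ∈ Icc 1 N with h * r ∈ F,
      wprime (h * M₁ / M₂) (2 ^ (Jof T + 1) * h * M₁ / M₂) r *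
        voronoiTerm M₁ M₂ ℓ₁ ℓ₂ x (h, r)| ≤ 66 * M₁ * M₂ ^ 2 * T * (1 / h) := fun h hh => by
    refine abs_sum_wprime_mul_voronoiTerm_le ℓ₁ ℓ₂ hM₁ hM₂ hT hx (mem_Icc.1 hh).1 ?_
    rw [coe_filter, Set.ofPred_and]
    refine Set.OrdConnected.inter ?_ (hFconn.preimage_mono (f := (h * ·)) fun a b hab =>
      Nat.mul_le_mul_left h hab)
    simp only [mem_Icc]
    exact Set.ordConnected_Icc
  simp only [tau12H_mul_rpow, sum_sum_divisorsAntidiagonal hF]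
  calc _ ≤ ∑ h ∈ Icc 1 N, if (h : ℝ) ≤ H then 66 * M₁ * M₂ ^ 2 * T * (1 / h) else 0 := by
        refine (abs_sum_le_sum_abs _ _).trans (sum_le_sum fun h hh => ?_)
        split_ifs with hhH
        · exact hrow h hh
        · rw [sum_const_zero, abs_zero]
    _ ≤ ∑ h ∈ Icc 1 ⌊H⌋₊, 66 * M₁ * M₂ ^ 2 * T * (1 / h) := by
        rw [← sum_filter]
        refine sum_le_sum_of_subset_of_nonneg (fun h hh => ?_) fun _ _ _ => by positivity
        rw [mem_filter, mem_Icc] at hh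
        exact mem_Icc.2 ⟨hh.1.1, Nat.le_floor hh.2⟩
    _ = 66 * M₁ * M₂ ^ 2 * T * harmonic ⌊H⌋₊ := by
        simp only [← mul_sum, harmonic_eq_sum_Icc, Rat.cast_sum, Rat.cast_inv, Rat.cast_natCast,
          one_div]
    _ ≤ 66 * M₁ * M₂ ^ 2 * T * (1 + log H) := by
        gcongr
        exact harmonic_floor_le_one_add_log H hH

lemma abs_rpow_quarter_div_le (hx : 0 ≤ x) (hxT : x ≤ T) :
    |x ^ ((1 : ℝ) / 4) / (√2 * π)| ≤ T ^ ((1 : ℝ) / 4) := by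
  have hdenom : 1 ≤ √2 * π :=
    one_le_mul_of_one_le_of_one_le (one_le_sqrt.2 one_le_two) (by linarith [pi_gt_three])
  rw [abs_of_nonneg (by positivity)]
  refine (div_le_self (by positivity) hdenom).trans ?_
  gcongr

lemma one_add_log_pow_le (k : ℕ) (hT : exp 1 ≤ T) : 1 + log (T ^ k) ≤ (k + 1) * log T := by
  rw [log_pow]
  linarith [(le_log_iff_exp_le ((exp_pos 1).trans_le hT)).2 hT]

lemma abs_Rstar12_le (ℓ₁ ℓ₂ : ℕ) (hM₁ : 0 < M₁) (hM₂ : 0 < M₂) (hT : exp 1 ≤ T)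
    (hx : x ∈ Set.Icc (T / 2) T) (y : ℝ) {H : ℝ} (hH : 1 ≤ H) :
    |Rstar12 M₁ M₂ ℓ₁ ℓ₂ T y H x| ≤
      66 * M₁ * M₂ ^ 2 * T ^ ((5 : ℝ) / 4) * (1 + log H) := by
  have hT0 : 0 < T := (exp_pos 1).trans_le hT
  rw [Rstar12, abs_mul]
  calc _ ≤ T ^ ((1 : ℝ) / 4) * (66 * M₁ * M₂ ^ 2 * T * (1 + log H)) := by
        gcongr
        · exact abs_rpow_quarter_div_le (by linarith [hx.1]) hx.2
        refine abs_sum_tau12H_mul_rpow_le ℓ₁ ℓ₂ hM₁ hM₂ hT hx hH (filter_subset _ _) ?_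
        rw [coe_filter, Set.ofPred_and]
        simp only [mem_Icc]
        exact Set.ordConnected_Icc.inter
          ((Set.ordConnected_Ioi (a := y)).preimage_mono (Nat.mono_cast (α := ℝ)))
    _ = 66 * M₁ * M₂ ^ 2 * (T ^ ((1 : ℝ) / 4) * T) * (1 + log H) := by ring
    _ = _ := by
        rw [← rpow_add_one hT0.ne']
        norm_num

lemma abs_tau_le (M₁ M₂ ℓ₁ ℓ₂ n : ℕ) (x : ℝ) : |tau M₁ M₂ ℓ₁ ℓ₂ n x| ≤ n :=
  calc _ ≤ ∑ _p ∈ n.divisorsAntidiagonal, (1 : ℝ) :=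
        (abs_sum_le_sum_abs _ _).trans (sum_le_sum fun _ _ => abs_cos_le_one _)
    _ = (#n.divisors : ℝ) := by
        rw [sum_const, nsmul_one, ← Nat.map_div_right_divisors, card_map]
    _ ≤ n := by exact_mod_cast Nat.card_divisors_le_self n

lemma abs_tau_mul_rpow_le (M₁ M₂ ℓ₁ ℓ₂ n : ℕ) (x : ℝ) :
    |tau M₁ M₂ ℓ₁ ℓ₂ n x * (n : ℝ) ^ (-(3 : ℝ) / 4)| ≤ (n : ℝ) ^ ((1 : ℝ) / 4) := by
  rcases n.eq_zero_or_pos with rfl | hn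
  · simp [tau]
  rw [abs_mul, abs_of_nonneg (by positivity : 0 ≤ (n : ℝ) ^ (-(3 : ℝ) / 4))]
  calc _ ≤ (n : ℝ) * (n : ℝ) ^ (-(3 : ℝ) / 4) := by
        gcongr
        exact abs_tau_le M₁ M₂ ℓ₁ ℓ₂ n x
    _ = _ := by
        rw [← rpow_one_add' (by positivity) (by norm_num)]
        norm_num

lemma abs_R0_le (M₁ M₂ ℓ₁ ℓ₂ : ℕ) {y : ℝ} (hy : 0 ≤ y) (hx : 0 ≤ x) (hxT : x ≤ T) :
    |R0 M₁ M₂ ℓ₁ ℓ₂ y x| ≤ T ^ ((1 : ℝ) / 4) * y ^ ((5 : ℝ) / 4) := by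
  rw [R0, abs_mul]
  refine mul_le_mul (abs_rpow_quarter_div_le hx hxT) ?_ (abs_nonneg _)
    (rpow_nonneg (hx.trans hxT) _)
  calc _ ≤ ∑ _n ∈ Icc 1 ⌊y⌋₊, y ^ ((1 : ℝ) / 4) := by
        refine (abs_sum_le_sum_abs _ _).trans (sum_le_sum fun n hn => ?_)
        refine (abs_tau_mul_rpow_le M₁ M₂ ℓ₁ ℓ₂ n x).trans ?_
        gcongr
        exact (Nat.le_floor_iff hy).1 (mem_Icc.1 hn).2
    _ = ⌊y⌋₊ * y ^ ((1 : ℝ) / 4) := by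
        rw [sum_const, Nat.card_Icc, nsmul_eq_mul, add_tsub_cancel_right]
    _ ≤ y * y ^ ((1 : ℝ) / 4) := by
        gcongr
        exact Nat.floor_le hy
    _ = _ := by
        rw [← rpow_one_add' hy (by norm_num)]
        norm_num

lemma abs_Rfull_le (ℓ₁ ℓ₂ : ℕ) (hM₁ : 0 < M₁) (hM₂ : 0 < M₂) (hT : exp 1 ≤ T)
    (hx : x ∈ Set.Icc (T / 2) T) :
    |Rfull M₁ M₂ ℓ₁ ℓ₂ T x| ≤
      (1 + 594 * (M₁ * M₂ ^ 2 + M₂ * M₁ ^ 2)) * (T ^ ((5 : ℝ) / 4) * log T) := by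
  have hT1 : 1 ≤ T := (one_le_exp zero_le_one).trans hT
  have hlog : 1 ≤ log T := (le_log_iff_exp_le (by linarith)).2 hT
  have hR0 : |R0 M₁ M₂ ℓ₁ ℓ₂ (T ^ ((3 : ℝ) / 4)) x| ≤ T ^ ((5 : ℝ) / 4) * log T :=
    calc _ ≤ T ^ ((1 : ℝ) / 4) * (T ^ ((3 : ℝ) / 4)) ^ ((5 : ℝ) / 4) :=
          abs_R0_le M₁ M₂ ℓ₁ ℓ₂ (by positivity) (by linarith [hx.1]) hx.2
      _ = T ^ ((19 : ℝ) / 16) := by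
          rw [← rpow_mul (by positivity), ← rpow_add (by positivity)]
          norm_num
      _ ≤ T ^ ((5 : ℝ) / 4) := rpow_le_rpow_of_exponent_le hT1 (by norm_num)
      _ ≤ _ := le_mul_of_one_le_right (by positivity) hlog
  have hRstar : ∀ {A B : ℕ} (a b : ℕ), 0 < A → 0 < B →
      |Rstar12 A B a b T (T ^ ((3 : ℝ) / 4)) (T ^ 8) x| ≤
        594 * (A * B ^ 2) * (T ^ ((5 : ℝ) / 4) * log T) := fun {A B} a b hA hB =>
    calc _ ≤ 66 * A * B ^ 2 * T ^ ((5 : ℝ) / 4) * (1 + log (T ^ 8)) :=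
          abs_Rstar12_le a b hA hB hT hx _ (one_le_pow₀ hT1)
      _ ≤ 66 * A * B ^ 2 * T ^ ((5 : ℝ) / 4) * (((8 : ℕ) + 1) * log T) := by
          gcongr
          exact one_add_log_pow_le 8 hT
      _ = _ := by push_cast; ring
  refine (abs_add_three _ _ _).trans ?_
  linarith [hRstar ℓ₁ ℓ₂ hM₁ hM₂, hRstar ℓ₂ ℓ₁ hM₂ hM₁]

end SizeOfR

/-! ### The mean value of `G` -/

section MeanOfG

variable {H : ℝ}

lemma nint_eq_min_fract (t : ℝ) : nint t = min (Int.fract t) (1 - Int.fract t) :=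
  abs_sub_round_eq_min t

lemma nint_nonneg (t : ℝ) : 0 ≤ nint t := abs_nonneg _

lemma measurable_nint : Measurable nint := by
  simp only [funext nint_eq_min_fract]
  exact measurable_fract.min (measurable_fract.const_sub 1)

lemma minOne_periodic (H : ℝ) : Function.Periodic (minOne H) 1 := fun t => by
  simp only [minOne, nint_eq_min_fract, Int.fract_add_one]

lemma minOne_nonneg (hH : 0 ≤ H) (t : ℝ) : 0 ≤ minOne H t := by
  have := nint_nonneg t
  unfold minOne
  split_ifs <;> positivity

lemma minOne_le_one (H t : ℝ) : minOne H t ≤ 1 := by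
  unfold minOne
  split_ifs
  exacts [le_rfl, min_le_left _ _]

lemma measurable_minOne (H : ℝ) : Measurable (minOne H) :=
  Measurable.ite (measurable_nint (measurableSet_singleton 0)) measurable_const
    (measurable_const.min ((measurable_nint.const_mul H).const_div 1))

lemma intervalIntegrable_minOne_comp (hH : 0 ≤ H) {g : ℝ → ℝ} (hg : Measurable g) (a b : ℝ) :
    IntervalIntegrable (fun x => minOne H (g x)) volume a b :=
  (intervalIntegrable_const (c := (1 : ℝ))).mono_fun'
    ((measurable_minOne H).comp hg).aestronglyMeasurable
    (.of_forall fun _ => (norm_of_nonneg (minOne_nonneg hH _)).trans_le (minOne_le_one H _))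

lemma minOne_le_two_mul_inv (hH : 0 ≤ H) (t : ℝ) : minOne H t ≤ 2 * (1 + H * nint t)⁻¹ := by
  have hnint := nint_nonneg t
  rw [← div_eq_mul_inv, le_div_iff₀ (by positivity), minOne]
  split_ifs with hzero
  · rw [hzero]
    norm_num
  · calc _ = min 1 (1 / (H * nint t)) + min 1 (1 / (H * nint t)) * (H * nint t) := by ring
      _ ≤ 1 + 1 / (H * nint t) * (H * nint t) := by
          gcongr
          exacts [min_le_left _ _, min_le_right _ _]
      _ ≤ 1 + 1 := by
          rw [one_div]
          gcongr
          exact inv_mul_le_one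
      _ = 2 := one_add_one_eq_two

lemma minOne_le_of_mem_Ico (hH : 0 ≤ H) {u : ℝ} (hu : u ∈ Set.Ico 0 1) :
    minOne H u ≤ 2 * (1 + H * u)⁻¹ + 2 * (1 + H * (1 - u))⁻¹ := by
  have hleft : 0 ≤ 2 * (1 + H * u)⁻¹ := by
    have := hu.1
    positivity
  have hright : 0 ≤ 2 * (1 + H * (1 - u))⁻¹ := by
    have := sub_pos.2 hu.2
    positivity
  have hbound := minOne_le_two_mul_inv hH u
  rw [nint_eq_min_fract, Int.fract_eq_self.2 hu] at hbound
  rcases min_choice u (1 - u) with hmin | hmin <;> rw [hmin] at hbound <;> linarith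

lemma integral_inv_one_add_mul_le (hH : 1 ≤ H) :
    ∫ u in (0 : ℝ)..1, (1 + H * u)⁻¹ ≤ (1 + log H) / H := by
  have hH0 : 0 < H := by linarith
  rw [intervalIntegral.integral_comp_add_mul (fun t => t⁻¹) hH0.ne' 1, mul_zero, mul_one,
    add_zero, integral_inv_of_pos one_pos (by positivity), div_one, smul_eq_mul,
    inv_mul_eq_div]
  gcongr
  calc log (1 + H) ≤ log (exp 1 * H) := by
        gcongr
        nlinarith [exp_one_gt_d9]
    _ = 1 + log H := by rw [log_mul (exp_pos 1).ne' hH0.ne', log_exp]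

lemma integral_minOne_unit_le (hH : 1 ≤ H) :
    ∫ u in (0 : ℝ)..1, minOne H u ≤ 4 * (1 + log H) / H := by
  have hH0 : 0 ≤ H := by linarith
  have hleft : IntervalIntegrable (fun u => (1 + H * u)⁻¹) volume 0 1 := by
    refine ContinuousOn.intervalIntegrable_of_Icc zero_le_one fun u hu => ?_
    have := hu.1
    exact ContinuousAt.continuousWithinAt (by fun_prop (disch := positivity))
  have hright : IntervalIntegrable (fun u => (1 + H * (1 - u))⁻¹) volume 0 1 := by
    simpa using (hleft.comp_sub_left 1).symm
  have hreflect : ∫ u in (0 : ℝ)..1, (1 + H * (1 - u))⁻¹ = ∫ u in (0 : ℝ)..1, (1 + H * u)⁻¹ := by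
    simpa using intervalIntegral.integral_comp_sub_left (a := 0) (b := 1)
      (fun u => (1 + H * u)⁻¹) 1
  calc _ ≤ ∫ u in (0 : ℝ)..1, (2 * (1 + H * u)⁻¹ + 2 * (1 + H * (1 - u))⁻¹) :=
        intervalIntegral.integral_mono_on_of_le_Ioo zero_le_one
          (intervalIntegrable_minOne_comp hH0 measurable_id 0 1)
          ((hleft.const_mul 2).add (hright.const_mul 2))
          fun u hu => minOne_le_of_mem_Ico hH0 (Set.Ioo_subset_Ico_self hu)
    _ = 4 * ∫ u in (0 : ℝ)..1, (1 + H * u)⁻¹ := by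
        rw [intervalIntegral.integral_add (hleft.const_mul 2) (hright.const_mul 2),
          intervalIntegral.integral_const_mul, intervalIntegral.integral_const_mul, hreflect]
        ring
    _ ≤ _ := by
        rw [mul_div_assoc]
        gcongr
        exact integral_inv_one_add_mul_le hH

lemma integral_minOne_le (hH : 1 ≤ H) {a b : ℝ} (hab : a ≤ b) :
    ∫ u in a..b, minOne H u ≤ (b - a + 1) * (4 * (1 + log H) / H) := by
  have hH0 : 0 ≤ H := by linarith
  have hintegrable : ∀ c d, IntervalIntegrable (minOne H) volume c d :=
    intervalIntegrable_minOne_comp hH0 measurable_id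
  have hcover : b ≤ a + ⌈b - a⌉ • (1 : ℝ) := by
    rw [zsmul_one]
    linarith [Int.le_ceil (b - a)]
  calc _ ≤ ∫ u in a..(a + ⌈b - a⌉ • (1 : ℝ)), minOne H u :=
        intervalIntegral.integral_mono_interval le_rfl hab hcover
          (.of_forall fun t => minOne_nonneg hH0 t) (hintegrable _ _)
    _ = ⌈b - a⌉ * ∫ u in (0 : ℝ)..1, minOne H u := by
        rw [(minOne_periodic H).intervalIntegral_add_zsmul_eq _ a hintegrable,
          (minOne_periodic H).intervalIntegral_add_eq a 0, zero_add, zsmul_eq_mul]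
    _ ≤ _ := mul_le_mul (Int.ceil_lt_add_one _).le (integral_minOne_unit_le hH)
        (intervalIntegral.integral_nonneg zero_le_one fun t _ => minOne_nonneg hH0 t)
        (by linarith)

lemma integral_minOne_mul_sub_le (hH : 1 ≤ H) {a b k : ℝ} (hab : a ≤ b) (hk : 0 < k) (d : ℝ) :
    ∫ x in a..b, minOne H (k * x - d) ≤ (b - a + 1 / k) * (4 * (1 + log H) / H) := by
  rw [intervalIntegral.integral_comp_mul_sub (minOne H) hk.ne', smul_eq_mul]
  calc _ ≤ k⁻¹ * ((k * b - d - (k * a - d) + 1) * (4 * (1 + log H) / H)) := by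
        gcongr
        exact integral_minOne_le hH (by gcongr)
    _ = _ := by
        field_simp
        ring

/-- The sum `G₁₂(x;H)` with its range extended to all `n ≤ √(M₁M₂T)`, which dominates it for
`x ≤ T` and no longer varies with `x`. -/
def G12Majorant (M₁ M₂ ℓ₂ : ℕ) (H T x : ℝ) : ℝ :=
  ∑ n ∈ Icc 1 ⌊√((M₁ * M₂ : ℕ) * T)⌋₊, minOne H (M₁ / n * x - ℓ₂ / M₂)

lemma G12_nonneg (M₁ M₂ ℓ₁ ℓ₂ : ℕ) (hH : 0 ≤ H) (x : ℝ) : 0 ≤ G12 M₁ M₂ ℓ₁ ℓ₂ H x :=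
  sum_nonneg fun _ _ => minOne_nonneg hH _

lemma G12_le_G12Majorant (M₁ M₂ ℓ₁ ℓ₂ : ℕ) (hH : 0 ≤ H) {x T : ℝ} (hx : x ≤ T) :
    G12 M₁ M₂ ℓ₁ ℓ₂ H x ≤ G12Majorant M₁ M₂ ℓ₂ H T x := by
  simp only [G12, G12Majorant, mul_div_right_comm]
  refine sum_le_sum_of_subset_of_nonneg ((filter_subset _ _).trans ?_)
    fun _ _ _ => minOne_nonneg hH _
  gcongr

lemma intervalIntegrable_G12Majorant (M₁ M₂ ℓ₂ : ℕ) (hH : 0 ≤ H) (T a b : ℝ) :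
    IntervalIntegrable (G12Majorant M₁ M₂ ℓ₂ H T) volume a b := by
  unfold G12Majorant
  simpa only [sum_fn] using IntervalIntegrable.sum
    (Icc 1 ⌊√((M₁ * M₂ : ℕ) * T)⌋₊) (f := fun (n : ℕ) x => minOne H (M₁ / n * x - ℓ₂ / M₂))
    fun n _ => intervalIntegrable_minOne_comp hH (by fun_prop) a b

lemma integral_G12Majorant_le {M₁ M₂ : ℕ} (ℓ₂ : ℕ) (hM₁ : 0 < M₁) (hM₂ : 0 < M₂) (hH : 1 ≤ H)
    {T : ℝ} (hT : 1 ≤ T) :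
    ∫ x in (T / 2)..T, G12Majorant M₁ M₂ ℓ₂ H T x ≤
      8 * (M₁ * M₂) ^ 2 * T ^ ((3 : ℝ) / 2) * (1 + log H) / H := by
  have hH0 : 0 < H := by linarith
  have hlog := log_nonneg hH
  have hM₁' : (1 : ℝ) ≤ M₁ := by exact_mod_cast hM₁
  have hM : (1 : ℝ) ≤ M₁ * M₂ := by exact_mod_cast Nat.mul_pos hM₁ hM₂
  have hsqrt : √((M₁ * M₂ : ℕ) * T) ≤ M₁ * M₂ * √T := by
    rw [sqrt_mul (Nat.cast_nonneg _)]
    push_cast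
    gcongr
    exact sqrt_le_self_iff.2 (.inr hM)
  have hterm : ∀ n ∈ Icc 1 ⌊√((M₁ * M₂ : ℕ) * T)⌋₊,
      ∫ x in (T / 2)..T, minOne H (M₁ / n * x - ℓ₂ / M₂) ≤
        2 * (M₁ * M₂) * T * (4 * (1 + log H) / H) := fun n hn => by
    have hn0 : (0 : ℝ) < n := by exact_mod_cast (mem_Icc.1 hn).1
    have hnT : (n : ℝ) ≤ M₁ * M₂ * T :=
      calc (n : ℝ) ≤ √((M₁ * M₂ : ℕ) * T) :=
            (Nat.le_floor_iff (sqrt_nonneg _)).1 (mem_Icc.1 hn).2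
        _ ≤ M₁ * M₂ * T := hsqrt.trans (by gcongr; exact sqrt_le_self_iff.2 (.inr hT))
    refine (integral_minOne_mul_sub_le hH (by linarith) (by positivity) _).trans ?_
    gcongr
    rw [one_div_div]
    nlinarith [div_le_self hn0.le hM₁']
  simp only [G12Majorant]
  rw [intervalIntegral.integral_finsetSum fun n _ =>
    intervalIntegrable_minOne_comp hH0.le (by fun_prop) _ _]
  calc _ ≤ ⌊√((M₁ * M₂ : ℕ) * T)⌋₊ * (2 * (M₁ * M₂) * T * (4 * (1 + log H) / H)) := by
        simpa [nsmul_eq_mul] using sum_le_card_nsmul _ _ _ hterm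
    _ ≤ M₁ * M₂ * √T * (2 * (M₁ * M₂) * T * (4 * (1 + log H) / H)) := by
        gcongr
        exact (Nat.floor_le (sqrt_nonneg _)).trans hsqrt
    _ = 8 * (M₁ * M₂) ^ 2 * (T ^ ((1 : ℝ) / 2) * T) * (1 + log H) / H := by
        rw [sqrt_eq_rpow]
        ring
    _ = _ := by
        rw [← rpow_add_one (by positivity)]
        norm_num

end MeanOfG

/-! ### The third moment -/

lemma intervalIntegral_mono_of_nonneg {f g : ℝ → ℝ} {a b : ℝ} (hab : a ≤ b)
    (hf : ∀ x, 0 ≤ f x) (hg : IntervalIntegrable g volume a b)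
    (hfg : ∀ x ∈ Set.Icc a b, f x ≤ g x) : ∫ x in a..b, f x ≤ ∫ x in a..b, g x := by
  rw [intervalIntegral.integral_of_le hab, intervalIntegral.integral_of_le hab]
  exact integral_mono_of_nonneg (.of_forall hf) hg.1 <|
    (ae_restrict_mem measurableSet_Ioc).mono fun x hx => hfg x (Set.Ioc_subset_Icc_self hx)

lemma integral_mul_abs_G12_add_G12_le {M₁ M₂ : ℕ} (ℓ₁ ℓ₂ : ℕ) (hM₁ : 0 < M₁) (hM₂ : 0 < M₂)
    {H T K : ℝ} (hH : 1 ≤ H) (hT : 1 ≤ T) {f : ℝ → ℝ} (hf : ∀ x, 0 ≤ f x)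
    (hfK : ∀ x ∈ Set.Icc (T / 2) T, f x ≤ K) :
    ∫ x in (T / 2)..T, f x * |G12 M₁ M₂ ℓ₁ ℓ₂ H x + G12 M₂ M₁ ℓ₂ ℓ₁ H x| ≤
      K * (16 * (M₁ * M₂) ^ 2 * T ^ ((3 : ℝ) / 2) * (1 + log H) / H) := by
  have hH0 : 0 ≤ H := by linarith
  have hhalf : T / 2 ≤ T := by linarith
  have hK : 0 ≤ K := (hf _).trans (hfK T (Set.right_mem_Icc.2 hhalf))
  have hmajorant₁₂ := intervalIntegrable_G12Majorant M₁ M₂ ℓ₂ hH0 T (T / 2) T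
  have hmajorant₂₁ := intervalIntegrable_G12Majorant M₂ M₁ ℓ₁ hH0 T (T / 2) T
  calc _ ≤ ∫ x in (T / 2)..T, K * (G12Majorant M₁ M₂ ℓ₂ H T x + G12Majorant M₂ M₁ ℓ₁ H T x) := by
        refine intervalIntegral_mono_of_nonneg hhalf
          (fun x => mul_nonneg (hf x) (abs_nonneg _)) ((hmajorant₁₂.add hmajorant₂₁).const_mul K)
          fun x hx => ?_
        rw [abs_of_nonneg (add_nonneg (G12_nonneg _ _ _ _ hH0 x) (G12_nonneg _ _ _ _ hH0 x))]
        gcongr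
        exacts [add_nonneg (G12_nonneg _ _ _ _ hH0 x) (G12_nonneg _ _ _ _ hH0 x), hfK x hx,
          G12_le_G12Majorant _ _ _ _ hH0 hx.2, G12_le_G12Majorant _ _ _ _ hH0 hx.2]
    _ = K * ((∫ x in (T / 2)..T, G12Majorant M₁ M₂ ℓ₂ H T x) +
          ∫ x in (T / 2)..T, G12Majorant M₂ M₁ ℓ₁ H T x) := by
        rw [intervalIntegral.integral_const_mul,
          intervalIntegral.integral_add hmajorant₁₂ hmajorant₂₁]
    _ ≤ K * (8 * (M₁ * M₂) ^ 2 * T ^ ((3 : ℝ) / 2) * (1 + log H) / H +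
          8 * (M₂ * M₁) ^ 2 * T ^ ((3 : ℝ) / 2) * (1 + log H) / H) := by
        gcongr
        exacts [integral_G12Majorant_le ℓ₂ hM₁ hM₂ hH hT, integral_G12Majorant_le ℓ₁ hM₂ hM₁ hH hT]
    _ = _ := by ring

lemma rpow_mul_log_pow_le {T a b : ℝ} (hT : 1 ≤ T) (k : ℕ) (hab : a + k ≤ b) :
    T ^ a * log T ^ k ≤ T ^ b :=
  calc T ^ a * log T ^ k ≤ T ^ a * T ^ k := by
        gcongr
        exacts [log_nonneg hT, log_le_self (by linarith)]
    _ = T ^ (a + k) := by rw [rpow_add_natCast (by linarith)]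
    _ ≤ T ^ b := rpow_le_rpow_of_exponent_le hT hab

theorem R_cubed_G_moment_general {M₁ M₂ : ℕ} (hM₁ : 0 < M₁) (hM₂ : 0 < M₂) :
    ∃ C > 0, ∀ ℓ₁ ℓ₂ : ℕ, ∀ T : ℝ, exp 1 ≤ T →
      (∫ x in (T / 2)..T, |Rfull M₁ M₂ ℓ₁ ℓ₂ T x| ^ 3 *
          |G12 M₁ M₂ ℓ₁ ℓ₂ (T ^ 8) x + G12 M₂ M₁ ℓ₂ ℓ₁ (T ^ 8) x|)
        ≤ C * (T ^ (-(11 : ℝ) / 4) * log T ^ 4) := by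
  set K : ℝ := 1 + 594 * (M₁ * M₂ ^ 2 + M₂ * M₁ ^ 2)
  refine ⟨K ^ 3 * (144 * (M₁ * M₂) ^ 2), by positivity, fun ℓ₁ ℓ₂ T hT => ?_⟩
  have hT1 : 1 ≤ T := (one_le_exp zero_le_one).trans hT
  have hT0 : 0 < T := by linarith
  have hpow : (T ^ ((5 : ℝ) / 4)) ^ 3 * T ^ ((3 : ℝ) / 2) / T ^ 8 = T ^ (-(11 : ℝ) / 4) := by
    rw [← rpow_mul_natCast hT0.le, ← rpow_add hT0, ← rpow_natCast T 8, ← rpow_sub hT0]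
    norm_num
  calc _ ≤ (K * (T ^ ((5 : ℝ) / 4) * log T)) ^ 3 *
          (16 * (M₁ * M₂) ^ 2 * T ^ ((3 : ℝ) / 2) * (1 + log (T ^ 8)) / T ^ 8) :=
        integral_mul_abs_G12_add_G12_le ℓ₁ ℓ₂ hM₁ hM₂ (one_le_pow₀ hT1) hT1
          (fun x => by positivity) fun x hx =>
            pow_le_pow_left₀ (abs_nonneg _) (abs_Rfull_le ℓ₁ ℓ₂ hM₁ hM₂ hT hx) 3
    _ ≤ (K * (T ^ ((5 : ℝ) / 4) * log T)) ^ 3 *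
          (16 * (M₁ * M₂) ^ 2 * T ^ ((3 : ℝ) / 2) * (((8 : ℕ) + 1) * log T) / T ^ 8) := by
        have hlog := log_nonneg hT1
        gcongr
        exact one_add_log_pow_le 8 hT
    _ = K ^ 3 * (144 * (M₁ * M₂) ^ 2) *
          ((T ^ ((5 : ℝ) / 4)) ^ 3 * T ^ ((3 : ℝ) / 2) / T ^ 8 * log T ^ 4) := by
        push_cast
        ring
    _ = _ := by rw [hpow]

theorem R_cubed_G_moment (M₁ M₂ ℓ₁ ℓ₂ : ℕ) (hM₁ : 0 < M₁) (hM₂ : 0 < M₂)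
    (hℓ₁ : 1 ≤ ℓ₁) (hℓ₁' : ℓ₁ ≤ M₁) (hℓ₂ : 1 ≤ ℓ₂) (hℓ₂' : ℓ₂ ≤ M₂)
    (ε : ℝ) (hε : 0 < ε) :
    ∃ C > 0, ∀ T : ℝ, 10 ≤ T →
      (∫ x in (T/2)..T, |Rfull M₁ M₂ ℓ₁ ℓ₂ T x| ^ 3 *
          |G12 M₁ M₂ ℓ₁ ℓ₂ (T ^ 8) x + G12 M₂ M₁ ℓ₂ ℓ₁ (T ^ 8) x|)
        ≤ C * T ^ (2 - 1/8 + ε) := by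
  obtain ⟨C, hC, hbound⟩ := R_cubed_G_moment_general hM₁ hM₂
  refine ⟨C, hC, fun T hT => (hbound ℓ₁ ℓ₂ T (by linarith [exp_one_lt_d9])).trans ?_⟩
  gcongr
  exact rpow_mul_log_pow_le (by linarith) 4 (by norm_num; linarith)
end
end

section
/- Let k ≥ 2 and 1 ≤ v < k be integers, and let f : ℕ → ℝ be an arithmetic function such that for every ε > 0 one has f(n) ≪_ε n^ε. Then the series s_{k;v}(f) converges absolutely, and for every ε > 0 and every y > 1, |s_{k;v}(f) − s_{k;v}(f;y)| ≪ y^{−1/2+ε}, where the implied constant depends only on k, ε and f. -/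
open Real MeasureTheory Finset
open scoped Classical

noncomputable section

/-- The general term of the series `s_{k;v}(f)`: it is supported on tuples of positive
integers satisfying `√n₁ + ⋯ + √n_v = √n_{v+1} + ⋯ + √n_k`. -/
def skvTerm (k v : ℕ) (f : ℕ → ℝ) (n : Fin k → ℕ) : ℝ :=
  if (∀ i, 1 ≤ n i) ∧
      (∑ i ∈ Finset.univ.filter (fun i : Fin k => (i : ℕ) < v), Real.sqrt (n i))
        = ∑ i ∈ Finset.univ.filter (fun i : Fin k => v ≤ (i : ℕ)), Real.sqrt (n i) then
    (∏ i, f (n i)) * (∏ i, (n i : ℝ)) ^ (-(3:ℝ)/4)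
  else 0

/-!
Square roots of distinct squarefree integers are linearly independent over `ℚ`: up to signs they
are permuted by the Galois group, with distinct sign characters, so Dedekind's theorem applies.
Hence, writing `n i = (m i) ^ 2 * q i` with `q i` squarefree, a relation `∑ i, c i * √(n i) = 0`
splits into one relation between the `m i` for each value of `q`. If no `c i` vanishes, then every
value of `q` is taken at least twice, and every `n i` is at most a constant times another `n j`.

By the first fact, `∏ i, n i` is at least the square of the product of all `m i` and of the distinct
values of `q`, so that `∑ (∏ i, n i) ^ (-a)` over all relations is bounded by finitely many products
of the series `∑ n ^ (-2 * a)` and converges for `a > 1 / 2`. By the second fact, a relation with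
some `n i > y` has `y ^ 2 ≪ ∏ i, n i`; for an exponent `s > a` (here `s = 3 / 4`) the tail
of `∑ (∏ i, n i) ^ (-s)` is therefore `≪ y ^ (-2 * (s - a))`, and `a` may approach `1 / 2`.
-/

section Summation

theorem summable_prod_apply {ι α : Type*} [Fintype ι] {h : α → ℝ}
    (h_nonneg : ∀ a, 0 ≤ h a) (hs : Summable h) :
    Summable fun g : ι → α => ∏ i, h (g i) := by
  refine summable_of_sum_le (c := ∏ _i : ι, ∑' a, h a)
    (fun g => prod_nonneg fun i _ => h_nonneg _) fun u => ?_
  let t : Finset α := u.biUnion fun g => univ.image g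
  have u_subset : u ⊆ Fintype.piFinset fun _ : ι => t := fun g hg =>
    Fintype.mem_piFinset.mpr fun i =>
      mem_biUnion.mpr ⟨g, hg, mem_image_of_mem g (mem_univ i)⟩
  calc ∑ g ∈ u, ∏ i, h (g i) ≤ ∑ g ∈ Fintype.piFinset fun _ : ι => t, ∏ i, h (g i) :=
        sum_le_sum_of_subset_of_nonneg u_subset fun g _ _ => prod_nonneg fun i _ => h_nonneg _
    _ = ∏ _i : ι, ∑ a ∈ t, h a := sum_prod_piFinset t fun _ => h
    _ ≤ ∏ _i : ι, ∑' a, h a := prod_le_prod (fun _ _ => sum_nonneg fun _ _ => h_nonneg _)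
        fun _ _ => hs.sum_le_tsum _ fun _ _ => h_nonneg _

theorem norm_tsum_sub_sum_le {α E : Type*} [NormedAddCommGroup E] [CompleteSpace E]
    {F : α → E} {U : α → ℝ} (hU : Summable U) (hU_nonneg : ∀ a, 0 ≤ U a) (hF : Summable F)
    (B : Finset α) (h : ∀ a ∉ B, ‖F a‖ ≤ U a) :
    ‖∑' a, F a - ∑ a ∈ B, F a‖ ≤ ∑' a, U a := by
  rw [← hF.sum_add_tsum_subtype_compl B, add_sub_cancel_left]
  exact (tsum_of_norm_bounded (hU.subtype _).hasSum fun a => h a a.2).trans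
    (hU.tsum_subtype_le _ _ hU_nonneg)

end Summation

section LinearIndependence

variable {ι K L : Type*} [Field K] [Field L] [Algebra K L]

theorem exists_character_of_sq_mem_range {x : L} (hx : x ≠ 0)
    (hsq : x ^ 2 ∈ Set.range (algebraMap K L)) :
    ∃ χ : (L ≃ₐ[K] L) →* L, ∀ σ, σ x = χ σ * x ∧ χ σ ^ 2 = 1 := by
  obtain ⟨a, ha⟩ := hsq
  have sq_div_eq_one (σ : L ≃ₐ[K] L) : (σ x / x) ^ 2 = 1 := by
    rw [div_pow, ← map_pow, ← ha, σ.commutes, ha, div_self (pow_ne_zero 2 hx)]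
  refine ⟨{ toFun := fun σ => σ x / x, map_one' := by simp [hx], map_mul' := fun σ τ => ?_ },
    fun σ => ⟨(div_mul_cancel₀ _ hx).symm, sq_div_eq_one σ⟩⟩
  change σ (τ x) / x = σ x / x * (τ x / x)
  rcases sq_eq_one_iff.mp (sq_div_eq_one τ) with h | h
  · rw [h, (div_eq_iff hx).mp h, one_mul, mul_one]
  · rw [h, (div_eq_iff hx).mp h, neg_one_mul, map_neg, neg_div, mul_neg_one]

theorem linearIndependent_of_sq_mem_range_of_isGalois [IsGalois K L] {x : ι → L}
    (hx : ∀ i, x i ≠ 0) (hsq : ∀ i, x i ^ 2 ∈ Set.range (algebraMap K L))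
    (hmul : Pairwise fun i j => x i * x j ∉ Set.range (algebraMap K L)) :
    LinearIndependent K x := by
  choose χ hχ using fun i => exists_character_of_sq_mem_range (hx i) (hsq i)
  have χ_injective : Function.Injective χ := by
    intro i j hij
    by_contra hne
    refine hmul hne (IntermediateField.mem_bot.mp
      ((InfiniteGalois.mem_bot_iff_fixed (k := K) (x i * x j)).mpr fun σ => ?_))
    rw [map_mul, (hχ i σ).1, (hχ j σ).1, mul_mul_mul_comm, hij, ← sq, (hχ j σ).2, one_mul]
  rw [linearIndependent_iff']
  intro s g hg i hi
  have hχ_sum : ∑ j ∈ s, (g j • x j) • ⇑(χ j) = 0 := by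
    funext σ
    have := congrArg σ hg
    simp only [map_sum, map_smul, map_zero, (hχ _ σ).1] at this
    simpa [mul_comm, mul_left_comm] using this
  have := linearIndependent_iff'.mp
    ((linearIndependent_monoidHom (L ≃ₐ[K] L) L).comp χ χ_injective) s _ hχ_sum i hi
  exact (smul_eq_zero.mp this).resolve_right (hx i)

theorem linearIndependent_of_sq_mem_range [CharZero K] {x : ι → L}
    (hx : ∀ i, x i ≠ 0) (hsq : ∀ i, x i ^ 2 ∈ Set.range (algebraMap K L))
    (hmul : Pairwise fun i j => x i * x j ∉ Set.range (algebraMap K L)) :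
    LinearIndependent K x := by
  let Ω := AlgebraicClosure L
  let φ : L →ₐ[K] Ω := IsScalarTower.toAlgHom K L Ω
  have : IsAlgClosure K (algebraicClosure K Ω) := algebraicClosure.isAlgClosure K Ω
  have φ_mem (i : ι) : φ (x i) ∈ algebraicClosure K Ω := by
    obtain ⟨a, ha⟩ := hsq i
    refine mem_algebraicClosure_iff.mpr (IsAlgebraic.of_pow two_pos ?_)
    rw [← map_pow, ← ha, φ.commutes]
    exact isAlgebraic_algebraMap a
  let z (i : ι) : algebraicClosure K Ω := ⟨φ (x i), φ_mem i⟩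
  have hz : LinearIndependent K z := by
    refine linearIndependent_of_sq_mem_range_of_isGalois (fun i hi => hx i ?_) (fun i => ?_)
      fun i j hij => ?_
    · exact (map_eq_zero φ).mp (congrArg Subtype.val hi)
    · obtain ⟨a, ha⟩ := hsq i
      exact ⟨a, Subtype.ext (by simpa [z, ha] using (φ.commutes a).symm)⟩
    · rintro ⟨a, ha⟩
      refine hmul hij ⟨a, (algebraMap L Ω).injective ?_⟩
      rw [← IsScalarTower.algebraMap_apply, map_mul]
      exact congrArg Subtype.val ha
  exact (hz.map' (algebraicClosure K Ω).val.toLinearMap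
    (LinearMap.ker_eq_bot.mpr Subtype.val_injective)).of_comp φ.toLinearMap

theorem eq_of_squarefree_of_isSquare_mul {d e : ℕ} (hd : Squarefree d) (he : Squarefree e)
    (h : IsSquare (d * e)) : d = e := by
  obtain ⟨c, hc⟩ := h
  obtain ⟨t, rfl⟩ : d ∣ c := by
    rw [← hd.dvd_pow_iff_dvd two_ne_zero, sq, ← hc]
    exact dvd_mul_right d e
  have e_eq : e = d * (t * t) :=
    Nat.eq_of_mul_eq_mul_left (Nat.pos_of_ne_zero hd.ne_zero) (by rw [hc]; ring)
  have t_eq : t = 1 := Nat.isUnit_iff.mp (he t ⟨d, by rw [e_eq, mul_comm]⟩)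
  simpa [t_eq] using e_eq.symm

theorem linearIndependent_sqrt_squarefree :
    LinearIndependent ℚ fun d : {d : ℕ // Squarefree d} => √(d : ℝ) := by
  refine linearIndependent_of_sq_mem_range (fun d => ?_) (fun d => ⟨d, by simp⟩)
    fun d e hde ⟨r, hr⟩ => hde (Subtype.ext (eq_of_squarefree_of_isSquare_mul d.2 e.2 ?_))
  · exact Real.sqrt_ne_zero'.mpr (by exact_mod_cast Nat.pos_of_ne_zero d.2.ne_zero)
  · by_contra not_square
    refine irrational_sqrt_natCast_iff.mpr not_square ⟨r, ?_⟩
    simpa using hr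

end LinearIndependence

section SquarefreePart

/-- The squarefree part `q` of `n = m ^ 2 * q`; an unspecified squarefree number if `n = 0`. -/
def squarefreePart (n : ℕ) : ℕ := (Nat.sq_mul_squarefree n).choose

/-- The number `m` in the decomposition `n = m ^ 2 * q` with `q` squarefree. -/
def sqrtPart (n : ℕ) : ℕ := (Nat.sq_mul_squarefree n).choose_spec.choose

theorem sqrtPart_sq_mul_squarefreePart (n : ℕ) : sqrtPart n ^ 2 * squarefreePart n = n :=
  (Nat.sq_mul_squarefree n).choose_spec.choose_spec.1

theorem squarefree_squarefreePart (n : ℕ) : Squarefree (squarefreePart n) :=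
  (Nat.sq_mul_squarefree n).choose_spec.choose_spec.2

theorem one_le_squarefreePart (n : ℕ) : 1 ≤ squarefreePart n :=
  Nat.one_le_iff_ne_zero.mpr (squarefree_squarefreePart n).ne_zero

theorem one_le_sqrtPart {n : ℕ} (hn : 1 ≤ n) : 1 ≤ sqrtPart n := by
  rw [Nat.one_le_iff_ne_zero] at hn ⊢
  contrapose! hn
  rw [← sqrtPart_sq_mul_squarefreePart n, hn, zero_pow two_ne_zero, zero_mul]

theorem sqrt_eq_sqrtPart_mul_sqrt (n : ℕ) : √(n : ℝ) = sqrtPart n * √(squarefreePart n : ℝ) := by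
  conv_lhs => rw [← sqrtPart_sq_mul_squarefreePart n]
  push_cast
  rw [Real.sqrt_mul (by positivity), Real.sqrt_sq (by positivity)]

end SquarefreePart

section SqrtRelations

variable {ι : Type*} [Fintype ι]

/-- The solutions in positive integers of the equation `∑ i, c i * √(n i) = 0`. -/
def sqrtRelations (c : ι → ℚ) : Set (ι → ℕ) :=
  {n | (∀ i, 1 ≤ n i) ∧ ∑ i, (c i : ℝ) * √(n i : ℝ) = 0}

theorem sum_mul_sqrtPart_eq_zero {c : ι → ℚ} {n : ι → ℕ}
    (h : ∑ i, (c i : ℝ) * √(n i : ℝ) = 0) (i : ι) :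
    ∑ j with squarefreePart (n j) = squarefreePart (n i), c j * sqrtPart (n j) = 0 := by
  let q (j : ι) : {d : ℕ // Squarefree d} := ⟨squarefreePart (n j), squarefree_squarefreePart _⟩
  have sum_image : ∑ d ∈ univ.image q, (∑ j with q j = d, c j * sqrtPart (n j)) • √(d : ℝ) = 0 := by
    rw [← h, ← sum_fiberwise_of_maps_to fun j _ => mem_image_of_mem q (mem_univ j)]
    refine sum_congr rfl fun d _ => ?_
    rw [sum_smul]
    refine sum_congr rfl fun j hj => ?_
    obtain rfl := (mem_filter.mp hj).2
    rw [sqrt_eq_sqrtPart_mul_sqrt (n j), Rat.smul_def]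
    push_cast
    exact mul_assoc _ _ _
  simpa [q, Subtype.ext_iff] using linearIndependent_iff'.mp linearIndependent_sqrt_squarefree _ _
    sum_image (q i) (mem_image_of_mem q (mem_univ i))

theorem exists_ne_sqrtPart_le {c : ι → ℚ} {n : ι → ℕ} (hn : n ∈ sqrtRelations c) {i : ι}
    (hci : c i ≠ 0) :
    ∃ j ≠ i, squarefreePart (n j) = squarefreePart (n i) ∧
      |c i| * sqrtPart (n i) ≤ (∑ l, |c l|) * sqrtPart (n j) := by
  set S : Finset ι := {j | squarefreePart (n j) = squarefreePart (n i)}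
  have le_sum : |c i| * sqrtPart (n i) ≤ ∑ j ∈ S.erase i, |c j| * sqrtPart (n j) := by
    have sum_eq := add_sum_erase S (fun j => c j * (sqrtPart (n j) : ℚ)) (a := i) (by simp [S])
    rw [sum_mul_sqrtPart_eq_zero hn.2 i] at sum_eq
    have := abs_sum_le_sum_abs (fun j => c j * (sqrtPart (n j) : ℚ)) (S.erase i)
    rw [← abs_neg, neg_eq_of_add_eq_zero_left sum_eq] at this
    simpa [abs_mul] using this
  have pos : 0 < |c i| * sqrtPart (n i) :=
    mul_pos (abs_pos.mpr hci) (by exact_mod_cast one_le_sqrtPart (hn.1 i))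
  obtain ⟨j, hj, j_max⟩ := exists_max_image (S.erase i) (fun j => sqrtPart (n j))
    (nonempty_of_sum_ne_zero (pos.trans_le le_sum).ne')
  refine ⟨j, ne_of_mem_erase hj, (mem_filter.mp (mem_of_mem_erase hj)).2, le_sum.trans ?_⟩
  calc ∑ l ∈ S.erase i, |c l| * (sqrtPart (n l) : ℚ)
      ≤ ∑ l ∈ S.erase i, |c l| * (sqrtPart (n j) : ℚ) := by
        gcongr with l hl
        exact j_max l hl
    _ = (∑ l ∈ S.erase i, |c l|) * sqrtPart (n j) := (sum_mul ..).symm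
    _ ≤ (∑ l, |c l|) * sqrtPart (n j) := by
        gcongr
        exact subset_univ _

theorem sq_le_mul_prod_of_mem_sqrtRelations {c : ι → ℚ} {n : ι → ℕ} (hn : n ∈ sqrtRelations c)
    {i : ι} (hci : c i ≠ 0) :
    (n i : ℝ) ^ 2 ≤ (((∑ l, |c l|) / |c i| : ℚ) : ℝ) ^ 2 * ∏ l, (n l : ℝ) := by
  obtain ⟨j, hji, hq, hm⟩ := exists_ne_sqrtPart_le hn hci
  have hm' : (sqrtPart (n i) : ℚ) ≤ (∑ l, |c l|) / |c i| * sqrtPart (n j) := by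
    rwa [div_mul_eq_mul_div, le_div_iff₀' (abs_pos.mpr hci)]
  have le_other : (n i : ℚ) ≤ ((∑ l, |c l|) / |c i|) ^ 2 * n j := by
    rw [← sqrtPart_sq_mul_squarefreePart (n i), ← sqrtPart_sq_mul_squarefreePart (n j), hq]
    push_cast
    rw [← mul_assoc, ← mul_pow]
    gcongr
  have pair_le : n i * n j ≤ ∏ l, n l := by
    rw [← prod_pair hji.symm]
    exact prod_le_prod_of_subset_of_one_le' (subset_univ _) fun l _ _ => hn.1 l
  have : (n i : ℚ) ^ 2 ≤ ((∑ l, |c l|) / |c i|) ^ 2 * ∏ l, (n l : ℚ) :=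
    calc (n i : ℚ) ^ 2 = n i * n i := sq _
      _ ≤ n i * (((∑ l, |c l|) / |c i|) ^ 2 * n j) := by gcongr
      _ = ((∑ l, |c l|) / |c i|) ^ 2 * (n i * n j) := by ring
      _ ≤ _ := by gcongr; exact_mod_cast pair_le
  exact_mod_cast this

theorem exists_sq_le_mul_prod_sqrtRelations {c : ι → ℚ} (hc : ∀ i, c i ≠ 0) :
    ∃ A : ℝ, 0 < A ∧ ∀ n ∈ sqrtRelations c, ∀ i, (n i : ℝ) ^ 2 ≤ A * ∏ l, (n l : ℝ) := by
  let B (i : ι) : ℝ := (((∑ l, |c l|) / |c i| : ℚ) : ℝ) ^ 2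
  have B_nonneg (i : ι) : 0 ≤ B i := sq_nonneg _
  refine ⟨1 + ∑ i, B i, add_pos_of_pos_of_nonneg one_pos (sum_nonneg fun i _ => B_nonneg i),
    fun n hn i => (sq_le_mul_prod_of_mem_sqrtRelations hn (hc i)).trans ?_⟩
  gcongr
  linarith [single_le_sum (fun j _ => B_nonneg j) (mem_univ i)]

end SqrtRelations

section FiberRep

variable {ι α : Type*}

/-- A choice of one representative in each fiber of `q`, sending `i` to the representative of its
fiber. -/
def fiberRep (q : ι → α) (i : ι) : ι := Set.rangeSplitting q (Set.rangeFactorization q i)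

theorem apply_fiberRep (q : ι → α) (i : ι) : q (fiberRep q i) = q i :=
  Set.apply_rangeSplitting q _

theorem fiberRep_congr {q : ι → α} {i j : ι} (h : q i = q j) : fiberRep q i = fiberRep q j :=
  congrArg (Set.rangeSplitting q) (Subtype.ext h)

theorem fiberRep_fiberRep (q : ι → α) (i : ι) : fiberRep q (fiberRep q i) = fiberRep q i :=
  fiberRep_congr (apply_fiberRep q i)

theorem prod_fiberRep_sq_le_prod [Fintype ι] {q : ι → ℕ} (q_pos : ∀ i, 1 ≤ q i)
    (hq : ∀ i, ∃ j ≠ i, q j = q i) :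
    (∏ i, if fiberRep q i = i then q i else 1) ^ 2 ≤ ∏ i, q i := by
  have prod_eq : ∏ i, q i = ∏ b, q b ^ #{i | fiberRep q i = b} := by
    rw [← prod_fiberwise univ (fiberRep q)]
    refine prod_congr rfl fun b _ => prod_eq_pow_card fun i hi => ?_
    obtain rfl := (mem_filter.mp hi).2
    exact (apply_fiberRep q i).symm
  rw [prod_eq, ← prod_pow]
  refine prod_le_prod (fun b _ => Nat.zero_le _) fun b _ => ?_
  split_ifs with hb
  · obtain ⟨j, hjb, hj⟩ := hq b
    refine Nat.pow_le_pow_right (q_pos b) (Nat.succ_le_of_lt (one_lt_card.mpr ⟨j, ?_, b, ?_, hjb⟩))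
    · simp [fiberRep_congr hj, hb]
    · simp [hb]
  · rw [one_pow]
    exact Nat.one_le_pow _ _ (q_pos b)

end FiberRep

section SquarefreeCode

variable {ι : Type*}

/-- The tuples of positive integers in which every squarefree part occurs at least twice. -/
def squarefreePaired (ι : Type*) : Set (ι → ℕ) :=
  {n | (∀ i, 1 ≤ n i) ∧ ∀ i, ∃ j ≠ i, squarefreePart (n j) = squarefreePart (n i)}

/-- The data which, together with the fibers of the squarefree parts, determine a tuple `n`: on the
left the squarefree part of each fiber, placed at the representative of the fiber and padded by `1`
elsewhere, on the right the square root parts. -/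
def squarefreeCode (n : ι → ℕ) : ι ⊕ ι → ℕ :=
  Sum.elim (fun i => if fiberRep (squarefreePart ∘ n) i = i then squarefreePart (n i) else 1)
    (sqrtPart ∘ n)

theorem fiberRep_squarefreeCode_injective :
    Function.Injective fun n : ι → ℕ => (fiberRep (squarefreePart ∘ n), squarefreeCode n) := by
  intro n n' h
  obtain ⟨hrep, hcode⟩ := Prod.mk.inj h
  have code_rep (n : ι → ℕ) (i : ι) :
      squarefreeCode n (.inl (fiberRep (squarefreePart ∘ n) i)) = squarefreePart (n i) := by
    simpa [squarefreeCode, fiberRep_fiberRep] using apply_fiberRep (squarefreePart ∘ n) i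
  funext i
  have hq : squarefreePart (n i) = squarefreePart (n' i) := by
    rw [← code_rep n, ← code_rep n', hrep, hcode]
  have hm : sqrtPart (n i) = sqrtPart (n' i) := congrFun hcode (.inr i)
  rw [← sqrtPart_sq_mul_squarefreePart (n i), ← sqrtPart_sq_mul_squarefreePart (n' i), hq, hm]

theorem one_le_squarefreeCode {n : ι → ℕ} (hn : ∀ i, 1 ≤ n i) (x : ι ⊕ ι) :
    1 ≤ squarefreeCode n x := by
  rcases x with i | i
  · simp only [squarefreeCode, Sum.elim_inl]
    split_ifs
    · exact one_le_squarefreePart _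
    · exact le_rfl
  · exact one_le_sqrtPart (hn i)

variable [Fintype ι]

theorem prod_squarefreeCode_sq_le {n : ι → ℕ} (hn : n ∈ squarefreePaired ι) :
    (∏ x, squarefreeCode n x) ^ 2 ≤ ∏ i, n i :=
  calc (∏ x, squarefreeCode n x) ^ 2
      = (∏ i, if fiberRep (squarefreePart ∘ n) i = i then squarefreePart (n i) else 1) ^ 2 *
          ∏ i, sqrtPart (n i) ^ 2 := by
        rw [Fintype.prod_sum_type, mul_pow, prod_pow]; rfl
    _ ≤ (∏ i, squarefreePart (n i)) * ∏ i, sqrtPart (n i) ^ 2 :=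
        Nat.mul_le_mul_right _
          (prod_fiberRep_sq_le_prod (fun i => one_le_squarefreePart (n i)) hn.2)
    _ = ∏ i, n i := by
        rw [← prod_mul_distrib]
        exact prod_congr rfl fun i _ => by rw [mul_comm, sqrtPart_sq_mul_squarefreePart]

end SquarefreeCode

section Summability

variable {ι : Type*} [Fintype ι]

theorem summable_squarefreePaired_rpow {a : ℝ} (ha : 1 / 2 < a) :
    Summable ((squarefreePaired ι).indicator fun n => (∏ i, (n i : ℝ)) ^ (-a)) := by
  have summable_codes : Summable fun g : ι ⊕ ι → ℕ => ∏ x, (g x : ℝ) ^ (-(2 * a)) :=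
    summable_prod_apply (h := fun m : ℕ => (m : ℝ) ^ (-(2 * a))) (fun m => by positivity)
      (Real.summable_nat_rpow.mpr (by linarith))
  have summable_reps : Summable fun _ : ι → ι => (1 : ℝ) := .of_finite
  have summable_pairs := summable_reps.mul_of_nonneg summable_codes (fun _ => zero_le_one)
    fun g => prod_nonneg fun x _ => by positivity
  refine (summable_pairs.comp_injective fiberRep_squarefreeCode_injective).of_nonneg_of_le
    (Set.indicator_nonneg fun n _ => by positivity)
    (Set.indicator_le' (fun n hn => ?_) fun n _ => ?_)
  · have prod_code_pos : (0 : ℝ) < ∏ x, (squarefreeCode n x : ℝ) :=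
      prod_pos fun x _ => by exact_mod_cast one_le_squarefreeCode hn.1 x
    have sq_le : (∏ x, (squarefreeCode n x : ℝ)) ^ 2 ≤ ∏ i, (n i : ℝ) := by
      exact_mod_cast prod_squarefreeCode_sq_le hn
    calc (∏ i, (n i : ℝ)) ^ (-a) ≤ ((∏ x, (squarefreeCode n x : ℝ)) ^ 2) ^ (-a) :=
          Real.rpow_le_rpow_of_nonpos (by positivity) sq_le (by linarith)
      _ = (∏ x, (squarefreeCode n x : ℝ)) ^ (-(2 * a)) := by
          rw [← Real.rpow_natCast_mul prod_code_pos.le, Nat.cast_two, mul_neg]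
      _ = 1 * ∏ x, (squarefreeCode n x : ℝ) ^ (-(2 * a)) := by
          rw [one_mul, Real.finsetProd_rpow _ _ fun x _ => by positivity]
  · exact mul_nonneg zero_le_one (prod_nonneg fun x _ => by positivity)

theorem sqrtRelations_subset_squarefreePaired {c : ι → ℚ} (hc : ∀ i, c i ≠ 0) :
    sqrtRelations c ⊆ squarefreePaired ι := fun _ hn =>
  ⟨hn.1, fun i =>
    let ⟨j, hji, hq, _⟩ := exists_ne_sqrtPart_le hn (hc i)
    ⟨j, hji, hq⟩⟩

theorem summable_sqrtRelations_rpow {c : ι → ℚ} (hc : ∀ i, c i ≠ 0) {a : ℝ} (ha : 1 / 2 < a) :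
    Summable ((sqrtRelations c).indicator fun n => (∏ i, (n i : ℝ)) ^ (-a)) :=
  (summable_squarefreePaired_rpow ha).of_nonneg_of_le
    (Set.indicator_nonneg fun n _ => by positivity)
    (Set.indicator_le_indicator_of_subset (sqrtRelations_subset_squarefreePaired hc)
      fun n => by positivity)

end Summability

section Truncation

variable {ι 𝕜 : Type*} [Fintype ι] [RCLike 𝕜] {c : ι → ℚ} {s : ℝ} {f : ι → ℕ → 𝕜}

/-- The growth condition `f m ≪ m ^ ε` for every `ε > 0`, on the positive integers. -/
def SubpolynomialGrowth (f : ℕ → 𝕜) : Prop :=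
  ∀ ε : ℝ, 0 < ε → ∃ C : ℝ, ∀ m : ℕ, 1 ≤ m → ‖f m‖ ≤ C * (m : ℝ) ^ ε

theorem exists_norm_prod_le (hf : ∀ i, SubpolynomialGrowth (f i)) {δ : ℝ} (hδ : 0 < δ) :
    ∃ C : ℝ, 0 ≤ C ∧ ∀ n : ι → ℕ, (∀ i, 1 ≤ n i) →
      ‖∏ i, f i (n i)‖ ≤ C * (∏ i, (n i : ℝ)) ^ δ := by
  choose C hC using fun i => hf i δ hδ
  have C_nonneg (i : ι) : 0 ≤ C i := by simpa using (norm_nonneg _).trans (hC i 1 le_rfl)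
  refine ⟨∏ i, C i, prod_nonneg fun i _ => C_nonneg i, fun n hn => ?_⟩
  rw [norm_prod, ← Real.finsetProd_rpow _ _ fun i _ => by positivity, ← prod_mul_distrib]
  exact prod_le_prod (fun i _ => norm_nonneg _) fun i _ => hC i (n i) (hn i)

/-- The general term of the series `∑ (∏ i, f i (n i)) / (∏ i, n i) ^ s` over the positive integer
solutions of `∑ i, c i * √(n i) = 0`. -/
def sqrtRelationTerm (c : ι → ℚ) (s : ℝ) (f : ι → ℕ → 𝕜) : (ι → ℕ) → 𝕜 :=
  (sqrtRelations c).indicator fun n => ((∏ i, (n i : ℝ)) ^ (-s)) • ∏ i, f i (n i)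

theorem exists_norm_sqrtRelationTerm_le (c : ι → ℚ) (hf : ∀ i, SubpolynomialGrowth (f i))
    {t : ℝ} (hts : t < s) :
    ∃ C : ℝ, 0 ≤ C ∧ ∀ n, ‖sqrtRelationTerm c s f n‖ ≤
      C * (sqrtRelations c).indicator (fun n => (∏ i, (n i : ℝ)) ^ (-t)) n := by
  obtain ⟨C, C_nonneg, hC⟩ := exists_norm_prod_le hf (sub_pos.mpr hts)
  refine ⟨C, C_nonneg, fun n => ?_⟩
  by_cases hn : n ∈ sqrtRelations c
  · have prod_n_pos : (0 : ℝ) < ∏ i, (n i : ℝ) := prod_pos fun i _ => by exact_mod_cast hn.1 i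
    rw [sqrtRelationTerm, Set.indicator_of_mem hn, Set.indicator_of_mem hn, norm_smul,
      Real.norm_of_nonneg (by positivity)]
    calc (∏ i, (n i : ℝ)) ^ (-s) * ‖∏ i, f i (n i)‖
        ≤ (∏ i, (n i : ℝ)) ^ (-s) * (C * (∏ i, (n i : ℝ)) ^ (s - t)) := by
          gcongr
          exact hC n hn.1
      _ = C * (∏ i, (n i : ℝ)) ^ (-t) := by
          rw [mul_left_comm, ← Real.rpow_add prod_n_pos, neg_add_eq_sub, sub_sub_cancel_left]
  · simp [sqrtRelationTerm, hn]

theorem summable_norm_sqrtRelationTerm (hc : ∀ i, c i ≠ 0) (hs : 1 / 2 < s)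
    (hf : ∀ i, SubpolynomialGrowth (f i)) :
    Summable fun n => ‖sqrtRelationTerm c s f n‖ := by
  obtain ⟨t, ht, hts⟩ := exists_between hs
  obtain ⟨C, -, hC⟩ := exists_norm_sqrtRelationTerm_le c hf hts
  exact ((summable_sqrtRelations_rpow hc ht).mul_left C).of_nonneg_of_le
    (fun n => norm_nonneg _) hC

theorem exists_rpow_neg_le_of_notMem_piFinset [DecidableEq ι] (hc : ∀ i, c i ≠ 0) {a t : ℝ}
    (hat : a ≤ t) :
    ∃ D : ℝ, 0 ≤ D ∧ ∀ y : ℝ, 0 < y → ∀ n ∈ sqrtRelations c,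
      n ∉ Fintype.piFinset (fun _ : ι => Finset.Icc 1 ⌊y⌋₊) →
      (∏ i, (n i : ℝ)) ^ (-t) ≤ D * y ^ (2 * (a - t)) * (∏ i, (n i : ℝ)) ^ (-a) := by
  obtain ⟨A, A_pos, hA⟩ := exists_sq_le_mul_prod_sqrtRelations hc
  refine ⟨(A ^ (a - t))⁻¹, by positivity, fun y hy n hn hnB => ?_⟩
  obtain ⟨i, hi⟩ : ∃ i, ⌊y⌋₊ < n i := by
    by_contra! h
    exact hnB (Fintype.mem_piFinset.mpr fun i => mem_Icc.mpr ⟨hn.1 i, h i⟩)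
  have sq_div_le : y ^ 2 / A ≤ ∏ l, (n l : ℝ) := by
    rw [div_le_iff₀' A_pos]
    exact (pow_le_pow_left₀ hy.le ((Nat.floor_lt hy.le).mp hi).le 2).trans (hA n hn i)
  have sq_div_pos : 0 < y ^ 2 / A := by positivity
  calc (∏ i, (n i : ℝ)) ^ (-t)
      = (∏ i, (n i : ℝ)) ^ (a - t) * (∏ i, (n i : ℝ)) ^ (-a) := by
        rw [← Real.rpow_add (sq_div_pos.trans_le sq_div_le)]
        ring_nf
    _ ≤ (y ^ 2 / A) ^ (a - t) * (∏ i, (n i : ℝ)) ^ (-a) := by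
        refine mul_le_mul_of_nonneg_right ?_ (by positivity)
        exact Real.rpow_le_rpow_of_nonpos sq_div_pos sq_div_le (by linarith)
    _ = (A ^ (a - t))⁻¹ * y ^ (2 * (a - t)) * (∏ i, (n i : ℝ)) ^ (-a) := by
        rw [Real.div_rpow (by positivity) A_pos.le, ← Real.rpow_natCast_mul hy.le, Nat.cast_two,
          div_eq_inv_mul]

theorem exists_norm_tsum_sqrtRelationTerm_sub_sum_le [DecidableEq ι] (hc : ∀ i, c i ≠ 0)
    (hs : 1 / 2 < s) (hf : ∀ i, SubpolynomialGrowth (f i)) {ε : ℝ} (hε : 0 < ε) :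
    ∃ C : ℝ, ∀ y : ℝ, 1 < y →
      ‖(∑' n, sqrtRelationTerm c s f n)
          - ∑ n ∈ Fintype.piFinset (fun _ : ι => Finset.Icc 1 ⌊y⌋₊), sqrtRelationTerm c s f n‖
        ≤ C * y ^ (1 - 2 * s + ε) := by
  obtain ⟨δ, δ_pos, hδ⟩ : ∃ δ > 0, 4 * δ ≤ min ε (s - 1 / 2) :=
    ⟨min ε (s - 1 / 2) / 4, by have := lt_min hε (sub_pos.mpr hs); positivity, by linarith⟩
  have hδε : 4 * δ ≤ ε := hδ.trans (min_le_left _ _)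
  have hδs : 4 * δ ≤ s - 1 / 2 := hδ.trans (min_le_right _ _)
  obtain ⟨C, C_nonneg, hC⟩ := exists_norm_sqrtRelationTerm_le c hf (sub_lt_self s δ_pos)
  obtain ⟨D, D_nonneg, hD⟩ := exists_rpow_neg_le_of_notMem_piFinset hc
    (by linarith : 1 / 2 + δ ≤ s - δ)
  let U := (sqrtRelations c).indicator fun n => (∏ i, (n i : ℝ)) ^ (-(1 / 2 + δ))
  have U_nonneg (n : ι → ℕ) : 0 ≤ U n := Set.indicator_nonneg (fun n _ => by positivity) n
  have U_summable : Summable U := summable_sqrtRelations_rpow hc (by linarith)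
  refine ⟨C * D * ∑' n, U n, fun y hy => ?_⟩
  have y_pos : 0 < y := one_pos.trans hy
  have term_le (n : ι → ℕ) (hn : n ∉ Fintype.piFinset fun _ : ι => Finset.Icc 1 ⌊y⌋₊) :
      ‖sqrtRelationTerm c s f n‖ ≤ C * D * y ^ (1 - 2 * s + ε) * U n := by
    by_cases hmem : n ∈ sqrtRelations c
    · refine (hC n).trans ?_
      simp only [U, Set.indicator_of_mem hmem, mul_assoc]
      gcongr
      refine (hD y y_pos n hmem hn).trans ?_
      rw [mul_assoc]
      gcongr
      · exact hy.le
      · linarith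
    · simp [sqrtRelationTerm, U, hmem]
  refine (norm_tsum_sub_sum_le (U_summable.mul_left _) (fun n => ?_)
    (summable_norm_sqrtRelationTerm hc hs hf).of_norm _ term_le).trans_eq ?_
  · exact mul_nonneg (by positivity) (U_nonneg n)
  · rw [tsum_mul_left]
    ring

theorem skv_absolutely_convergent_and_truncation_general [DecidableEq ι]
    (hc : ∀ i, c i ≠ 0) (hs : 1 / 2 < s) (hf : ∀ i, SubpolynomialGrowth (f i)) :
    Summable (fun n => ‖sqrtRelationTerm c s f n‖) ∧
    ∀ ε : ℝ, 0 < ε → ∃ C : ℝ, ∀ y : ℝ, 1 < y →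
      ‖(∑' n, sqrtRelationTerm c s f n)
          - ∑ n ∈ Fintype.piFinset (fun _ : ι => Finset.Icc 1 ⌊y⌋₊), sqrtRelationTerm c s f n‖
        ≤ C * y ^ (1 - 2 * s + ε) :=
  ⟨summable_norm_sqrtRelationTerm hc hs hf,
    fun _ hε => exists_norm_tsum_sqrtRelationTerm_sub_sum_le hc hs hf hε⟩

end Truncation

/-- The coefficients of `√n₁ + ⋯ + √n_v - √n_{v+1} - ⋯ - √n_k`. -/
def splitSign (k v : ℕ) (i : Fin k) : ℚ := if (i : ℕ) < v then 1 else -1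

theorem splitSign_ne_zero (k v : ℕ) (i : Fin k) : splitSign k v i ≠ 0 := by
  unfold splitSign
  split_ifs <;> norm_num

theorem sum_splitSign_mul {k : ℕ} (v : ℕ) (x : Fin k → ℝ) :
    ∑ i, (splitSign k v i : ℝ) * x i =
      ∑ i ∈ univ.filter (fun i : Fin k => (i : ℕ) < v), x i
        - ∑ i ∈ univ.filter (fun i : Fin k => v ≤ (i : ℕ)), x i := by
  simp [splitSign, apply_ite, ite_mul, sum_ite, sub_eq_add_neg]

theorem skvTerm_eq_sqrtRelationTerm (k v : ℕ) (f : ℕ → ℝ) :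
    skvTerm k v f = sqrtRelationTerm (splitSign k v) (3 / 4) fun _ => f := by
  funext n
  simp only [skvTerm, sqrtRelationTerm, sqrtRelations, Set.indicator_apply, Set.mem_ofPred_eq,
    sum_splitSign_mul, sub_eq_zero, smul_eq_mul, mul_comm, neg_div]

theorem skv_absolutely_convergent_and_truncation
    (k v : ℕ) (hk : 2 ≤ k) (hv : 1 ≤ v) (hvk : v < k) (f : ℕ → ℝ)
    (hf : ∀ ε : ℝ, 0 < ε → ∃ Cf : ℝ, ∀ n : ℕ, 1 ≤ n → |f n| ≤ Cf * (n : ℝ) ^ ε) :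
    Summable (fun n : Fin k → ℕ => |skvTerm k v f n|) ∧
    ∀ ε : ℝ, 0 < ε → ∃ C : ℝ, ∀ y : ℝ, 1 < y →
      |(∑' n : Fin k → ℕ, skvTerm k v f n)
          - ∑ n ∈ Fintype.piFinset (fun _ : Fin k => Finset.Icc 1 ⌊y⌋₊), skvTerm k v f n|
        ≤ C * y ^ (-(1:ℝ)/2 + ε) := by
  rw [skvTerm_eq_sqrtRelationTerm, show -(1 : ℝ) / 2 = 1 - 2 * (3 / 4) by norm_num]
  simpa only [Real.norm_eq_abs] using skv_absolutely_convergent_and_truncation_general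
    (splitSign_ne_zero k v) (s := 3 / 4) (by norm_num) (f := fun _ => f) fun _ => hf
end
end

section
/- Fix constants c₂ ≥ c₁ > 0 and ε > 0. There is a constant C (depending only on c₁, c₂, ε) such that: if N, M, K, L are real numbers with 1 ≤ N ≤ M, 1 ≤ K ≤ L, N ≤ K, c₁L ≤ M ≤ c₂L, and 0 < Δ ≤ c₂ L^{1/2}, then the number 𝒜₁(N,M,K,L;Δ) of quadruples (n,m,k,ℓ) of positive integers with N < n ≤ 2N, M < m ≤ 2M, K < k ≤ 2K, L < ℓ ≤ 2L and 0 < |√n + √m − √k − √ℓ| < Δ satisfies 𝒜₁(N,M,K,L;Δ) ≤ C(Δ L^{1/2} NMK + NK L^{1/2+ε}). In particular, if in addition Δ L^{1/2} ≥ 1, then 𝒜₁(N,M,K,L;Δ) ≤ C · Δ L^{1/2} NMK. -/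
open Real MeasureTheory Finset
open scoped Classical

noncomputable section

/-- The set of quadruples counted by `𝒜₁(N,M,K,L;Δ)`. -/
def A1set (N M K L Δ : ℝ) : Set (ℕ × ℕ × ℕ × ℕ) :=
  {q | N < (q.1 : ℝ) ∧ (q.1 : ℝ) ≤ 2 * N ∧ M < (q.2.1 : ℝ) ∧ (q.2.1 : ℝ) ≤ 2 * M ∧
       K < (q.2.2.1 : ℝ) ∧ (q.2.2.1 : ℝ) ≤ 2 * K ∧ L < (q.2.2.2 : ℝ) ∧ (q.2.2.2 : ℝ) ≤ 2 * L ∧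
       0 < |Real.sqrt q.1 + Real.sqrt q.2.1 - Real.sqrt q.2.2.1 - Real.sqrt q.2.2.2| ∧
       |Real.sqrt q.1 + Real.sqrt q.2.1 - Real.sqrt q.2.2.1 - Real.sqrt q.2.2.2| < Δ}

/-!
Fix `n` and `k`, and put `α = √n - √k`, so that `√l - √m` lies within `Δ` of `α`. On the curve
`√l - √m = α` one has `m = ((u - α ^ 2) / (2 * α)) ^ 2` with `u = l - m`, which is quadratic in `u`.
The pairs `(l, m)` thus correspond to integer points near a parabola with leading coefficient
`1 / (4 * α ^ 2)`, and a Fejér kernel reduces their count to quadratic exponential sums. Weyl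
differencing bounds the squares of these by sums of `min (W, 1 / ‖h / q‖)`, where `q` is real, and
the divisor bound controls how often each product of a frequency and a difference occurs.
-/

open scoped FourierTransform

section DivisorBound

lemma natCast_add_one_le_pow {x : ℝ} (hx : 2 ≤ x) (a : ℕ) : (a : ℝ) + 1 ≤ x ^ a := by
  have hbern := one_add_mul_le_pow (a := x - 1) (by linarith) a
  rw [add_sub_cancel] at hbern
  nlinarith [Nat.cast_nonneg (α := ℝ) a]

lemma natCast_add_one_le_mul_pow {δ x : ℝ} (hδ : 0 < δ) (hx : 1 + δ ≤ x) (a : ℕ) :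
    (a : ℝ) + 1 ≤ (1 + 1 / δ) * x ^ a := by
  have hbern := one_add_mul_le_pow (a := δ) (by linarith) a
  calc (a : ℝ) + 1 ≤ a + 1 + (1 / δ + a * δ) := le_add_of_nonneg_right (by positivity)
    _ = (1 + 1 / δ) * (1 + a * δ) := by field_simp; ring
    _ ≤ (1 + 1 / δ) * x ^ a := by
      gcongr
      exact hbern.trans (pow_le_pow_left₀ (by positivity) hx a)

lemma prod_primeFactors_rpow_pow_factorization {n : ℕ} (hn : n ≠ 0) (ε : ℝ) :
    ∏ p ∈ n.primeFactors, ((p : ℝ) ^ ε) ^ n.factorization p = (n : ℝ) ^ ε := by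
  have hpow (p : ℕ) : ((p : ℝ) ^ ε) ^ n.factorization p = ((p : ℝ) ^ n.factorization p) ^ ε := by
    rw [← rpow_mul_natCast p.cast_nonneg, ← rpow_natCast_mul p.cast_nonneg, mul_comm]
  simp_rw [hpow]
  rw [finsetProd_rpow _ _ fun _ _ ↦ by positivity]
  congr 1
  exact_mod_cast Nat.prod_factorization_pow_eq_self hn

lemma prod_ite_lt_le_pow {B : ℝ} (hB : 1 ≤ B) (P : ℕ) (s : Finset ℕ) :
    ∏ p ∈ s, (if p < P then B else 1) ≤ B ^ P := by
  rw [← prod_filter, prod_const]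
  refine pow_le_pow_right₀ hB ?_
  calc #{p ∈ s | p < P} ≤ #(range P) :=
        card_le_card fun p hp ↦ mem_range.2 (mem_filter.1 hp).2
    _ = P := card_range P

-- Only the finitely many primes `p` with `p ^ ε < 2` have a local factor exceeding `1`.
theorem exists_card_divisors_le_mul_rpow {ε : ℝ} (hε : 0 < ε) :
    ∃ C : ℝ, 1 ≤ C ∧ ∀ n : ℕ, n ≠ 0 → (#n.divisors : ℝ) ≤ C * (n : ℝ) ^ ε := by
  obtain ⟨P, hP⟩ := exists_nat_ge ((2 : ℝ) ^ ε⁻¹)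
  have hδ : 0 < (2 : ℝ) ^ ε - 1 := sub_pos.2 (one_lt_rpow one_lt_two hε)
  set B : ℝ := 1 + 1 / ((2 : ℝ) ^ ε - 1)
  have hB1 : 1 ≤ B := le_add_of_nonneg_right (by positivity)
  refine ⟨B ^ P, one_le_pow₀ hB1, fun n hn ↦ ?_⟩
  have hlocal : ∀ p ∈ n.primeFactors, (n.factorization p : ℝ) + 1 ≤
      (if p < P then B else 1) * ((p : ℝ) ^ ε) ^ n.factorization p := by
    intro p hp
    have hp2 : (2 : ℝ) ≤ p := mod_cast (Nat.prime_of_mem_primeFactors hp).two_le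
    split_ifs with h
    · refine natCast_add_one_le_mul_pow hδ ?_ _
      rw [add_sub_cancel]
      gcongr
    · rw [one_mul]
      refine natCast_add_one_le_pow ?_ _
      have hPp : (P : ℝ) ≤ p := mod_cast not_lt.1 h
      exact (rpow_inv_le_iff_of_pos zero_le_two p.cast_nonneg hε).1 (hP.trans hPp)
  rw [Nat.card_divisors hn]
  push_cast
  calc ∏ p ∈ n.primeFactors, ((n.factorization p : ℝ) + 1)
      ≤ ∏ p ∈ n.primeFactors,
          ((if p < P then B else 1) * ((p : ℝ) ^ ε) ^ n.factorization p) :=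
        prod_le_prod (fun _ _ ↦ by positivity) hlocal
    _ = (∏ p ∈ n.primeFactors, (if p < P then B else 1)) * (n : ℝ) ^ ε := by
        rw [prod_mul_distrib, prod_primeFactors_rpow_pow_factorization hn]
    _ ≤ B ^ P * (n : ℝ) ^ ε := by
        gcongr
        exact prod_ite_lt_le_pow hB1 P _

lemma sum_sum_mul_le_sum_card_divisors_mul {f : ℕ → ℝ} (hf : ∀ t, 0 ≤ f t) (H W : ℕ) :
    ∑ h ∈ Ico 1 H, ∑ r ∈ Ico 1 W, f (h * r) ≤ ∑ t ∈ Ico 1 (H * W), #t.divisors * f t := by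
  have hmaps : ∀ x ∈ Ico 1 H ×ˢ Ico 1 W, x.1 * x.2 ∈ Ico 1 (H * W) := by
    simp only [mem_product, mem_Ico]
    rintro x ⟨⟨h1, hH⟩, r1, hW⟩
    exact ⟨Nat.mul_pos h1 r1, Nat.mul_lt_mul'' hH hW⟩
  rw [← sum_product', ← sum_fiberwise_of_maps_to hmaps]
  refine sum_le_sum fun t ht ↦ ?_
  have hfibre : #{x ∈ Ico 1 H ×ˢ Ico 1 W | x.1 * x.2 = t} ≤ #t.divisors := by
    have ht0 : t ≠ 0 := by have := mem_Ico.1 ht; lia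
    calc #{x ∈ Ico 1 H ×ˢ Ico 1 W | x.1 * x.2 = t} ≤ #t.divisorsAntidiagonal :=
          card_le_card fun x hx ↦ Nat.mem_divisorsAntidiagonal.2 ⟨(mem_filter.1 hx).2, ht0⟩
      _ = #t.divisors := by rw [← Nat.map_div_right_divisors, card_map]
  calc ∑ x ∈ Ico 1 H ×ˢ Ico 1 W with x.1 * x.2 = t, f (x.1 * x.2)
      = ∑ x ∈ Ico 1 H ×ˢ Ico 1 W with x.1 * x.2 = t, f t :=
        sum_congr rfl fun x hx ↦ by rw [(mem_filter.1 hx).2]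
    _ = #{x ∈ Ico 1 H ×ˢ Ico 1 W | x.1 * x.2 = t} * f t := by rw [sum_const, nsmul_eq_mul]
    _ ≤ #t.divisors * f t := by
        gcongr
        exact hf t

end DivisorBound

section ExponentialSums

lemma fourierChar_intCast (m : ℤ) : 𝐞 (m : ℝ) = 1 := by
  ext
  rw [fourierChar_apply, Circle.coe_one, Complex.exp_eq_one_iff]
  exact ⟨m, by push_cast; ring⟩

lemma fourierChar_mul_sub_intCast (n : ℕ) (x : ℝ) (m : ℤ) : 𝐞 (n * (x - m)) = 𝐞 (n * x) := by
  rw [mul_sub, AddChar.map_sub_eq_div, ← Int.cast_natCast n, ← Int.cast_mul, fourierChar_intCast,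
    div_one]

lemma re_fourierChar (x : ℝ) : (𝐞 x : ℂ).re = cos (2 * π * x) := by
  rw [fourierChar_apply, Complex.exp_ofReal_mul_I_re]

lemma inner_fourierChar (x y : ℝ) : inner ℝ (𝐞 x : ℂ) (𝐞 y) = (𝐞 (y - x) : ℂ).re := by
  rw [Complex.inner, AddChar.map_sub_eq_div, div_eq_mul_inv, Circle.coe_mul, Circle.coe_inv_eq_conj]

lemma four_mul_abs_sub_round_le_norm (θ : ℝ) : 4 * |θ - round θ| ≤ ‖(𝐞 θ : ℂ) - 1‖ := by
  have hshift : 𝐞 θ = 𝐞 (θ - round θ) := by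
    rw [AddChar.map_sub_eq_div, fourierChar_intCast, div_one]
  set x := θ - round θ
  have hx : |x| ≤ 1 / 2 := abs_sub_round θ
  have habs : |2 * π * x / 2| = π * |x| := by
    rw [mul_assoc, mul_div_cancel_left₀ _ two_ne_zero, abs_mul, abs_of_pos pi_pos]
  have hsin : 2 / π * |2 * π * x / 2| ≤ |sin (2 * π * x / 2)| :=
    mul_abs_le_abs_sin (by rw [habs]; nlinarith [pi_pos])
  calc 4 * |x| = 2 * (2 / π * |2 * π * x / 2|) := by rw [habs]; field_simp; ring
    _ ≤ 2 * |sin (2 * π * x / 2)| := by gcongr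
    _ = ‖(𝐞 θ : ℂ) - 1‖ := by
      rw [hshift, fourierChar_apply, mul_comm _ Complex.I, Complex.norm_exp_I_mul_ofReal_sub_one,
        norm_mul, norm_two, norm_eq_abs]

lemma norm_sum_fourierChar_le (n : ℕ) (f : ℕ → ℝ) : ‖∑ i ∈ range n, (𝐞 (f i) : ℂ)‖ ≤ n :=
  (norm_sum_le_of_le _ fun _ _ ↦ (Circle.norm_coe _).le).trans_eq (by simp)

lemma norm_sum_fourierChar_mul_abs_sub_round_le (n : ℕ) (θ c : ℝ) :
    ‖∑ i ∈ range n, (𝐞 (i * θ + c) : ℂ)‖ * |θ - round θ| ≤ 1 / 2 := by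
  have hgeom : ∑ i ∈ range n, (𝐞 (i * θ + c) : ℂ) = (∑ i ∈ range n, (𝐞 θ : ℂ) ^ i) * 𝐞 c := by
    rw [sum_mul]
    refine sum_congr rfl fun i _ ↦ ?_
    rw [AddChar.map_add_eq_mul, ← nsmul_eq_mul, AddChar.map_nsmul_eq_pow, Circle.coe_mul,
      Circle.coe_pow]
  rw [hgeom, norm_mul, Circle.norm_coe, mul_one]
  have htel : ‖∑ i ∈ range n, (𝐞 θ : ℂ) ^ i‖ * ‖(𝐞 θ : ℂ) - 1‖ ≤ 2 := by
    rw [← norm_mul, geom_sum_mul]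
    calc ‖(𝐞 θ : ℂ) ^ n - 1‖ ≤ ‖(𝐞 θ : ℂ) ^ n‖ + ‖(1 : ℂ)‖ := norm_sub_le _ _
      _ = 2 := by rw [norm_pow, Circle.norm_coe]; norm_num
  nlinarith [mul_le_mul_of_nonneg_left (four_mul_abs_sub_round_le_norm θ)
    (norm_nonneg (∑ i ∈ range n, (𝐞 θ : ℂ) ^ i))]

lemma sq_norm_sum_range_le_two_mul_sum_inner {E : Type*} [NormedAddCommGroup E]
    [InnerProductSpace ℝ E] (a : ℕ → E) (n : ℕ) :
    ‖∑ i ∈ range n, a i‖ ^ 2 ≤ 2 * ∑ m ∈ range n, ∑ i ∈ range (m + 1), inner ℝ (a i) (a m) := by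
  induction n with
  | zero => simp
  | succ n ih =>
    rw [sum_range_succ, sum_range_succ _ n, norm_add_sq_real, sum_range_succ _ n, ← sum_inner,
      real_inner_self_eq_norm_sq]
    linarith [sq_nonneg ‖a n‖]

theorem sq_norm_sum_range_le_two_mul_sum_inner_shift {E : Type*} [NormedAddCommGroup E]
    [InnerProductSpace ℝ E] (a : ℕ → E) (n : ℕ) :
    ‖∑ i ∈ range n, a i‖ ^ 2 ≤
      2 * ∑ r ∈ range n, ∑ i ∈ range (n - r), inner ℝ (a i) (a (r + i)) := by
  refine (sq_norm_sum_range_le_two_mul_sum_inner a n).trans_eq ?_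
  rw [← sum_range_diag_flip n fun r i ↦ inner ℝ (a i) (a (r + i))]
  congr 1
  refine sum_congr rfl fun m _ ↦ ?_
  rw [← sum_range_reflect]
  refine sum_congr rfl fun k hk ↦ ?_
  have hkm : k ≤ m := Nat.lt_succ_iff.1 (mem_range.1 hk)
  rw [Nat.add_sub_cancel, Nat.add_sub_cancel' hkm]

lemma sq_div_two_le_sq_norm_sum_fourierChar {x : ℝ} {n : ℕ} (h : n * |x - round x| ≤ 1 / 8) :
    (n : ℝ) ^ 2 / 2 ≤ ‖∑ j ∈ range n, (𝐞 (j * x) : ℂ)‖ ^ 2 := by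
  have hre : ∀ j ∈ range n, √2 / 2 ≤ (𝐞 (j * x) : ℂ).re := by
    intro j hj
    have hjn : (j : ℝ) ≤ n := mod_cast (mem_range.1 hj).le
    have hsmall : |2 * π * (j * (x - round x))| ≤ π / 4 := by
      rw [abs_mul, abs_of_pos two_pi_pos, abs_mul, Nat.abs_cast]
      nlinarith [mul_le_mul_of_nonneg_right hjn (abs_nonneg (x - round x)), pi_pos]
    rw [← fourierChar_mul_sub_intCast j x (round x), re_fourierChar, ← cos_abs, ← cos_pi_div_four]
    exact cos_le_cos_of_nonneg_of_le_pi (abs_nonneg _) (by linarith [pi_pos]) hsmall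
  have hsum : n * (√2 / 2) ≤ ‖∑ j ∈ range n, (𝐞 (j * x) : ℂ)‖ :=
    calc n * (√2 / 2) = ∑ j ∈ range n, √2 / 2 := by simp
      _ ≤ (∑ j ∈ range n, (𝐞 (j * x) : ℂ)).re := by
        rw [Complex.re_sum]
        exact sum_le_sum hre
      _ ≤ ‖∑ j ∈ range n, (𝐞 (j * x) : ℂ)‖ := Complex.re_le_norm _
  calc (n : ℝ) ^ 2 / 2 = (n * (√2 / 2)) ^ 2 := by
        rw [mul_pow, div_pow, sq_sqrt zero_le_two]; ring
    _ ≤ ‖∑ j ∈ range n, (𝐞 (j * x) : ℂ)‖ ^ 2 := by gcongr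

lemma sq_norm_sum_fourierChar_mul_le (n : ℕ) (x : ℝ) :
    ‖∑ j ∈ range n, (𝐞 (j * x) : ℂ)‖ ^ 2 ≤
      2 * ∑ r ∈ range n, ((n - r : ℕ) : ℝ) * (𝐞 (r * x) : ℂ).re := by
  refine (sq_norm_sum_range_le_two_mul_sum_inner_shift (fun j ↦ (𝐞 (j * x) : ℂ)) n).trans_eq ?_
  congr 1
  refine sum_congr rfl fun r _ ↦ ?_
  have hterm (i : ℕ) : inner ℝ (𝐞 (i * x) : ℂ) (𝐞 ((r + i : ℕ) * x)) = (𝐞 (r * x) : ℂ).re := by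
    rw [inner_fourierChar]
    congr 3
    push_cast
    ring
  simp_rw [hterm, sum_const, card_range, nsmul_eq_mul]

lemma sum_sq_norm_sum_fourierChar_le {ι : Type*} (s : Finset ι) (φ : ι → ℝ) (n : ℕ) :
    ∑ i ∈ s, ‖∑ j ∈ range n, (𝐞 (j * φ i) : ℂ)‖ ^ 2 ≤
      2 * n * ∑ h ∈ range n, ‖∑ i ∈ s, (𝐞 (h * φ i) : ℂ)‖ :=
  calc ∑ i ∈ s, ‖∑ j ∈ range n, (𝐞 (j * φ i) : ℂ)‖ ^ 2
      ≤ ∑ i ∈ s, 2 * ∑ h ∈ range n, ((n - h : ℕ) : ℝ) * (𝐞 (h * φ i) : ℂ).re :=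
        sum_le_sum fun i _ ↦ sq_norm_sum_fourierChar_mul_le n (φ i)
    _ = 2 * ∑ h ∈ range n, ((n - h : ℕ) : ℝ) * (∑ i ∈ s, (𝐞 (h * φ i) : ℂ)).re := by
        simp_rw [← mul_sum, Complex.re_sum]
        rw [sum_comm]
        simp_rw [mul_sum]
    _ ≤ 2 * ∑ h ∈ range n, ((n - h : ℕ) : ℝ) * ‖∑ i ∈ s, (𝐞 (h * φ i) : ℂ)‖ := by
        gcongr
        exact Complex.re_le_norm _
    _ ≤ 2 * ∑ h ∈ range n, (n : ℝ) * ‖∑ i ∈ s, (𝐞 (h * φ i) : ℂ)‖ := by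
        gcongr with h
        exact Nat.sub_le n h
    _ = 2 * n * ∑ h ∈ range n, ‖∑ i ∈ s, (𝐞 (h * φ i) : ℂ)‖ := by rw [← mul_sum, mul_assoc]

theorem card_near_int_mul_le_sum_norm {ι : Type*} (s : Finset ι) (φ : ι → ℝ) {n : ℕ} {η : ℝ}
    (hη : 8 * η * n ≤ 1) :
    (#{i ∈ s | ∃ m : ℤ, |φ i - m| ≤ η} : ℝ) * n ≤
      4 * ∑ h ∈ range n, ‖∑ i ∈ s, (𝐞 (h * φ i) : ℂ)‖ := by
  rcases n.eq_zero_or_pos with rfl | hn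
  · simp
  have hnear : ∀ i ∈ s.filter (fun i ↦ ∃ m : ℤ, |φ i - m| ≤ η),
      (n : ℝ) ^ 2 / 2 ≤ ‖∑ j ∈ range n, (𝐞 (j * φ i) : ℂ)‖ ^ 2 := fun i hi ↦ by
    obtain ⟨m, hm⟩ := (mem_filter.1 hi).2
    have hround : |φ i - round (φ i)| ≤ η := (round_le (φ i) m).trans hm
    refine sq_div_two_le_sq_norm_sum_fourierChar ?_
    nlinarith [mul_le_mul_of_nonneg_left hround n.cast_nonneg (α := ℝ)]
  have hsq : (#{i ∈ s | ∃ m : ℤ, |φ i - m| ≤ η} : ℝ) * (n ^ 2 / 2) ≤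
      2 * n * ∑ h ∈ range n, ‖∑ i ∈ s, (𝐞 (h * φ i) : ℂ)‖ := by
    rw [← nsmul_eq_mul]
    exact (card_nsmul_le_sum _ _ _ hnear).trans
      ((sum_le_sum_of_subset_of_nonneg (filter_subset _ _) fun _ _ _ ↦ by positivity).trans
        (sum_sq_norm_sum_fourierChar_le s φ n))
  have hn0 : (0 : ℝ) < n := mod_cast hn
  refine le_of_mul_le_mul_right ?_ hn0
  linarith

end ExponentialSums

section NearestMultiple

lemma card_le_add_one_of_sub_le {S : Finset ℤ} {r : ℝ} (hr : 0 ≤ r)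
    (h : ∀ x ∈ S, ∀ y ∈ S, (x : ℝ) - y ≤ r) : (#S : ℝ) ≤ r + 1 := by
  rcases S.eq_empty_or_nonempty with rfl | hS
  · rw [card_empty, Nat.cast_zero]
    positivity
  have hsub : S ⊆ Icc (S.min' hS) (S.min' hS + ⌊r⌋₊) := fun x hx ↦ by
    have hle : x - S.min' hS ≤ (⌊r⌋₊ : ℤ) := by
      rw [Int.natCast_floor_eq_floor hr, Int.le_floor]
      exact_mod_cast h x hx _ (S.min'_mem hS)
    exact mem_Icc.2 ⟨S.min'_le x hx, by linarith⟩
  have hcard : #S ≤ ⌊r⌋₊ + 1 := by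
    have := card_le_card hsub
    rw [Int.card_Icc] at this
    lia
  calc (#S : ℝ) ≤ ⌊r⌋₊ + 1 := mod_cast hcard
    _ ≤ r + 1 := by gcongr; exact Nat.floor_le hr

lemma card_filter_floor_abs_sub_eq_le_two (S : Finset ℕ) (x : ℝ) (p : ℕ) :
    #(S.filter fun t : ℕ ↦ ⌊|(t : ℝ) - x|⌋₊ = p) ≤ 2 := by
  refine (card_le_card (t := {⌈x + p⌉₊, ⌊x - p⌋₊}) fun t ht ↦ ?_).trans card_le_two
  obtain ⟨hle, hlt⟩ := (Nat.floor_eq_iff (abs_nonneg _)).1 (mem_filter.1 ht).2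
  rw [mem_insert, mem_singleton]
  rcases le_total x t with hxt | htx
  · rw [abs_of_nonneg (sub_nonneg.2 hxt)] at hle hlt
    refine Or.inl (le_antisymm (Nat.lt_succ_iff.1 ?_) (Nat.ceil_le.2 (by linarith)))
    have hceil := Nat.le_ceil (x + p)
    rify
    linarith
  · rw [abs_of_nonpos (sub_nonpos.2 htx)] at hle hlt
    refine Or.inr ((Nat.floor_eq_iff ?_).2 ⟨by linarith, by linarith⟩).symm
    linarith [t.cast_nonneg (α := ℝ)]

lemma sum_floor_abs_sub_le {g : ℕ → ℝ} (hg : ∀ p, 0 ≤ g p) {S : Finset ℕ} {x : ℝ} {P : ℕ}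
    (hS : ∀ t ∈ S, ⌊|(t : ℝ) - x|⌋₊ < P) :
    ∑ t ∈ S, g ⌊|(t : ℝ) - x|⌋₊ ≤ 2 * ∑ p ∈ range P, g p := by
  rw [← sum_fiberwise_of_maps_to fun _ ht ↦ mem_range.2 (hS _ ht), mul_sum]
  refine sum_le_sum fun p _ ↦ ?_
  calc ∑ t ∈ S.filter fun t : ℕ ↦ ⌊|(t : ℝ) - x|⌋₊ = p, g ⌊|(t : ℝ) - x|⌋₊
      = ∑ _t ∈ S.filter fun t : ℕ ↦ ⌊|(t : ℝ) - x|⌋₊ = p, g p :=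
        sum_congr rfl fun t ht ↦ by rw [(mem_filter.1 ht).2]
    _ = #(S.filter fun t : ℕ ↦ ⌊|(t : ℝ) - x|⌋₊ = p) * g p := by rw [sum_const, nsmul_eq_mul]
    _ ≤ 2 * g p := by
        gcongr
        · exact hg p
        · exact_mod_cast card_filter_floor_abs_sub_eq_le_two S x p

/-- The integer part of the distance from `t` to the nearest multiple of `q`. -/
def multipleDist (q : ℝ) (t : ℕ) : ℕ := ⌊|(t : ℝ) - round (t / q) * q|⌋₊

/-- The bound for a geometric sum with at most `W` terms and ratio `𝐞 (t / q)` in terms of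
`p = multipleDist q t`. The case `p = 0` is separate because `q / 0 = 0`. -/
def geomSumBound (W q : ℝ) (p : ℕ) : ℝ := if p = 0 then W else q / p

lemma geomSumBound_nonneg {W q : ℝ} (hW : 0 ≤ W) (hq : 0 ≤ q) (p : ℕ) :
    0 ≤ geomSumBound W q p := by
  unfold geomSumBound
  split_ifs <;> positivity

lemma abs_sub_round_div_mul {q : ℝ} (hq : 0 < q) (x : ℝ) :
    |x - round (x / q) * q| = |x / q - round (x / q)| * q := by
  calc |x - round (x / q) * q| = |(x / q - round (x / q)) * q| := by
        rw [sub_mul, div_mul_cancel₀ x hq.ne']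
    _ = |x / q - round (x / q)| * q := by rw [abs_mul, abs_of_pos hq]

lemma norm_sum_fourierChar_le_geomSumBound {q : ℝ} (hq : 0 < q) {n W : ℕ} (hn : n ≤ W) (t : ℕ)
    (c : ℝ) :
    ‖∑ i ∈ range n, (𝐞 (i * (t / q) + c) : ℂ)‖ ≤ geomSumBound W q (multipleDist q t) := by
  unfold geomSumBound
  split_ifs with h
  · exact (norm_sum_fourierChar_le n _).trans (mod_cast hn)
  have hp : (0 : ℝ) < multipleDist q t := mod_cast Nat.pos_of_ne_zero h
  have hdist : (multipleDist q t : ℝ) ≤ |(t : ℝ) / q - round ((t : ℝ) / q)| * q :=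
    (Nat.floor_le (abs_nonneg _)).trans_eq (abs_sub_round_div_mul hq t)
  have hgeom := norm_sum_fourierChar_mul_abs_sub_round_le n (t / q) c
  rw [le_div_iff₀ hp]
  calc ‖∑ i ∈ range n, (𝐞 (i * (t / q) + c) : ℂ)‖ * multipleDist q t
      ≤ ‖∑ i ∈ range n, (𝐞 (i * (t / q) + c) : ℂ)‖ *
          (|(t : ℝ) / q - round ((t : ℝ) / q)| * q) := by gcongr
    _ ≤ 1 / 2 * q := by
        rw [← mul_assoc]
        gcongr
    _ ≤ q := by linarith

lemma sum_range_geomSumBound_le {q : ℝ} (hq : 1 ≤ q) (W : ℝ) :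
    ∑ p ∈ range (⌊q⌋₊ + 1), geomSumBound W q p ≤ W + q * (1 + log q) := by
  have hharm : ∑ p ∈ range ⌊q⌋₊, geomSumBound W q (p + 1) = q * (harmonic ⌊q⌋₊ : ℚ) := by
    simp [geomSumBound, harmonic, mul_sum, div_eq_mul_inv]
  rw [sum_range_succ', hharm, add_comm]
  simp only [geomSumBound, if_true]
  gcongr
  exact harmonic_floor_le_one_add_log q hq

lemma card_image_round_div_le {q : ℝ} (hq : 0 < q) (X : ℕ) :
    (#((Ico 1 X).image fun t : ℕ ↦ round ((t : ℝ) / q)) : ℝ) ≤ X / q + 2 := by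
  refine (card_le_add_one_of_sub_le (r := X / q + 1) (by positivity) ?_).trans_eq (by ring)
  simp only [mem_image, forall_exists_index, and_imp, forall_apply_eq_imp_iff₂]
  intro a ha b _
  have haX : (a : ℝ) / q ≤ X / q := by
    gcongr
    exact (mem_Ico.1 ha).2.le
  have hb : (0 : ℝ) ≤ b / q := by positivity
  linarith [abs_le.1 (abs_sub_round ((a : ℝ) / q)), abs_le.1 (abs_sub_round ((b : ℝ) / q))]

theorem sum_geomSumBound_multipleDist_le {W q : ℝ} (hW : 0 ≤ W) (hq : 1 ≤ q) (X : ℕ) :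
    ∑ t ∈ Ico 1 X, geomSumBound W q (multipleDist q t) ≤
      2 * (X / q + 2) * (W + q * (1 + log q)) := by
  have hq0 : 0 < q := by positivity
  have hfibre : ∀ b ∈ (Ico 1 X).image fun t : ℕ ↦ round ((t : ℝ) / q),
      ∑ t ∈ (Ico 1 X).filter fun t : ℕ ↦ round ((t : ℝ) / q) = b,
        geomSumBound W q (multipleDist q t) ≤
        2 * (W + q * (1 + log q)) := by
    intro b _
    set F := (Ico 1 X).filter fun t : ℕ ↦ round ((t : ℝ) / q) = b
    have hround : ∀ t ∈ F, round ((t : ℝ) / q) = b := fun t ht ↦ (mem_filter.1 ht).2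
    have hlt : ∀ t ∈ F, ⌊|(t : ℝ) - b * q|⌋₊ < ⌊q⌋₊ + 1 := fun t ht ↦ by
      rw [Nat.lt_succ_iff, ← hround t ht, abs_sub_round_div_mul hq0]
      gcongr
      nlinarith [abs_sub_round ((t : ℝ) / q)]
    calc ∑ t ∈ F, geomSumBound W q (multipleDist q t)
        = ∑ t ∈ F, geomSumBound W q ⌊|(t : ℝ) - b * q|⌋₊ :=
          sum_congr rfl fun t ht ↦ by rw [multipleDist, hround t ht]
      _ ≤ 2 * ∑ p ∈ range (⌊q⌋₊ + 1), geomSumBound W q p :=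
          sum_floor_abs_sub_le (geomSumBound_nonneg hW hq0.le) hlt
      _ ≤ 2 * (W + q * (1 + log q)) := by
          gcongr
          exact sum_range_geomSumBound_le hq W
  rw [← sum_fiberwise_of_maps_to fun _ ht ↦
    mem_image_of_mem (fun t : ℕ ↦ round ((t : ℝ) / q)) ht]
  have hlog : 0 ≤ log q := log_nonneg hq
  calc _ ≤ (#((Ico 1 X).image fun t : ℕ ↦ round ((t : ℝ) / q)) : ℝ) *
        (2 * (W + q * (1 + log q))) := by
        rw [← nsmul_eq_mul]
        exact sum_le_card_nsmul _ _ _ hfibre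
    _ ≤ (X / q + 2) * (2 * (W + q * (1 + log q))) := by
        gcongr
        exact card_image_round_div_le hq0 X
    _ = 2 * (X / q + 2) * (W + q * (1 + log q)) := by ring

end NearestMultiple

section QuadraticPhase

lemma sq_norm_sum_quadratic_le {q : ℝ} (hq : 0 < q) (β γ : ℝ) (h W : ℕ) :
    ‖∑ i ∈ range W, (𝐞 (h * ((i : ℝ) ^ 2 / (2 * q) + β * i + γ)) : ℂ)‖ ^ 2 ≤
      2 * (W + ∑ r ∈ Ico 1 W, geomSumBound W q (multipleDist q (h * r))) := by
  rcases W.eq_zero_or_pos with rfl | hW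
  · simp
  refine (sq_norm_sum_range_le_two_mul_sum_inner_shift _ W).trans ?_
  have hdiff (r i : ℕ) :
      inner ℝ (𝐞 (h * ((i : ℝ) ^ 2 / (2 * q) + β * i + γ)) : ℂ)
        (𝐞 (h * (((r + i : ℕ) : ℝ) ^ 2 / (2 * q) + β * (r + i : ℕ) + γ))) =
      (𝐞 (i * ((h * r : ℕ) / q) + h * (r ^ 2 / (2 * q) + β * r)) : ℂ).re := by
    rw [inner_fourierChar]
    congr 3
    push_cast
    field_simp
    ring
  have hnorm (r : ℕ) :
      ∑ i ∈ range (W - r), inner ℝ (𝐞 (h * ((i : ℝ) ^ 2 / (2 * q) + β * i + γ)) : ℂ)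
        (𝐞 (h * (((r + i : ℕ) : ℝ) ^ 2 / (2 * q) + β * (r + i : ℕ) + γ))) ≤
      ‖∑ i ∈ range (W - r),
        (𝐞 (i * ((h * r : ℕ) / q) + h * (r ^ 2 / (2 * q) + β * r)) : ℂ)‖ := by
    simp_rw [hdiff]
    rw [← Complex.re_sum]
    exact Complex.re_le_norm _
  rw [range_eq_Ico, sum_eq_sum_Ico_succ_bot hW]
  gcongr with r
  · exact (hnorm 0).trans (norm_sum_fourierChar_le W _)
  · exact (hnorm r).trans (norm_sum_fourierChar_le_geomSumBound hq (Nat.sub_le W r) _ _)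

lemma sum_sum_geomSumBound_mul_le {q D : ℝ} (hq : 1 ≤ q) {H W : ℕ}
    (hD : ∀ t ∈ Ico 1 (H * W), (#t.divisors : ℝ) ≤ D) (hD0 : 0 ≤ D) :
    ∑ h ∈ Ico 1 H, ∑ r ∈ Ico 1 W, geomSumBound W q (multipleDist q (h * r)) ≤
      D * (2 * ((H * W : ℕ) / q + 2) * (W + q * (1 + log q))) := by
  have hnn (t : ℕ) : 0 ≤ geomSumBound W q (multipleDist q t) :=
    geomSumBound_nonneg W.cast_nonneg (by positivity) _
  calc ∑ h ∈ Ico 1 H, ∑ r ∈ Ico 1 W, geomSumBound W q (multipleDist q (h * r))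
      ≤ ∑ t ∈ Ico 1 (H * W), #t.divisors * geomSumBound W q (multipleDist q t) :=
        sum_sum_mul_le_sum_card_divisors_mul hnn H W
    _ ≤ ∑ t ∈ Ico 1 (H * W), D * geomSumBound W q (multipleDist q t) :=
        sum_le_sum fun t ht ↦ mul_le_mul_of_nonneg_right (hD t ht) (hnn t)
    _ ≤ D * (2 * ((H * W : ℕ) / q + 2) * (W + q * (1 + log q))) := by
        rw [← mul_sum]
        gcongr
        exact sum_geomSumBound_multipleDist_le W.cast_nonneg hq _

lemma sum_norm_sum_quadratic_le {q D : ℝ} (hq : 1 ≤ q) (β γ : ℝ) {H W : ℕ} (hH : 1 ≤ H)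
    (hD : ∀ t ∈ Ico 1 (H * W), (#t.divisors : ℝ) ≤ D) (hD0 : 0 ≤ D) :
    ∑ h ∈ Ico 1 H, ‖∑ i ∈ range W, (𝐞 (h * ((i : ℝ) ^ 2 / (2 * q) + β * i + γ)) : ℂ)‖ ≤
      H * √(2 * W + 4 * D * (W / q + 2) * (W + q * (1 + log q))) := by
  have hq0 : 0 < q := by positivity
  have hlog : 0 ≤ log q := log_nonneg hq
  have hH1 : (1 : ℝ) ≤ H := mod_cast hH
  have hcard : (#(Ico 1 H) : ℝ) ≤ H := by
    rw [Nat.card_Ico]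
    exact_mod_cast Nat.sub_le H 1
  refine le_of_sq_le_sq ?_ (by positivity)
  calc (∑ h ∈ Ico 1 H, ‖∑ i ∈ range W, (𝐞 (h * ((i : ℝ) ^ 2 / (2 * q) + β * i + γ)) : ℂ)‖) ^ 2
      ≤ #(Ico 1 H) * ∑ h ∈ Ico 1 H,
          ‖∑ i ∈ range W, (𝐞 (h * ((i : ℝ) ^ 2 / (2 * q) + β * i + γ)) : ℂ)‖ ^ 2 :=
        sq_sum_le_card_mul_sum_sq
    _ ≤ H * ∑ h ∈ Ico 1 H,
          2 * (W + ∑ r ∈ Ico 1 W, geomSumBound W q (multipleDist q (h * r))) := by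
        gcongr with h
        exact sq_norm_sum_quadratic_le hq0 β γ h W
    _ = H * (2 * (#(Ico 1 H) * W +
          ∑ h ∈ Ico 1 H, ∑ r ∈ Ico 1 W, geomSumBound W q (multipleDist q (h * r)))) := by
        rw [← mul_sum, sum_add_distrib, sum_const, nsmul_eq_mul]
    _ ≤ H * (2 * (H * W + D * (2 * ((H * W : ℕ) / q + 2) * (W + q * (1 + log q))))) := by
        have := sum_sum_geomSumBound_mul_le hq hD hD0
        gcongr
    _ ≤ H * (2 * (H * W + D * (2 * (H * (W / q + 2)) * (W + q * (1 + log q))))) := by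
        gcongr
        push_cast
        rw [mul_add, mul_div_assoc]
        linarith
    _ = (H * √(2 * W + 4 * D * (W / q + 2) * (W + q * (1 + log q)))) ^ 2 := by
        rw [mul_pow, sq_sqrt (by positivity)]
        ring

lemma card_quadratic_near_int_le {q D η : ℝ} (hq : 1 ≤ q) (β γ : ℝ) {H W : ℕ} (hH : 1 ≤ H)
    (hη : 8 * η * H ≤ 1) (hD : ∀ t ∈ Ico 1 (H * W), (#t.divisors : ℝ) ≤ D) (hD0 : 0 ≤ D) :
    (#((range W).filter fun i : ℕ ↦ ∃ m : ℤ, |(i : ℝ) ^ 2 / (2 * q) + β * i + γ - m| ≤ η) : ℝ) ≤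
      4 * (W / H + √(2 * W + 4 * D * (W / q + 2) * (W + q * (1 + log q)))) := by
  have hH0 : (0 : ℝ) < H := mod_cast hH
  have hfejer := card_near_int_mul_le_sum_norm (range W)
    (fun i ↦ (i : ℝ) ^ 2 / (2 * q) + β * i + γ) hη
  rw [range_eq_Ico H, sum_eq_sum_Ico_succ_bot hH] at hfejer
  have hzero := norm_sum_fourierChar_le W
    fun i ↦ ((0 : ℕ) : ℝ) * ((i : ℝ) ^ 2 / (2 * q) + β * i + γ)
  have hweyl := sum_norm_sum_quadratic_le hq β γ hH hD hD0
  refine le_of_mul_le_mul_right ?_ hH0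
  calc _ ≤ _ := hfejer
    _ ≤ 4 * (W + H * √(2 * W + 4 * D * (W / q + 2) * (W + q * (1 + log q)))) := by
        gcongr
    _ = _ := by field_simp

lemma exists_fejer_length {η : ℝ} (hη : 0 ≤ η) {W : ℕ} (hW : 1 ≤ W) (h : 8 * η + 1 / W ≤ 1) :
    ∃ H : ℕ, 1 ≤ H ∧ H ≤ W ∧ 8 * η * H ≤ 1 ∧ (W : ℝ) / H ≤ 16 * η * W + 2 := by
  have hW0 : (0 : ℝ) < W := mod_cast hW
  set x : ℝ := 1 / (8 * η + 1 / W)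
  have hx : x * (8 * η + 1 / W) = 1 := one_div_mul_cancel (by positivity)
  have hx1 : 1 ≤ x := (one_le_div (by positivity)).2 h
  have hH1 : (1 : ℝ) ≤ ⌊x⌋₊ := mod_cast Nat.le_floor (mod_cast hx1)
  have hle : (⌊x⌋₊ : ℝ) ≤ x := Nat.floor_le (by positivity)
  have hlt : x < 2 * ⌊x⌋₊ := by linarith [Nat.lt_floor_add_one x]
  have hprod : 8 * η * ⌊x⌋₊ + ⌊x⌋₊ / W ≤ 1 := by
    calc 8 * η * ⌊x⌋₊ + ⌊x⌋₊ / W = ⌊x⌋₊ * (8 * η + 1 / W) := by ring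
      _ ≤ x * (8 * η + 1 / W) := by gcongr
      _ = 1 := hx
  refine ⟨⌊x⌋₊, mod_cast hH1, ?_, ?_, ?_⟩
  · have hratio : (⌊x⌋₊ : ℝ) / W ≤ 1 := by linarith [show 0 ≤ 8 * η * ⌊x⌋₊ by positivity]
    exact_mod_cast (div_le_one hW0).1 hratio
  · linarith [show 0 ≤ (⌊x⌋₊ : ℝ) / W by positivity]
  · rw [div_le_iff₀ (by positivity)]
    calc (W : ℝ) = W * (x * (8 * η + 1 / W)) := by rw [hx, mul_one]
      _ ≤ W * (2 * ⌊x⌋₊ * (8 * η + 1 / W)) := by gcongr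
      _ = (16 * η * W + 2) * ⌊x⌋₊ := by field_simp; ring

lemma one_add_log_le_mul_rpow {q ε : ℝ} (hq : 1 ≤ q) (hε : 0 < ε) :
    1 + log q ≤ (1 + 1 / ε) * q ^ ε := by
  have hlog := log_le_rpow_div (by positivity : 0 ≤ q) hε
  have hone := one_le_rpow hq hε.le
  rw [add_mul, one_mul, one_div_mul_eq_div]
  linarith

lemma sqrt_quadratic_bound_le {q B ε W : ℝ} (hq : 1 ≤ q) (hB : 1 ≤ B) (hε : 0 < ε) (hW : 0 ≤ W) :
    √(2 * W + 4 * (B * W ^ ε) * (W / q + 2) * (W + q * (1 + log q))) ≤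
      √(14 * B * (1 + 1 / ε)) * (√(W ^ 2 / q + W + q) * (W + q) ^ ε) := by
  have hlog : 0 ≤ log q := log_nonneg hq
  have hX1 : 1 ≤ (W + q) ^ ε := one_le_rpow (by linarith) hε.le
  have hWX : W ^ ε ≤ (W + q) ^ ε := by gcongr; linarith
  have hlogX : 1 + log q ≤ (1 + 1 / ε) * (W + q) ^ ε :=
    (one_add_log_le_mul_rpow hq hε).trans (by gcongr; linarith)
  set X := (W + q) ^ ε
  set Y := W ^ 2 / q + W + q
  set E := 1 + 1 / ε
  have hE1 : 1 ≤ E := le_add_of_nonneg_right (by positivity)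
  have hY : 0 ≤ Y := by positivity
  have hWY : W ≤ Y := by linarith [show 0 ≤ W ^ 2 / q + q by positivity]
  have hprod : (W / q + 2) * (W + q * (1 + log q)) ≤ 3 * Y * (E * X) :=
    calc (W / q + 2) * (W + q * (1 + log q)) ≤ (W / q + 2) * ((W + q) * (1 + log q)) := by
          gcongr
          nlinarith [mul_nonneg hW hlog]
      _ = (W ^ 2 / q + 3 * W + 2 * q) * (1 + log q) := by field_simp; ring
      _ ≤ 3 * Y * (E * X) := by
          gcongr
          linarith [show 0 ≤ W ^ 2 / q by positivity]
  have hBEX : 1 ≤ B * E * X ^ 2 := one_le_mul_of_one_le_of_one_le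
    (one_le_mul_of_one_le_of_one_le hB hE1) (one_le_pow₀ hX1)
  calc √(2 * W + 4 * (B * W ^ ε) * (W / q + 2) * (W + q * (1 + log q)))
      ≤ √(14 * B * E * (Y * X ^ 2)) := by
        refine sqrt_le_sqrt ?_
        calc 2 * W + 4 * (B * W ^ ε) * (W / q + 2) * (W + q * (1 + log q))
            ≤ 2 * Y + 4 * (B * X) * (3 * Y * (E * X)) := by
              rw [mul_assoc (4 * (B * W ^ ε))]
              gcongr
          _ ≤ 14 * B * E * (Y * X ^ 2) := by nlinarith [mul_le_mul_of_nonneg_left hBEX hY]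
    _ = √(14 * B * E) * (√Y * X) := by
        rw [sqrt_mul (by positivity), sqrt_mul hY, sqrt_sq (by positivity)]

lemma card_divisors_le_mul_rpow_of_le {B ε : ℝ}
    (hB : ∀ n : ℕ, n ≠ 0 → (#n.divisors : ℝ) ≤ B * (n : ℝ) ^ (ε / 2)) (hB0 : 0 ≤ B) (hε : 0 ≤ ε)
    {W t : ℕ} (ht0 : t ≠ 0) (ht : t ≤ W ^ 2) : (#t.divisors : ℝ) ≤ B * (W : ℝ) ^ ε :=
  calc (#t.divisors : ℝ) ≤ B * (t : ℝ) ^ (ε / 2) := hB t ht0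
    _ ≤ B * ((W : ℝ) ^ 2) ^ (ε / 2) := by gcongr; exact_mod_cast ht
    _ = B * (W : ℝ) ^ ε := by
      rw [← rpow_natCast_mul W.cast_nonneg, Nat.cast_two, mul_div_cancel₀ ε two_ne_zero]

lemma card_quadratic_near_int_le_of_le_one {B ε q η : ℝ} (hB1 : 1 ≤ B)
    (hB : ∀ n : ℕ, n ≠ 0 → (#n.divisors : ℝ) ≤ B * (n : ℝ) ^ (ε / 2)) (hε : 0 < ε) (hq : 1 ≤ q)
    (β γ : ℝ) (hη : 0 ≤ η) {W : ℕ} (hW : 1 ≤ W) (h : 8 * η + 1 / W ≤ 1) :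
    (#((range W).filter fun i : ℕ ↦ ∃ m : ℤ, |(i : ℝ) ^ 2 / (2 * q) + β * i + γ - m| ≤ η) : ℝ) ≤
      4 * (16 * η * W + 2 +
        √(14 * B * (1 + 1 / ε)) * (√((W : ℝ) ^ 2 / q + W + q) * (W + q) ^ ε)) := by
  obtain ⟨H, hH1, hHW, hηH, hWH⟩ := exists_fejer_length hη hW h
  have hdiv : ∀ t ∈ Ico 1 (H * W), (#t.divisors : ℝ) ≤ B * (W : ℝ) ^ ε := fun t ht ↦ by
    obtain ⟨ht1, htHW⟩ := mem_Ico.1 ht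
    exact card_divisors_le_mul_rpow_of_le hB (by positivity) hε.le (by lia)
      (htHW.le.trans ((Nat.mul_le_mul_right W hHW).trans_eq (sq W).symm))
  refine (card_quadratic_near_int_le hq β γ hH1 hηH hdiv (by positivity)).trans ?_
  gcongr
  exact sqrt_quadratic_bound_le hq hB1 hε W.cast_nonneg

theorem exists_card_quadratic_near_int_le {ε : ℝ} (hε : 0 < ε) :
    ∃ C : ℝ, 0 < C ∧ ∀ (q β γ η : ℝ) (W : ℕ), 0 < q → 0 ≤ η →
      (#((range W).filter fun i : ℕ ↦ ∃ m : ℤ, |(i : ℝ) ^ 2 / (2 * q) + β * i + γ - m| ≤ η) : ℝ) ≤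
        C * (η * W + √((W : ℝ) ^ 2 / q + W + q) * (W + q) ^ ε) := by
  obtain ⟨B, hB1, hB⟩ := exists_card_divisors_le_mul_rpow (half_pos hε)
  refine ⟨72 + 4 * √(14 * B * (1 + 1 / ε)), by positivity, fun q β γ η W hq hη ↦ ?_⟩
  rcases W.eq_zero_or_pos with rfl | hW
  · simp only [range_zero, filter_empty, card_empty, Nat.cast_zero]
    positivity
  have hW1 : (1 : ℝ) ≤ W := mod_cast hW
  set Z := √((W : ℝ) ^ 2 / q + W + q) * (W + q) ^ ε
  have hZ (w : ℝ) (h : w ^ 2 ≤ (W : ℝ) ^ 2 / q + W + q) : w ≤ Z :=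
    (le_sqrt_of_sq_le h).trans
      (le_mul_of_one_le_right (sqrt_nonneg _) (one_le_rpow (by linarith) hε.le))
  have hZ1 : 1 ≤ Z := hZ 1 (by linarith [show 0 ≤ (W : ℝ) ^ 2 / q by positivity])
  have hsqrt : 0 ≤ √(14 * B * (1 + 1 / ε)) := sqrt_nonneg _
  have hηW : 0 ≤ η * W := by positivity
  have hcard : (#((range W).filter fun i : ℕ ↦
      ∃ m : ℤ, |(i : ℝ) ^ 2 / (2 * q) + β * i + γ - m| ≤ η) : ℝ) ≤ W :=
    mod_cast (card_filter_le _ _).trans_eq (card_range W)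
  rcases lt_or_ge q 1 with hq1 | hq1
  · have hWZ : W ≤ Z := hZ W (by linarith [le_div_self (sq_nonneg (W : ℝ)) hq hq1.le])
    nlinarith [mul_nonneg hsqrt (by positivity : 0 ≤ η * W + Z)]
  rcases lt_or_ge 1 (8 * η + 1 / W) with hlarge | hsmall
  · have hscale := (mul_lt_mul_iff_left₀ (zero_lt_one.trans_le hW1)).2 hlarge
    rw [add_mul, one_div_mul_cancel (by positivity)] at hscale
    nlinarith [mul_nonneg hsqrt (by positivity : 0 ≤ η * W + Z)]
  · have hcount := card_quadratic_near_int_le_of_le_one hB1 hB hε hq1 β γ hη hW hsmall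
    nlinarith [mul_nonneg hsqrt hηW]

end QuadraticPhase

section Parabola

lemma card_le_mul_card_of_card_fiber_le {ι κ : Type*} [DecidableEq κ] {s : Finset ι} {t : Finset κ}
    {f : ι → κ} {x : ℝ} (hf : ∀ i ∈ s, f i ∈ t) (hx : ∀ b ∈ t, (#{i ∈ s | f i = b} : ℝ) ≤ x) :
    (#s : ℝ) ≤ x * #t := by
  rw [card_eq_sum_card_fiberwise hf, Nat.cast_sum, mul_comm, ← nsmul_eq_mul]
  exact sum_le_card_nsmul _ _ _ hx

lemma card_image_fst_le_card_near_int {E : Finset (ℤ × ℤ)} {a : ℤ} {W : ℕ} {q β γ η : ℝ}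
    (hq : q ≠ 0) (hE : ∀ p ∈ E, p.1 ∈ Ico a (a + W) ∧
      |(p.1 : ℝ) ^ 2 / (2 * q) + β * p.1 + γ - p.2| ≤ η) :
    #(E.image Prod.fst) ≤ #((range W).filter fun i : ℕ ↦ ∃ m : ℤ,
      |(i : ℝ) ^ 2 / (2 * q) + (a / q + β) * i + (a ^ 2 / (2 * q) + β * a + γ) - m| ≤ η) := by
  refine card_le_card_of_injOn (fun u ↦ (u - a).toNat) (fun u hu ↦ ?_) fun u hu v hv huv ↦ ?_
  · obtain ⟨⟨u, m⟩, hum, rfl⟩ := mem_image.1 hu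
    obtain ⟨hI, hnear⟩ := hE _ hum
    obtain ⟨hau, huW⟩ := mem_Ico.1 hI
    refine mem_filter.2 ⟨mem_range.2 (by lia), m, ?_⟩
    have hcast : (((u - a).toNat : ℕ) : ℝ) = u - a := by
      rw [← Int.cast_natCast, Int.toNat_of_nonneg (by lia), Int.cast_sub]
    rw [hcast]
    convert hnear using 3
    field_simp
    ring
  · have hle : ∀ w ∈ E.image Prod.fst, a ≤ w := fun w hw ↦ by
      obtain ⟨p, hp, rfl⟩ := mem_image.1 hw
      exact (mem_Ico.1 (hE p hp).1).1
    have hau := hle u hu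
    have hav := hle v hv
    simp only at huv
    lia

lemma card_fiber_fst_le {E : Finset (ℤ × ℤ)} {φ : ℤ → ℝ} {η : ℝ} (hη : 0 ≤ η)
    (hE : ∀ p ∈ E, |φ p.1 - p.2| ≤ η) (u : ℤ) : (#{p ∈ E | p.1 = u} : ℝ) ≤ 2 * η + 1 := by
  have hinj : Set.InjOn Prod.snd (E.filter (·.1 = u) : Set (ℤ × ℤ)) := fun p hp p' hp' h ↦
    Prod.ext ((mem_filter.1 hp).2.trans (mem_filter.1 hp').2.symm) h
  rw [← card_image_of_injOn hinj]
  refine card_le_add_one_of_sub_le (by positivity) fun m hm m' hm' ↦ ?_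
  obtain ⟨p, hp, rfl⟩ := mem_image.1 hm
  obtain ⟨p', hp', rfl⟩ := mem_image.1 hm'
  obtain ⟨hpE, rfl⟩ := mem_filter.1 hp
  obtain ⟨hpE', hpp'⟩ := mem_filter.1 hp'
  have hnear := abs_le.1 (hE p hpE)
  have hnear' := abs_le.1 (hE p' hpE')
  rw [hpp'] at hnear'
  linarith

theorem exists_card_near_parabola_le {ε : ℝ} (hε : 0 < ε) :
    ∃ C : ℝ, 0 < C ∧ ∀ (q β γ η : ℝ) (a : ℤ) (W : ℕ) (E : Finset (ℤ × ℤ)), 0 < q → 0 ≤ η →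
      (∀ p ∈ E, p.1 ∈ Ico a (a + W) ∧ |(p.1 : ℝ) ^ 2 / (2 * q) + β * p.1 + γ - p.2| ≤ η) →
      (#E : ℝ) ≤ C * (η * W + √((W : ℝ) ^ 2 / q + W + q) * (W + q) ^ ε) := by
  obtain ⟨C, hC, hcount⟩ := exists_card_quadratic_near_int_le hε
  refine ⟨4 + 2 * C, by positivity, fun q β γ η a W E hq hη hE ↦ ?_⟩
  have hfst := card_image_fst_le_card_near_int hq.ne' hE
  have hfstW : (#(E.image Prod.fst) : ℝ) ≤ W :=
    mod_cast hfst.trans ((card_filter_le _ _).trans_eq (card_range W))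
  have hfstC := (Nat.cast_le.2 hfst).trans
    (hcount q (a / q + β) (a ^ 2 / (2 * q) + β * a + γ) η W hq hη)
  set Z := √((W : ℝ) ^ 2 / q + W + q) * (W + q) ^ ε
  have hZ : 0 ≤ Z := by positivity
  have hηW : 0 ≤ η * W := by positivity
  have hcard : (#E : ℝ) ≤ (2 * η + 1) * #(E.image Prod.fst) :=
    card_le_mul_card_of_card_fiber_le (fun p hp ↦ mem_image_of_mem _ hp) fun u _ ↦
      card_fiber_fst_le (φ := fun u ↦ (u : ℝ) ^ 2 / (2 * q) + β * u + γ) hη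
        (fun p hp ↦ (hE p hp).2) u
  rcases le_total (1 / 2) η with hbig | hsmall
  · calc (#E : ℝ) ≤ (2 * η + 1) * W := hcard.trans (by gcongr)
      _ ≤ 4 * (η * W) := by nlinarith [W.cast_nonneg (α := ℝ)]
      _ ≤ (4 + 2 * C) * (η * W + Z) := by nlinarith [mul_nonneg hC.le hηW, mul_nonneg hC.le hZ]
  · calc (#E : ℝ) ≤ 2 * #(E.image Prod.fst) := hcard.trans (by gcongr; linarith)
      _ ≤ 2 * (C * (η * W + Z)) := by gcongr
      _ ≤ (4 + 2 * C) * (η * W + Z) := by nlinarith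

lemma exists_card_near_parabola_le_of_abs_le {ε : ℝ} (hε : 0 < ε) :
    ∃ C : ℝ, 0 < C ∧ ∀ (q β γ η U : ℝ) (E : Finset (ℤ × ℤ)), 0 < q → 0 ≤ η → 1 ≤ U →
      (∀ p ∈ E, |(p.1 : ℝ)| ≤ U ∧ |(p.1 : ℝ) ^ 2 / (2 * q) + β * p.1 + γ - p.2| ≤ η) →
      (#E : ℝ) ≤ C * (η * (3 * U) + √((3 * U) ^ 2 / q + 3 * U + q) * (3 * U + q) ^ ε) := by
  obtain ⟨C, hC, hcount⟩ := exists_card_near_parabola_le hε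
  refine ⟨C, hC, fun q β γ η U E hq hη hU hE ↦ ?_⟩
  have hwidth : ((2 * ⌊U⌋₊ + 1 : ℕ) : ℝ) ≤ 3 * U := by
    push_cast
    linarith [Nat.floor_le (zero_le_one.trans hU)]
  have hmem : ∀ p ∈ E, p.1 ∈ Ico (-⌊U⌋₊ : ℤ) (-⌊U⌋₊ + (2 * ⌊U⌋₊ + 1 : ℕ)) := by
    intro p hp
    have hnat : p.1.natAbs ≤ ⌊U⌋₊ :=
      Nat.le_floor (by rw [Nat.cast_natAbs, Int.cast_abs]; exact (hE p hp).1)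
    rw [mem_Ico]
    omega
  refine (hcount q β γ η _ _ E hq hη fun p hp ↦ ⟨hmem p hp, (hE p hp).2⟩).trans ?_
  gcongr

end Parabola

section RootDifference

/-- The parabola formed by the points `(l - m, m)` with `√l - √m = α`. -/
def rootDiffParabola (α u : ℝ) : ℝ := ((u - α ^ 2) / (2 * α)) ^ 2

lemma rootDiffParabola_eq {α : ℝ} (hα : α ≠ 0) (u : ℝ) :
    rootDiffParabola α u = u ^ 2 / (2 * (2 * α ^ 2)) + -1 / 2 * u + α ^ 2 / 4 := by
  unfold rootDiffParabola
  field_simp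
  ring

lemma abs_sub_eq_abs_sqrt_sub_sqrt_mul {a b : ℝ} (ha : 0 ≤ a) (hb : 0 ≤ b) :
    |a - b| = |√a - √b| * (√a + √b) := by
  rw [← abs_of_nonneg (by positivity : 0 ≤ √a + √b), ← abs_mul]
  congr 1
  nlinarith [sq_sqrt ha, sq_sqrt hb]

lemma one_le_abs_natCast_sub {a b : ℕ} (hab : a ≠ b) : 1 ≤ |(a : ℝ) - b| := by
  have hab' : (a : ℤ) - b ≠ 0 := sub_ne_zero.2 (Nat.cast_injective.ne hab)
  exact_mod_cast Int.one_le_abs hab'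

lemma one_le_abs_sqrt_sub_sqrt_mul {a b : ℕ} (hab : a ≠ b) :
    1 ≤ |√(a : ℝ) - √b| * (√a + √b) := by
  rw [← abs_sub_eq_abs_sqrt_sub_sqrt_mul a.cast_nonneg b.cast_nonneg]
  exact one_le_abs_natCast_sub hab

lemma rootDiffParabola_sub {α l m : ℝ} (hα : α ≠ 0) (hl : 0 ≤ l) (hm : 0 ≤ m) :
    rootDiffParabola α (l - m) - m =
      (√l - √m - α) * (√l - √m + α) / 4 * ((√l + √m) ^ 2 / α ^ 2 - 1) := by
  unfold rootDiffParabola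
  rw [← sq_sqrt hl, ← sq_sqrt hm, sqrt_sq (sqrt_nonneg l), sqrt_sq (sqrt_nonneg m)]
  field_simp
  ring

variable {α B Δ : ℝ} {l m : ℕ}

lemma abs_sqrt_sub_sqrt_comparable (hlm : l ≠ m) (hB : √l + √m ≤ B) (hΔB : 2 * Δ * B ≤ 1)
    (h : |√l - √m - α| < Δ) : |√l - √m| ≤ 2 * |α| ∧ |α| ≤ 2 * |√l - √m| ∧ α ≠ 0 := by
  have hgap : 1 ≤ |√(l : ℝ) - √m| * B :=
    (one_le_abs_sqrt_sub_sqrt_mul hlm).trans (by gcongr)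
  have hB0 : 0 < B := by
    by_contra! hB0
    linarith [mul_nonpos_of_nonneg_of_nonpos (abs_nonneg (√(l : ℝ) - √m)) hB0]
  have hΔ : 2 * Δ ≤ |√(l : ℝ) - √m| := le_of_mul_le_mul_right (hΔB.trans hgap) hB0
  have hle := abs_sub_abs_le_abs_sub (√(l : ℝ) - √m) α
  have hge := abs_sub_abs_le_abs_sub α (√(l : ℝ) - √m)
  rw [abs_sub_comm α] at hge
  have : 0 < Δ := (abs_nonneg _).trans_lt h
  exact ⟨by linarith, by linarith, abs_pos.1 (by linarith)⟩

lemma abs_rootDiffParabola_sub_le (hlm : l ≠ m) (hB : √l + √m ≤ B) (hαB : |α| ≤ B)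
    (hΔB : 2 * Δ * B ≤ 1) (h : |√l - √m - α| < Δ) :
    |rootDiffParabola α (l - m) - m| ≤ Δ * B ^ 2 / |α| := by
  obtain ⟨hle, -, hα⟩ := abs_sqrt_sub_sqrt_comparable hlm hB hΔB h
  have hα0 : 0 < |α| := abs_pos.2 hα
  have : 0 < Δ := (abs_nonneg _).trans_lt h
  have hsum : |√l - √m + α| ≤ 3 * |α| := by linarith [abs_add_le (√l - √m) α]
  have hratio : |(√l + √m) ^ 2 / α ^ 2 - 1| ≤ B ^ 2 / |α| ^ 2 := by
    rw [← sq_abs α]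
    have hS : (√l + √m) ^ 2 / |α| ^ 2 ≤ B ^ 2 / |α| ^ 2 := by gcongr
    have hone : 1 ≤ B ^ 2 / |α| ^ 2 := (one_le_div (pow_pos hα0 2)).2 (by gcongr)
    have hnn : 0 ≤ (√l + √m) ^ 2 / |α| ^ 2 := by positivity
    exact abs_le.2 ⟨by linarith, by linarith⟩
  rw [rootDiffParabola_sub hα l.cast_nonneg m.cast_nonneg, abs_mul, abs_div, abs_mul, Nat.abs_ofNat]
  calc |√l - √m - α| * |√l - √m + α| / 4 * |(√l + √m) ^ 2 / α ^ 2 - 1|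
      ≤ Δ * (3 * |α|) / 4 * (B ^ 2 / |α| ^ 2) := by gcongr
    _ = 3 / 4 * (Δ * B ^ 2 / |α|) := by field_simp
    _ ≤ Δ * B ^ 2 / |α| := by linarith [show 0 ≤ Δ * B ^ 2 / |α| by positivity]

lemma abs_sub_le_of_abs_sqrt_sub_sqrt_sub_lt (hlm : l ≠ m) (hB : √l + √m ≤ B)
    (hΔB : 2 * Δ * B ≤ 1) (h : |√l - √m - α| < Δ) : |(l : ℝ) - m| ≤ 2 * |α| * B := by
  obtain ⟨hle, -, -⟩ := abs_sqrt_sub_sqrt_comparable hlm hB hΔB h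
  rw [abs_sub_eq_abs_sqrt_sub_sqrt_mul l.cast_nonneg m.cast_nonneg]
  gcongr

lemma sqrt_mul_rpow_parabola_le {ε t B : ℝ} (hε : 0 < ε) (ht : 0 < t) (htB : t ≤ B) :
    √((3 * (2 * t * B)) ^ 2 / (2 * t ^ 2) + 3 * (2 * t * B) + 2 * t ^ 2) *
      (3 * (2 * t * B) + 2 * t ^ 2) ^ (ε / 2) ≤ 6 * 8 ^ (ε / 2) * (B * B ^ ε) := by
  have hB : 0 < B := ht.trans_le htB
  have hsum : 3 * (2 * t * B) + 2 * t ^ 2 ≤ 8 * B ^ 2 := by nlinarith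
  have hquot : (3 * (2 * t * B)) ^ 2 / (2 * t ^ 2) = 18 * B ^ 2 := by
    field_simp
    norm_num
  have hsqrt : √((3 * (2 * t * B)) ^ 2 / (2 * t ^ 2) + 3 * (2 * t * B) + 2 * t ^ 2) ≤ 6 * B :=
    sqrt_le_iff.2 ⟨by positivity, by nlinarith [sq_nonneg B]⟩
  have hpow : (3 * (2 * t * B) + 2 * t ^ 2) ^ (ε / 2) ≤ 8 ^ (ε / 2) * B ^ ε := by
    calc (3 * (2 * t * B) + 2 * t ^ 2) ^ (ε / 2) ≤ (8 * B ^ 2) ^ (ε / 2) := by gcongr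
      _ = 8 ^ (ε / 2) * B ^ ε := by
        rw [mul_rpow (by norm_num) (by positivity), ← rpow_natCast_mul hB.le]
        congr 2
        push_cast
        ring
  calc _ ≤ 6 * B * (8 ^ (ε / 2) * B ^ ε) := by gcongr
    _ = 6 * 8 ^ (ε / 2) * (B * B ^ ε) := by ring

lemma exists_card_sqrt_sub_sqrt_near_le {ε : ℝ} (hε : 0 < ε) :
    ∃ C : ℝ, 0 < C ∧ ∀ (α B Δ : ℝ) (E : Finset (ℕ × ℕ)), |α| ≤ B → 0 < Δ → 2 * Δ * B ≤ 1 →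
      (∀ p ∈ E, p.1 ≠ p.2 ∧ √p.1 + √p.2 ≤ B ∧ |√p.1 - √p.2 - α| < Δ) →
      (#E : ℝ) ≤ C * (Δ * B ^ 3 + B * B ^ ε) := by
  obtain ⟨C, hC, hcount⟩ := exists_card_near_parabola_le_of_abs_le (half_pos hε)
  refine ⟨C * (6 + 6 * 8 ^ (ε / 2)), by positivity, fun α B Δ E hαB hΔ hΔB hE ↦ ?_⟩
  have hB : 0 ≤ B := (abs_nonneg α).trans hαB
  obtain rfl | ⟨p₀, hp₀⟩ := E.eq_empty_or_nonempty
  · rw [card_empty, Nat.cast_zero]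
    positivity
  obtain ⟨hne, hsum, hnear⟩ := hE p₀ hp₀
  have hα : α ≠ 0 := (abs_sqrt_sub_sqrt_comparable hne hsum hΔB hnear).2.2
  have hα' : 0 < |α| := abs_pos.2 hα
  have hdiff : ∀ p ∈ E, |(p.1 : ℝ) - p.2| ≤ 2 * |α| * B := fun p hp ↦
    abs_sub_le_of_abs_sqrt_sub_sqrt_sub_lt (hE p hp).1 (hE p hp).2.1 hΔB (hE p hp).2.2
  let toPlane : ℕ × ℕ → ℤ × ℤ := fun p ↦ (p.1 - p.2, p.2)
  have hinj : toPlane.Injective := by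
    rintro ⟨l, m⟩ ⟨l', m'⟩ h
    simp only [toPlane, Prod.mk.injEq] at h ⊢
    omega
  have hplane := hcount (2 * |α| ^ 2) (-1 / 2) (|α| ^ 2 / 4) (Δ * B ^ 2 / |α|) (2 * |α| * B)
    (E.image toPlane) (by positivity) (by positivity)
    ((one_le_abs_natCast_sub hne).trans (hdiff p₀ hp₀)) <| by
      simp only [forall_mem_image, toPlane]
      refine fun p hp ↦ ⟨mod_cast hdiff p hp, ?_⟩
      obtain ⟨hne, hsum, hnear⟩ := hE p hp
      have hpara := abs_rootDiffParabola_sub_le hne hsum hαB hΔB hnear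
      rw [rootDiffParabola_eq hα, ← sq_abs α] at hpara
      exact_mod_cast hpara
  rw [card_image_of_injective _ hinj] at hplane
  calc (#E : ℝ) ≤ _ := hplane
    _ ≤ C * (Δ * B ^ 2 / |α| * (3 * (2 * |α| * B)) + 6 * 8 ^ (ε / 2) * (B * B ^ ε)) := by
      have := sqrt_mul_rpow_parabola_le hε hα' hαB
      gcongr
    _ = C * (6 * (Δ * B ^ 3) + 6 * 8 ^ (ε / 2) * (B * B ^ ε)) := by field_simp; ring
    _ ≤ C * ((6 + 6 * 8 ^ (ε / 2)) * (Δ * B ^ 3 + B * B ^ ε)) := by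
      gcongr
      linarith [show 0 ≤ 8 ^ (ε / 2) * (Δ * B ^ 3) + B * B ^ ε by positivity]
    _ = C * (6 + 6 * 8 ^ (ε / 2)) * (Δ * B ^ 3 + B * B ^ ε) := by ring

end RootDifference

section Quadruples

variable {N M K L Δ : ℝ} {n m k l : ℕ}

lemma mem_Ioc_zero_floor (hlt : N < n) (hle : n ≤ 2 * N) : n ∈ Ioc 0 ⌊2 * N⌋₊ := by
  have hn : (0 : ℝ) < n := by linarith [n.cast_nonneg (α := ℝ)]
  exact mem_Ioc.2 ⟨mod_cast hn, Nat.le_floor hle⟩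

lemma card_Ioc_zero_floor_le (hN : 0 ≤ N) : (#(Ioc 0 ⌊2 * N⌋₊) : ℝ) ≤ 2 * N := by
  rw [Nat.card_Ioc, Nat.sub_zero]
  exact Nat.floor_le (by positivity)

lemma A1set_finite (N M K L Δ : ℝ) : (A1set N M K L Δ).Finite := by
  refine (finite_toSet
    (Ioc 0 ⌊2 * N⌋₊ ×ˢ Ioc 0 ⌊2 * M⌋₊ ×ˢ Ioc 0 ⌊2 * K⌋₊ ×ˢ Ioc 0 ⌊2 * L⌋₊)).subset ?_
  rintro ⟨n, m, k, l⟩ ⟨hn, hn', hm, hm', hk, hk', hl, hl', -⟩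
  simp only [coe_product, Set.mem_prod, mem_coe]
  exact ⟨mem_Ioc_zero_floor hn hn', mem_Ioc_zero_floor hm hm', mem_Ioc_zero_floor hk hk',
    mem_Ioc_zero_floor hl hl'⟩

lemma sqrt_le_two_mul_sqrt (hL : 0 ≤ L) (hl : l ≤ 2 * L) : √(l : ℝ) ≤ 2 * √L :=
  sqrt_le_iff.2 ⟨by positivity, by nlinarith [sq_sqrt hL]⟩

lemma card_sqrt_near_le {S : Finset ℕ} {x B : ℝ} (hB : 0 ≤ B) (hΔ : 0 ≤ Δ)
    (hS : ∀ l ∈ S, √(l : ℝ) ≤ B ∧ |x - √l| < Δ) : (#S : ℝ) ≤ 4 * Δ * B + 1 := by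
  rw [← card_image_of_injective S (Nat.cast_injective (R := ℤ))]
  refine card_le_add_one_of_sub_le (by positivity) ?_
  simp only [forall_mem_image, Int.cast_natCast]
  intro l hl l' hl'
  have hroots : |√(l : ℝ) - √l'| ≤ 2 * Δ := by
    have := abs_sub_lt_iff.1 (hS l hl).2
    have := abs_sub_lt_iff.1 (hS l' hl').2
    exact abs_sub_le_iff.2 ⟨by linarith, by linarith⟩
  calc (l : ℝ) - l' ≤ |√(l : ℝ) - √l'| * (√l + √l') :=
        (le_abs_self _).trans_eq (abs_sub_eq_abs_sqrt_sub_sqrt_mul l.cast_nonneg l'.cast_nonneg)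
    _ ≤ 2 * Δ * (B + B) := by
        gcongr
        exacts [(hS l hl).1, (hS l' hl').1]
    _ = 4 * Δ * B := by ring

lemma ncard_A1set_le (hN : 0 ≤ N) (hM : 0 ≤ M) (hK : 0 ≤ K) (hL : 0 ≤ L) (hΔ : 0 ≤ Δ) :
    ((A1set N M K L Δ).ncard : ℝ) ≤ (8 * (Δ * √L) + 1) * (8 * (N * M * K)) := by
  have hfin := A1set_finite N M K L Δ
  rw [Set.ncard_eq_toFinset_card _ hfin]
  let T := Ioc 0 ⌊2 * N⌋₊ ×ˢ Ioc 0 ⌊2 * M⌋₊ ×ˢ Ioc 0 ⌊2 * K⌋₊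
  have hT : (#T : ℝ) ≤ 8 * (N * M * K) := by
    simp only [T, card_product, Nat.cast_mul]
    calc _ ≤ 2 * N * (2 * M * (2 * K)) := by gcongr <;> exact card_Ioc_zero_floor_le ‹_›
      _ = 8 * (N * M * K) := by ring
  refine (card_le_mul_card_of_card_fiber_le (t := T) (f := fun q ↦ (q.1, q.2.1, q.2.2.1))
    (x := 8 * (Δ * √L) + 1) ?_ ?_).trans (by gcongr)
  · simp only [Set.Finite.mem_toFinset, T, mem_product]
    rintro ⟨n, m, k, l⟩ ⟨hn, hn', hm, hm', hk, hk', -⟩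
    exact ⟨mem_Ioc_zero_floor hn hn', mem_Ioc_zero_floor hm hm', mem_Ioc_zero_floor hk hk'⟩
  · rintro ⟨n, m, k⟩ -
    rw [← card_image_of_injOn (f := fun q ↦ q.2.2.2)]
    · refine (card_sqrt_near_le (x := √n + √m - √k) (B := 2 * √L) (by positivity) hΔ ?_).trans_eq
        (by ring)
      simp only [forall_mem_image, mem_filter, Set.Finite.mem_toFinset, Prod.mk.injEq]
      rintro ⟨n, m, k, l⟩ ⟨⟨-, -, -, -, -, -, -, hl, -, hlt⟩, rfl, rfl, rfl⟩
      exact ⟨sqrt_le_two_mul_sqrt hL hl, hlt⟩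
    · rintro ⟨n₁, m₁, k₁, l₁⟩ h₁ ⟨n₂, m₂, k₂, l₂⟩ h₂ hl
      simp_all only [coe_filter, Set.mem_ofPred_eq, Prod.mk.injEq]

lemma ncard_A1set_le_of_le_mul_sqrt {δ : ℝ} (hN : 0 ≤ N) (hM : 0 ≤ M) (hK : 0 ≤ K) (hL : 0 ≤ L)
    (hΔ : 0 ≤ Δ) (hδ : 0 < δ) (hδΔ : δ ≤ Δ * √L) :
    ((A1set N M K L Δ).ncard : ℝ) ≤ 8 * (8 + 1 / δ) * (Δ * √L * N * M * K) := by
  have hone : 1 ≤ 1 / δ * (Δ * √L) := by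
    rw [one_div_mul_eq_div]
    exact (one_le_div hδ).2 hδΔ
  calc _ ≤ (8 * (Δ * √L) + 1) * (8 * (N * M * K)) := ncard_A1set_le hN hM hK hL hΔ
    _ ≤ (8 * (Δ * √L) + 1 / δ * (Δ * √L)) * (8 * (N * M * K)) := by gcongr
    _ = 8 * (8 + 1 / δ) * (Δ * √L * N * M * K) := by ring

lemma ne_of_abs_sqrt_add_sqrt_sub_sub_lt {B : ℝ} (hB : √n + √k ≤ B) (hΔB : 2 * Δ * B ≤ 1)
    (hpos : 0 < |√n + √m - √k - √l|) (hlt : |√n + √m - √k - √l| < Δ) : l ≠ m := by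
  rintro rfl
  have hcancel : √n + √l - √k - √l = √n - √(k : ℝ) := by ring
  rw [hcancel] at hpos hlt
  have hnk : n ≠ k := by
    rintro rfl
    simp at hpos
  have : 1 ≤ Δ * B :=
    (one_le_abs_sqrt_sub_sqrt_mul hnk).trans (by gcongr; exact (abs_nonneg _).trans hlt.le)
  linarith

lemma sqrt_bounds_of_mem_A1set {c₂ B : ℝ} (hc₂ : 0 ≤ c₂) (hL : 0 ≤ L) (hNL : N ≤ L) (hKL : K ≤ L)
    (hML : M ≤ c₂ * L) (hB : (√(2 * c₂) + 4) * √L ≤ B) (hΔB : 2 * Δ * B ≤ 1)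
    (hq : (n, m, k, l) ∈ A1set N M K L Δ) :
    |√n - √k| ≤ B ∧ l ≠ m ∧ √l + √m ≤ B ∧ |√l - √m - (√n - √k)| < Δ := by
  obtain ⟨-, hn, -, hm, -, hk, -, hl, hpos, hlt⟩ := hq
  have hn' : √(n : ℝ) ≤ 2 * √L := sqrt_le_two_mul_sqrt hL (hn.trans (by gcongr))
  have hk' : √(k : ℝ) ≤ 2 * √L := sqrt_le_two_mul_sqrt hL (hk.trans (by gcongr))
  have hl' : √(l : ℝ) ≤ 2 * √L := sqrt_le_two_mul_sqrt hL hl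
  have hm' : √(m : ℝ) ≤ √(2 * c₂) * √L := by
    rw [← sqrt_mul (by positivity)]
    exact sqrt_le_sqrt (by dsimp only at hm; linarith)
  have hB' : √n + √k ≤ B := by nlinarith [sqrt_nonneg (m : ℝ)]
  refine ⟨?_, ne_of_abs_sqrt_add_sqrt_sub_sub_lt hB' hΔB hpos hlt,
    by nlinarith [sqrt_nonneg L], ?_⟩
  · exact abs_sub_le_iff.2 ⟨by linarith [sqrt_nonneg (k : ℝ)], by linarith [sqrt_nonneg (n : ℝ)]⟩
  · rw [abs_sub_comm]
    convert hlt using 2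
    ring

lemma mul_pow_three_add_mul_rpow_le {A ε : ℝ} (hA : 0 ≤ A) (hε : 0 ≤ ε) (hΔ : 0 ≤ Δ) (hL : 1 ≤ L) :
    Δ * (A * √L) ^ 3 + A * √L * (A * √L) ^ ε ≤
      (A ^ 3 + A * A ^ ε) * (Δ * L * √L + √L * L ^ ε) := by
  have hL0 : 0 ≤ L := zero_le_one.trans hL
  have hroot : √L ≤ L := sqrt_le_iff.2 ⟨hL0, le_self_pow₀ hL two_ne_zero⟩
  calc Δ * (A * √L) ^ 3 + A * √L * (A * √L) ^ ε
      = A ^ 3 * (Δ * √L ^ 2 * √L) + A * A ^ ε * (√L * √L ^ ε) := by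
        rw [mul_rpow hA (sqrt_nonneg L)]
        ring
    _ ≤ A ^ 3 * (Δ * L * √L) + A * A ^ ε * (√L * L ^ ε) := by
        rw [sq_sqrt hL0]
        gcongr
    _ ≤ (A ^ 3 + A * A ^ ε) * (Δ * L * √L + √L * L ^ ε) := by
        linarith [show 0 ≤ A ^ 3 * (√L * L ^ ε) + A * A ^ ε * (Δ * L * √L) by positivity]

lemma exists_card_A1set_fiber_le {c₂ ε : ℝ} (hc₂ : 0 ≤ c₂) (hε : 0 < ε) :
    ∃ δ : ℝ, 0 < δ ∧ ∃ C : ℝ, 0 < C ∧ ∀ (N M K L Δ : ℝ) (n k : ℕ) (E : Finset (ℕ × ℕ × ℕ × ℕ)),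
      1 ≤ L → N ≤ L → K ≤ L → M ≤ c₂ * L → 0 < Δ → Δ * √L ≤ δ →
      (∀ q ∈ E, q ∈ A1set N M K L Δ ∧ q.1 = n ∧ q.2.2.1 = k) →
      (#E : ℝ) ≤ C * (Δ * L * √L + √L * L ^ ε) := by
  obtain ⟨C, hC, hcount⟩ := exists_card_sqrt_sub_sqrt_near_le hε
  set A : ℝ := √(2 * c₂) + 4
  refine ⟨1 / (2 * A), by positivity, C * (A ^ 3 + A * A ^ ε), by positivity,
    fun N M K L Δ n k E hL hNL hKL hML hΔ hΔL hE ↦ ?_⟩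
  have hL0 : 0 ≤ L := zero_le_one.trans hL
  have hΔB : 2 * Δ * (A * √L) ≤ 1 := by
    rw [le_div_iff₀ (by positivity)] at hΔL
    linarith
  have hbounds := fun m l ↦
    sqrt_bounds_of_mem_A1set (n := n) (m := m) (k := k) (l := l) hc₂ hL0 hNL hKL hML le_rfl hΔB
  obtain rfl | ⟨⟨n₀, m₀, k₀, l₀⟩, hq₀⟩ := E.eq_empty_or_nonempty
  · rw [card_empty, Nat.cast_zero]
    positivity
  have hα : |√(n : ℝ) - √k| ≤ A * √L := by
    obtain ⟨hq, rfl, rfl⟩ := hE _ hq₀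
    exact (hbounds m₀ l₀ hq).1
  have hpairs := hcount (√n - √k) (A * √L) Δ (E.image fun q ↦ (q.2.2.2, q.2.1)) hα hΔ hΔB <| by
    simp only [forall_mem_image]
    rintro ⟨n, m, k, l⟩ hq
    obtain ⟨hq, rfl, rfl⟩ := hE _ hq
    exact (hbounds m l hq).2
  rw [card_image_of_injOn] at hpairs
  · rw [mul_assoc]
    exact hpairs.trans
      (by gcongr; exact mul_pow_three_add_mul_rpow_le (by positivity) hε.le hΔ.le hL)
  · rintro ⟨n₁, m₁, k₁, l₁⟩ h₁ ⟨n₂, m₂, k₂, l₂⟩ h₂ hlm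
    obtain ⟨-, rfl, rfl⟩ := hE _ h₁
    obtain ⟨-, rfl, rfl⟩ := hE _ h₂
    simp_all only [Prod.mk.injEq]

lemma exists_ncard_A1set_le_of_mul_sqrt_le {c₂ ε : ℝ} (hc₂ : 0 ≤ c₂) (hε : 0 < ε) :
    ∃ δ : ℝ, 0 < δ ∧ ∃ C : ℝ, 0 < C ∧ ∀ N M K L Δ : ℝ, 0 ≤ N → 0 ≤ K →
      1 ≤ L → N ≤ L → K ≤ L → M ≤ c₂ * L → 0 < Δ → Δ * √L ≤ δ →
      ((A1set N M K L Δ).ncard : ℝ) ≤ C * (Δ * L * √L + √L * L ^ ε) * (N * K) := by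
  obtain ⟨δ, hδ, C, hC, hfiber⟩ := exists_card_A1set_fiber_le hc₂ hε
  refine ⟨δ, hδ, 4 * C, by positivity, fun N M K L Δ hN hK hL hNL hKL hML hΔ hΔL ↦ ?_⟩
  have hfin := A1set_finite N M K L Δ
  rw [Set.ncard_eq_toFinset_card _ hfin]
  let T := Ioc 0 ⌊2 * N⌋₊ ×ˢ Ioc 0 ⌊2 * K⌋₊
  have hT : (#T : ℝ) ≤ 2 * N * (2 * K) := by
    simp only [T, card_product, Nat.cast_mul]
    gcongr <;> exact card_Ioc_zero_floor_le ‹_›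
  have hcount := card_le_mul_card_of_card_fiber_le (s := hfin.toFinset) (t := T)
    (f := fun q ↦ (q.1, q.2.2.1)) (x := C * (Δ * L * √L + √L * L ^ ε)) ?_ ?_
  · calc _ ≤ C * (Δ * L * √L + √L * L ^ ε) * #T := hcount
      _ ≤ C * (Δ * L * √L + √L * L ^ ε) * (2 * N * (2 * K)) := by gcongr
      _ = _ := by ring
  · simp only [Set.Finite.mem_toFinset, T, mem_product]
    rintro ⟨n, m, k, l⟩ ⟨hn, hn', -, -, hk, hk', -⟩
    exact ⟨mem_Ioc_zero_floor hn hn', mem_Ioc_zero_floor hk hk'⟩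
  · rintro ⟨n, k⟩ -
    refine hfiber N M K L Δ n k _ hL hNL hKL hML hΔ hΔL fun q hq ↦ ?_
    rwa [mem_filter, Set.Finite.mem_toFinset, Prod.mk.injEq] at hq

lemma exists_ncard_A1set_le {c₁ c₂ ε : ℝ} (hc₁ : 0 < c₁) (hc₂ : 0 ≤ c₂) (hε : 0 < ε) :
    ∃ C : ℝ, 0 < C ∧ ∀ N M K L Δ : ℝ, 0 ≤ N → 0 ≤ K →
      1 ≤ L → N ≤ L → K ≤ L → c₁ * L ≤ M → M ≤ c₂ * L → 0 < Δ →
      ((A1set N M K L Δ).ncard : ℝ) ≤ C * (Δ * √L * N * M * K + N * K * (√L * L ^ ε)) := by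
  obtain ⟨δ, hδ, C, hC, hsmall⟩ := exists_ncard_A1set_le_of_mul_sqrt_le hc₂ hε
  refine ⟨C * (1 / c₁ + 1) + 8 * (8 + 1 / δ), by positivity,
    fun N M K L Δ hN hK hL hNL hKL hM hM' hΔ ↦ ?_⟩
  have hL0 : 0 < L := one_pos.trans_le hL
  have hM0 : 0 ≤ M := le_trans (by positivity) hM
  rcases le_total (Δ * √L) δ with hle | hge
  · have hLM : L ≤ 1 / c₁ * M := by rwa [one_div_mul_eq_div, le_div_iff₀' hc₁]
    have hsum : Δ * (1 / c₁ * M) * √L + √L * L ^ ε ≤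
        (1 / c₁ + 1) * (Δ * M * √L + √L * L ^ ε) := by
      linarith [show 0 ≤ 1 / c₁ * (√L * L ^ ε) + Δ * M * √L by positivity]
    calc _ ≤ C * (Δ * L * √L + √L * L ^ ε) * (N * K) :=
          hsmall N M K L Δ hN hK hL hNL hKL hM' hΔ hle
      _ ≤ C * (Δ * (1 / c₁ * M) * √L + √L * L ^ ε) * (N * K) := by gcongr
      _ ≤ C * ((1 / c₁ + 1) * (Δ * M * √L + √L * L ^ ε)) * (N * K) := by gcongr
      _ = C * (1 / c₁ + 1) * (Δ * √L * N * M * K + N * K * (√L * L ^ ε)) := by ring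
      _ ≤ _ := by
          gcongr
          exact le_add_of_nonneg_right (by positivity)
  · calc _ ≤ 8 * (8 + 1 / δ) * (Δ * √L * N * M * K) :=
          ncard_A1set_le_of_le_mul_sqrt hN hM0 hK hL0.le hΔ.le hδ hge
      _ ≤ _ := by
          gcongr
          · exact le_add_of_nonneg_left (by positivity)
          · exact le_add_of_nonneg_right (by positivity)

end Quadruples

theorem A1_count_bound_general (c₁ c₂ ε : ℝ) (hc₁ : 0 < c₁) (hc₂ : 0 < c₂) (hε : 0 < ε) :
    ∃ C : ℝ, 0 < C ∧ ∀ N M K L Δ : ℝ,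
      0 ≤ N → 0 ≤ K → 1 ≤ L → N ≤ L → K ≤ L → c₁ * L ≤ M → M ≤ c₂ * L → 0 < Δ →
      ((A1set N M K L Δ).ncard : ℝ)
          ≤ C * (Δ * L ^ ((1:ℝ)/2) * N * M * K + N * K * L ^ ((1:ℝ)/2 + ε)) ∧
        (1 ≤ Δ * L ^ ((1:ℝ)/2) →
          ((A1set N M K L Δ).ncard : ℝ) ≤ C * (Δ * L ^ ((1:ℝ)/2) * N * M * K)) := by
  obtain ⟨C, hC, hbound⟩ := exists_ncard_A1set_le hc₁ hc₂.le hε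
  refine ⟨C + 8 * (8 + 1 / 1), by positivity, fun N M K L Δ hN hK hL hNL hKL hM hM' hΔ ↦ ?_⟩
  have hL0 : 0 < L := one_pos.trans_le hL
  have hM0 : 0 ≤ M := le_trans (by positivity) hM
  rw [rpow_add hL0, ← sqrt_eq_rpow]
  refine ⟨(hbound N M K L Δ hN hK hL hNL hKL hM hM' hΔ).trans ?_, fun hlarge ↦
    (ncard_A1set_le_of_le_mul_sqrt hN hM0 hK hL0.le hΔ.le one_pos hlarge).trans ?_⟩
  · gcongr
    exact le_add_of_nonneg_right (by positivity)
  · gcongr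
    exact le_add_of_nonneg_left hC.le

theorem A1_count_bound (c₁ c₂ ε : ℝ) (hc₁ : 0 < c₁) (hc : c₁ ≤ c₂) (hε : 0 < ε) :
    ∃ C : ℝ, 0 < C ∧ ∀ N M K L Δ : ℝ,
      1 ≤ N → N ≤ M → 1 ≤ K → K ≤ L → N ≤ K → c₁ * L ≤ M → M ≤ c₂ * L →
      0 < Δ → Δ ≤ c₂ * L ^ ((1:ℝ)/2) →
      ((A1set N M K L Δ).ncard : ℝ)
          ≤ C * (Δ * L ^ ((1:ℝ)/2) * N * M * K + N * K * L ^ ((1:ℝ)/2 + ε)) ∧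
        (1 ≤ Δ * L ^ ((1:ℝ)/2) →
          ((A1set N M K L Δ).ncard : ℝ) ≤ C * (Δ * L ^ ((1:ℝ)/2) * N * M * K)) := by
  obtain ⟨C, hC, hbound⟩ := A1_count_bound_general c₁ c₂ ε hc₁ (hc₁.trans_le hc) hε
  exact ⟨C, hC, fun N M K L Δ hN _ hK hKL hNK hM hM' hΔ _ ↦ hbound N M K L Δ (by linarith)
    (by linarith) (hK.trans hKL) (hNK.trans hKL) hKL hM hM' hΔ⟩
end
end
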